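/- For any ε > 0 and any s ∈ ℝ^N with s¹ ≥ s² ≥ ⋯ ≥ s^N ≥ 0 and |s| ≤ 2(1−ε), there exist parameters α ∈ (0,1), κ ∈ (0, 2(1−α)), and δ ∈ (0, √(2ακ/N)) such that P_n[ N^α_{s−δ, s+δ} ≤ n^κ ] → 0 as n → ∞, where N^α_{s−δ,s+δ} := #{ B ∈ Π_α ∩ 𝔹 : (s^i − δ) log n < (h_B)^i < (s^i + δ) log n for all 1 ≤ i ≤ N }. -/

import Mathlib

open MeasureTheory Real Filter Asymptotics
open scoped ENNReal NNReal Classical BigOperators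

noncomputable section

abbrev Site : Type := ℤ × ℤ

abbrev Spin (N : ℕ) : Type := EuclideanSpace ℝ (Fin N)

abbrev Conf (N : ℕ) : Type := Site → Spin N

/-- `Λ_n = [-n/2, n/2]² ∩ ℤ²`. -/
def Lam (n : ℕ) : Finset Site :=
  (Finset.Icc (-(n : ℤ)) (n : ℤ) ×ˢ Finset.Icc (-(n : ℤ)) (n : ℤ)).filter
    (fun x => 2 * |x.1| ≤ (n : ℤ) ∧ 2 * |x.2| ≤ (n : ℤ))

/-- extension of a configuration on `Λ_n` by zero (Dirichlet boundary condition). -/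
def extZero (n : ℕ) {N : ℕ} (ω : {x // x ∈ Lam n} → Spin N) : Conf N :=
  fun x => if h : x ∈ Lam n then ω ⟨x, h⟩ else 0

/-- Dirichlet energy `(1/(8π)) Σ_{x∼y} |φ(x) - φ(y)|²`, i.e. coupling `𝔤 = 1/(2π)`;
the sum over the enlarged box `Λ_{n+4}` covers all nearest-neighbour edges meeting
`Λ_n ∪ ∂Λ_n` (edges not meeting `Λ_n` contribute `0` since `φ ≡ 0` there). -/
def dirEnergy (n N : ℕ) (φ : Conf N) : ℝ :=
  (1 / (8 * π)) *
    ∑ x ∈ Lam (n + 4), (‖φ x - φ (x + ((1 : ℤ), (0 : ℤ)))‖ ^ 2 +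
      ‖φ x - φ (x + ((0 : ℤ), (1 : ℤ)))‖ ^ 2)

def gffAux (n N : ℕ) : Measure ({x // x ∈ Lam n} → Spin N) :=
  (Measure.pi fun _ => (volume : Measure (Spin N))).withDensity
    (fun ω => ENNReal.ofReal (Real.exp (- dirEnergy n N (extZero n ω))))

/-- The law `P_n` of the `N`-vectorial Dirichlet GFF on `Λ_n`, viewed as a probability
measure on full configurations (extended by `0` outside `Λ_n`). -/
def gff (n N : ℕ) : Measure (Conf N) :=
  (gffAux n N Set.univ)⁻¹ • (gffAux n N).map (extZero n)

/-- conditional probability `μ[A | B]`. -/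
def condProb {α : Type*} [MeasurableSpace α] (μ : Measure α) (B A : Set α) : ℝ≥0∞ :=
  μ (A ∩ B) / μ B

/-- conditional expectation `E_μ[f | B]`. -/
def condExpOn {α : Type*} [MeasurableSpace α] (μ : Measure α) (B : Set α) (f : α → ℝ) : ℝ :=
  (∫ x in B, f x ∂μ) / (μ B).toReal

/-- `Λ = [-1/2,1/2]²`. -/
def unitSq : Set (ℝ × ℝ) := Set.Icc (-(1/2 : ℝ), -(1/2 : ℝ)) (1/2, 1/2)

/-- `D_n = (nD) ∩ ℤ²`. -/
def Dn (D : Set (ℝ × ℝ)) (n : ℕ) : Set Site :=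
  {x | ((x.1 : ℝ) / n, (x.2 : ℝ) / n) ∈ D}

/-- the event `Ω^I_V = {φ(x) ∉ I ∀ x ∈ V}`. -/
def avoids {N : ℕ} (V : Set Site) (I : Set (Spin N)) : Set (Conf N) :=
  {φ | ∀ x ∈ V, φ x ∉ I}

/-- the closest even integer to `n^α`. -/
def evenSide (n : ℕ) (α : ℝ) : ℤ := 2 * round ((n : ℝ) ^ α / 2)

/-- the discrete box of side length `a` centered at `c`. -/
def boxAt (a : ℤ) (c : Site) : Set Site :=
  {y | 2 * |y.1 - c.1| ≤ a ∧ 2 * |y.2 - c.2| ≤ a}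

/-- the inner boundary of the discrete box of side length `a` centered at `c`. -/
def innerBdryAt (a : ℤ) (c : Site) : Set Site :=
  {y | y ∈ boxAt a c ∧ (2 * |y.1 - c.1| = a ∨ 2 * |y.2 - c.2| = a)}

/-- `c` is a center of a box of `Π_α(x₀)`. -/
def isCenter (D : Set (ℝ × ℝ)) (n : ℕ) (α : ℝ) (x0 : Site) (c : Site) : Prop :=
  (∃ k l : ℤ, c = x0 + (k * evenSide n α, l * evenSide n α)) ∧
    boxAt (evenSide n α) c ⊆ Dn D n

/-- the centers of the boxes of `Π_α(x₀)`, as a finite set. -/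
def centersF (D : Set (ℝ × ℝ)) (n : ℕ) (α : ℝ) (x0 : Site) : Finset Site :=
  (Lam n).filter (fun c => isCenter D n α x0 c)

/-- `⨅_α(x₀)`, the union of the inner boundaries of the boxes of `Π_α(x₀)`. -/
def gridK (D : Set (ℝ × ℝ)) (n : ℕ) (α : ℝ) (x0 : Site) : Set Site :=
  ⋃ c ∈ centersF D n α x0, innerBdryAt (evenSide n α) c

/-- the σ-algebra generated by the coordinates in `K`. -/
def mGrid (N : ℕ) (K : Set Site) : MeasurableSpace (Conf N) :=
  MeasurableSpace.comap (fun φ (y : K) => φ y) inferInstance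

/-- the harmonic extension `h^K(c) = E[φ(c) | F_K]` as a random variable. -/
def harmExt (n N : ℕ) (K : Set Site) (c : Site) : Conf N → Spin N :=
  (gff n N)[fun ψ => ψ c | mGrid N K]

/-- covariance of two real random variables. -/
def covar {α : Type*} [MeasurableSpace α] (μ : Measure α) (X Y : α → ℝ) : ℝ :=
  ∫ ω, (X ω - ∫ ω', X ω' ∂μ) * (Y ω - ∫ ω', Y ω' ∂μ) ∂μ

/-- the lattice Euclidean ball `𝔹 = B²(0, ρ) ∩ ℤ²`. -/
def latBall (ρ : ℝ) : Set Site :=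
  {x | Real.sqrt ((x.1 : ℝ) ^ 2 + (x.2 : ℝ) ^ 2) < ρ}

/-- `N^α_{s-δ,s+δ}`: the number of boxes `B ∈ Π_α ∩ 𝔹` with
`(s^i - δ) log n < (h_B)^i < (s^i + δ) log n` for all `i`. -/
def countRange (D : Set (ℝ × ℝ)) (N n : ℕ) (α : ℝ) (ρ : ℝ) (s : Fin N → ℝ) (δ : ℝ)
    (φ : Conf N) : ℕ :=
  ((centersF D n α (0, 0)).filter (fun c =>
    boxAt (evenSide n α) c ⊆ latBall ρ ∧
      ∀ i : Fin N,
        (s i - δ) * Real.log n < harmExt n N (gridK D n α (0, 0)) c φ i ∧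
          harmExt n N (gridK D n α (0, 0)) c φ i < (s i + δ) * Real.log n)).card

section

/-! ### Discrete Laplacian, maximum principle, Green function -/

def lap (f : Site → ℝ) (x : Site) : ℝ :=
  f (x.1 + 1, x.2) + f (x.1 - 1, x.2) + f (x.1, x.2 + 1) + f (x.1, x.2 - 1) - 4 * f x

lemma lap_sub (f g : Site → ℝ) (x : Site) : lap (fun y => f y - g y) x = lap f x - lap g x := by
  simp only [lap]; ring

lemma lap_add (f g : Site → ℝ) (x : Site) : lap (fun y => f y + g y) x = lap f x + lap g x := by
  simp only [lap]; ring

lemma lap_smul (a : ℝ) (f : Site → ℝ) (x : Site) : lap (fun y => a * f y) x = a * lap f x := by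
  simp only [lap]; ring

lemma lap_sum {κ : Type*} (S : Finset κ) (f : κ → Site → ℝ) (x : Site) :
    lap (fun y => ∑ k ∈ S, f k y) x = ∑ k ∈ S, lap (f k) x := by
  simp only [lap, Finset.sum_sub_distrib, Finset.sum_add_distrib, Finset.mul_sum]

/-- maximum principle -/
lemma max_principle (V : Finset Site) (f : Site → ℝ) (hV : ∀ x ∈ V, lap f x ≤ 0)
    (hb : ∀ x ∉ V, 0 ≤ f x) (x : Site) : 0 ≤ f x := by
  by_contra! hx
  have hxV : x ∈ V := by by_contra h; exact absurd (hb x h) (not_le.2 hx)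
  obtain ⟨m, hmV, hm⟩ := V.exists_min_image f ⟨x, hxV⟩
  have hm0 : f m < 0 := lt_of_le_of_lt (hm x hxV) hx
  have hall : ∀ y, f m ≤ f y := fun y => by
    by_cases h : y ∈ V
    · exact hm y h
    · exact hm0.le.trans (hb y h)
  set W := V.filter (fun y => f y = f m) with hW
  obtain ⟨z, hzW, hz⟩ := W.exists_max_image (fun y => y.1) ⟨m, by simp [hW, hmV]⟩
  have hzV : z ∈ V := (Finset.mem_filter.1 hzW).1
  have hzm : f z = f m := (Finset.mem_filter.1 hzW).2
  have h1 : f m < f (z.1 + 1, z.2) := by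
    refine lt_of_le_of_ne (hall _) fun h => ?_
    have : (z.1 + 1, z.2) ∈ W := by
      refine Finset.mem_filter.2 ⟨?_, h.symm⟩
      by_contra h'
      have := hb _ h'
      linarith
    have := hz _ this
    simp at this
  have := hV z hzV
  simp only [lap] at this
  have h2 := hall (z.1 - 1, z.2)
  have h3 := hall (z.1, z.2 + 1)
  have h4 := hall (z.1, z.2 - 1)
  linarith

lemma comparison (V : Finset Site) (f g : Site → ℝ) (hV : ∀ x ∈ V, lap g x ≤ lap f x)
    (hb : ∀ x ∉ V, f x ≤ g x) (x : Site) : f x ≤ g x := by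
  have := max_principle V (fun y => g y - f y) (fun x hx => by rw [lap_sub]; linarith [hV x hx])
    (fun x hx => by linarith [hb x hx]) x
  simpa using this

def extV (V : Finset Site) : (V → ℝ) →ₗ[ℝ] (Site → ℝ) where
  toFun g := fun x => if h : x ∈ V then g ⟨x, h⟩ else 0
  map_add' g h := by ext x; by_cases hx : x ∈ V <;> simp [hx]
  map_smul' a g := by ext x; by_cases hx : x ∈ V <;> simp [hx]

def lapV (V : Finset Site) : (V → ℝ) →ₗ[ℝ] (V → ℝ) where
  toFun g := fun x => lap (extV V g) x
  map_add' g h := by ext x; rw [map_add]; exact lap_add _ _ _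
  map_smul' a g := by ext x; rw [map_smul]; exact lap_smul _ _ _

lemma lapV_surj (V : Finset Site) : Function.Surjective (lapV V) := by
  apply LinearMap.surjective_of_injective
  rw [injective_iff_map_eq_zero]
  intro g hg
  have key : ∀ x ∈ V, lap (extV V g) x = 0 := fun x hx => congrFun hg ⟨x, hx⟩
  have hoff : ∀ x ∉ V, extV V g x = 0 := fun x hx => by simp [extV, hx]
  have h0 : lap (fun _ => (0:ℝ)) = fun _ => 0 := by ext; simp [lap]
  ext ⟨x, hx⟩
  have h1 := comparison V (extV V g) (fun _ => 0) (fun x hx => by simp [h0, key x hx])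
    (fun x hx => by simp [hoff x hx]) x
  have h2 := comparison V (fun _ => 0) (extV V g) (fun x hx => by simp [h0, key x hx])
    (fun x hx => by simp [hoff x hx]) x
  have h3 : extV V g x = g ⟨x, hx⟩ := by simp [extV, hx]
  simp only [Pi.zero_apply]
  rw [← h3]; exact le_antisymm h1 h2

/-- Green function of `V`: `-lap g = 4π δ_y` on `V`, zero off `V`. -/
def green (V : Finset Site) (y : Site) : Site → ℝ :=
  extV V ((lapV_surj V (fun x => if (x : Site) = y then -(4 * π) else 0)).choose)

lemma green_off (V : Finset Site) (y x : Site) (hx : x ∉ V) : green V y x = 0 := by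
  simp [green, extV, hx]

lemma lap_green (V : Finset Site) (y x : Site) (hx : x ∈ V) :
    lap (green V y) x = if x = y then -(4 * π) else 0 :=
  congrFun ((lapV_surj V (fun x => if (x : Site) = y then -(4 * π) else 0)).choose_spec) ⟨x, hx⟩

lemma green_nonneg (V : Finset Site) (y x : Site) : 0 ≤ green V y x := by
  refine max_principle V _ (fun x hx => ?_) (fun x hx => (green_off V y x hx).ge) x
  rw [lap_green V y x hx]
  split_ifs
  · have := pi_pos; linarith
  · exact le_rfl

/-- summation by parts (symmetry) -/
lemma sum_shift (V : Finset Site) (f g : Site → ℝ) (hf : ∀ x ∉ V, f x = 0)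
    (hg : ∀ x ∉ V, g x = 0) (e : Site) :
    ∑ x ∈ V, f x * g (x + e) = ∑ x ∈ V, f (x - e) * g x := by
  have h1 : ∑ x ∈ V, f x * g (x + e) = ∑' x, f x * g (x + e) :=
    (tsum_eq_sum (fun x hx => by simp [hf x hx])).symm
  have h2 : ∑ x ∈ V, f (x - e) * g x = ∑' x, f (x - e) * g x :=
    (tsum_eq_sum (fun x hx => by simp [hg x hx])).symm
  rw [h1, h2, ← (Equiv.addRight e).tsum_eq (fun x => f (x - e) * g x)]
  simp

lemma lap_symm (V : Finset Site) (f g : Site → ℝ) (hf : ∀ x ∉ V, f x = 0)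
    (hg : ∀ x ∉ V, g x = 0) : ∑ x ∈ V, lap f x * g x = ∑ x ∈ V, lap g x * f x := by
  have a := fun e => sum_shift V f g hf hg e
  have b := fun e => sum_shift V g f hg hf e
  have a1 := a (1, 0); have a2 := a (-1, 0); have a3 := a (0, 1); have a4 := a (0, -1)
  simp only [Prod.add_def, Prod.sub_def, add_zero, sub_zero, sub_neg_eq_add] at a1 a2 a3 a4
  simp only [lap, sub_mul, add_mul, Finset.sum_sub_distrib, Finset.sum_add_distrib]
  have c : ∀ u v : Site → ℝ, ∑ x ∈ V, u x * v x = ∑ x ∈ V, v x * u x :=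
    fun u v => Finset.sum_congr rfl fun x _ => mul_comm _ _
  rw [c (fun x => g (x.1 + 1, x.2)) f, c (fun x => g (x.1 - 1, x.2)) f,
    c (fun x => g (x.1, x.2 + 1)) f, c (fun x => g (x.1, x.2 - 1)) f, a1, a3]
  simp only [← sub_eq_add_neg] at a2 a4
  rw [a2, a4]
  have d : ∑ x ∈ V, 4 * f x * g x = ∑ x ∈ V, 4 * g x * f x :=
    Finset.sum_congr rfl fun x _ => by ring
  rw [d]; ring

/-- Dirichlet form on functions supported in `V`. -/
def bil (V : Finset Site) (f g : Site → ℝ) : ℝ := (1 / (4 * π)) * ∑ x ∈ V, (-lap f x) * g x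

lemma bil_symm (V : Finset Site) (f g : Site → ℝ) (hf : ∀ x ∉ V, f x = 0)
    (hg : ∀ x ∉ V, g x = 0) : bil V f g = bil V g f := by
  simp only [bil, neg_mul, Finset.sum_neg_distrib]
  rw [lap_symm V f g hf hg]

lemma bil_green (V : Finset Site) (y : Site) (hy : y ∈ V) (g : Site → ℝ) :
    bil V (green V y) g = g y := by
  unfold bil
  rw [Finset.sum_congr rfl (fun x hx => by rw [lap_green V y x hx])]
  have : ∀ x ∈ V, -(if x = y then -(4 * π) else 0) * g x = if x = y then 4 * π * g x else 0 := by
    intro x _; split_ifs <;> ring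
  rw [Finset.sum_congr rfl this, Finset.sum_ite_eq' V y]
  simp only [hy, if_true]
  field_simp

lemma green_symm (V : Finset Site) (y z : Site) : green V y z = green V z y := by
  by_cases hy : y ∈ V
  · by_cases hz : z ∈ V
    · rw [← bil_green V y hy (green V z), ← bil_green V z hz (green V y)]
      exact bil_symm V _ _ (green_off V z) (green_off V y)
    · rw [green_off V y z hz]
      have : ∀ x, green V z x ≤ 0 := fun x => comparison V _ (fun _ => 0) (fun x hx => by
        rw [lap_green V z x hx, if_neg (by rintro rfl; exact hz hx)]; simp [lap])
        (fun x hx => (green_off V z x hx).le) x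
      exact le_antisymm (green_nonneg V z y) (this y)
  · rw [green_off V z y hy]
    have : ∀ x, green V y x ≤ 0 := fun x => comparison V _ (fun _ => 0) (fun x hx => by
        rw [lap_green V y x hx, if_neg (by rintro rfl; exact hy hx)]; simp [lap])
        (fun x hx => (green_off V y x hx).le) x
    exact le_antisymm (this z) (green_nonneg V y z)

end

section

/-! ### Explicit super/subsolutions -/

lemma comparison' (V : Finset Site) (U : Set Site) (f g : Site → ℝ)
    (hU : ∀ x ∈ V, x ∈ U ∧ (x.1 + 1, x.2) ∈ U ∧ (x.1 - 1, x.2) ∈ U ∧ (x.1, x.2 + 1) ∈ U ∧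
      (x.1, x.2 - 1) ∈ U)
    (hV : ∀ x ∈ V, lap g x ≤ lap f x)
    (hb : ∀ x ∈ U, x ∉ V → f x ≤ g x) (x : Site) (hx : x ∈ V) : f x ≤ g x := by
  have := max_principle V (fun y => if y ∈ U then g y - f y else 0) (fun y hy => ?_)
    (fun y hy => ?_) x
  · simpa [(hU x hx).1] using this
  · obtain ⟨h0, h1, h2, h3, h4⟩ := hU y hy
    have := hV y hy
    simp only [lap] at this ⊢
    simp only [h0, h1, h2, h3, h4, if_true]
    linarith
  · split_ifs with h
    · linarith [hb y h hy]
    · exact le_rfl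

/-- quadratic form `|x-c|^2 + C` -/
def qd (C : ℝ) (c x : Site) : ℝ := ((x.1 : ℝ) - c.1) ^ 2 + ((x.2 : ℝ) - c.2) ^ 2 + C

lemma qd_ge (C : ℝ) (c x : Site) : C ≤ qd C c x := by unfold qd; nlinarith [sq_nonneg ((x.1:ℝ)-c.1), sq_nonneg ((x.2:ℝ)-c.2)]

lemma qd_pos {C : ℝ} (hC : 1 ≤ C) (c x : Site) : 0 < qd C c x := lt_of_lt_of_le (by linarith) (qd_ge C c x)

lemma lap_log_eq {C : ℝ} (hC : 1 ≤ C) (c x : Site) :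
    lap (fun y => Real.log (qd C c y)) x =
      Real.log (((qd C c x ^ 2 - 1) ^ 2 + 4 * C * (qd C c x + 1) ^ 2 +
        16 * ((x.1 : ℝ) - c.1) ^ 2 * ((x.2 : ℝ) - c.2) ^ 2) / qd C c x ^ 4) := by
  have p0 := qd_pos hC c x
  have p1 := qd_pos hC c (x.1 + 1, x.2)
  have p2 := qd_pos hC c (x.1 - 1, x.2)
  have p3 := qd_pos hC c (x.1, x.2 + 1)
  have p4 := qd_pos hC c (x.1, x.2 - 1)
  have h4 : 4 * Real.log (qd C c x) = Real.log (qd C c x ^ 4) := by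
    rw [Real.log_pow]; norm_num
  simp only [lap]
  rw [h4, ← Real.log_mul p1.ne' p2.ne', ← Real.log_mul (by positivity) p3.ne',
    ← Real.log_mul (by positivity) p4.ne', ← Real.log_div (by positivity) (by positivity)]
  congr 2
  simp only [qd]
  push_cast
  ring

lemma lap_log_ge {C : ℝ} (hC : 1 ≤ C) (c x : Site) :
    Real.log (1 + (4 * C - 2) / qd C c x ^ 2) ≤ lap (fun y => Real.log (qd C c y)) x := by
  rw [lap_log_eq hC]
  have p0 := qd_pos hC c x
  apply Real.log_le_log
  · have : 0 ≤ (4 * C - 2) / qd C c x ^ 2 := div_nonneg (by linarith) (by positivity)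
    linarith
  · rw [le_div_iff₀ (by positivity)]
    have : (1 + (4 * C - 2) / qd C c x ^ 2) * qd C c x ^ 4 =
        qd C c x ^ 4 + (4 * C - 2) * qd C c x ^ 2 := by field_simp
    rw [this]
    have h : 0 ≤ 16 * ((x.1 : ℝ) - c.1) ^ 2 * ((x.2 : ℝ) - c.2) ^ 2 := by positivity
    nlinarith [mul_pos (lt_of_lt_of_le one_pos hC) p0]

lemma lap_log_le {C : ℝ} (hC : 1 ≤ C) (c x : Site) :
    lap (fun y => Real.log (qd C c y)) x ≤ (4 * C + 15) / qd C c x ^ 2 := by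
  rw [lap_log_eq hC]
  have p0 := qd_pos hC c x
  have hqC := qd_ge C c x
  refine (Real.log_le_sub_one_of_pos (by positivity)).trans ?_
  rw [sub_le_iff_le_add, div_le_iff₀ (by positivity)]
  have : ((4 * C + 15) / qd C c x ^ 2 + 1) * qd C c x ^ 4 =
        qd C c x ^ 4 + (4 * C + 15) * qd C c x ^ 2 := by field_simp; ring
  rw [this]
  have hXY : qd C c x - C = ((x.1 : ℝ) - c.1) ^ 2 + ((x.2 : ℝ) - c.2) ^ 2 := by unfold qd; ring
  set A := ((x.1 : ℝ) - c.1) ^ 2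
  set B := ((x.2 : ℝ) - c.2) ^ 2
  have hA : 0 ≤ A := sq_nonneg _
  have hB : 0 ≤ B := sq_nonneg _
  set q := qd C c x
  have h16 : 16 * A * B ≤ 4 * q ^ 2 := by nlinarith [sq_nonneg (A - B)]
  nlinarith [mul_le_mul hqC hqC (by linarith) p0.le, mul_le_mul_of_nonneg_left hqC p0.le]

lemma mem_Lam {n : ℕ} {x : Site} : x ∈ Lam n ↔ 2 * |x.1| ≤ (n : ℤ) ∧ 2 * |x.2| ≤ (n : ℤ) := by
  simp only [Lam, Finset.mem_filter, Finset.mem_product, Finset.mem_Icc]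
  constructor
  · exact fun h => h.2
  · intro h
    refine ⟨⟨⟨?_, ?_⟩, ?_, ?_⟩, h⟩ <;>
    · have := abs_le.1 (le_refl |x.1|); have := abs_le.1 (le_refl |x.2|)
      have := abs_nonneg x.1; have := abs_nonneg x.2; omega

lemma Lam_nbr {n : ℕ} {x : Site} (hx : x ∈ Lam n) :
    x ∈ Lam (n + 2) ∧ (x.1 + 1, x.2) ∈ Lam (n + 2) ∧ (x.1 - 1, x.2) ∈ Lam (n + 2) ∧
    (x.1, x.2 + 1) ∈ Lam (n + 2) ∧ (x.1, x.2 - 1) ∈ Lam (n + 2) := by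
  rw [mem_Lam] at hx
  simp only [mem_Lam]
  push_cast
  have a1 := abs_add_le x.1 1; have a2 := abs_sub x.1 1
  have a3 := abs_add_le x.2 1; have a4 := abs_sub x.2 1
  simp only [abs_one] at a1 a2 a3 a4
  refine ⟨⟨?_, ?_⟩, ⟨?_, ?_⟩, ⟨?_, ?_⟩, ⟨?_, ?_⟩, ⟨?_, ?_⟩⟩ <;> omega

lemma qd_le_Lam {n : ℕ} (hn : 1 ≤ n) {C : ℝ} (hC : C ≤ (n : ℝ) ^ 2) {c x : Site} (hc : c ∈ Lam n)
    (hx : x ∈ Lam (n + 2)) : qd C c x ≤ 16 * (n : ℝ) ^ 2 := by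
  rw [mem_Lam] at hc hx
  have h1 : |x.1 - c.1| ≤ 2 * (n : ℤ) := by
    have := abs_sub x.1 c.1; push_cast at hx; omega
  have h2 : |x.2 - c.2| ≤ 2 * (n : ℤ) := by
    have := abs_sub x.2 c.2; push_cast at hx; omega
  have h1' : |(x.1 : ℝ) - c.1| ≤ 2 * (n : ℝ) := by exact_mod_cast h1
  have h2' : |(x.2 : ℝ) - c.2| ≤ 2 * (n : ℝ) := by exact_mod_cast h2
  have h1'' := sq_le_sq' (by linarith [abs_le.1 h1']) (abs_le.1 h1').2
  have h2'' := sq_le_sq' (by linarith [abs_le.1 h2']) (abs_le.1 h2').2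
  unfold qd
  nlinarith

/-- the supersolution -/
lemma lap_super {n : ℕ} (C : ℝ) (c x : Site) :
    lap (fun y => Real.log (16 * (n : ℝ) ^ 2) - Real.log (qd C c y)) x =
      - lap (fun y => Real.log (qd C c y)) x := by
  simp only [lap]; ring

lemma super_nonneg {n : ℕ} (hn : 1 ≤ n) {C : ℝ} (hC1 : 1 ≤ C) (hC : C ≤ (n : ℝ) ^ 2) {c x : Site}
    (hc : c ∈ Lam n) (hx : x ∈ Lam (n + 2)) :
    0 ≤ Real.log (16 * (n : ℝ) ^ 2) - Real.log (qd C c x) :=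
  sub_nonneg.2 (Real.log_le_log (qd_pos hC1 c x) (qd_le_Lam hn hC hc hx))

lemma green_crude {n : ℕ} (hn : 1 ≤ n) (z x : Site) (hz : z ∈ Lam n) :
    green (Lam n) z x ≤ 4 * π * Real.log (16 * (n : ℝ) ^ 2) := by
  have hn' : (1 : ℝ) ≤ (n : ℝ) := by exact_mod_cast hn
  have hl : 0 ≤ Real.log (16 * (n : ℝ) ^ 2) := Real.log_nonneg (by nlinarith)
  have hpi := pi_pos
  by_cases hx : x ∈ Lam n
  · have := comparison' (Lam n) (Lam (n + 2)) (green (Lam n) z)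
      (fun y => 4 * π * (Real.log (16 * (n : ℝ) ^ 2) - Real.log (qd 1 z y)))
      (fun y hy => Lam_nbr hy) (fun y hy => ?_) (fun y hyU hyV => ?_) x hx
    · refine this.trans ?_
      have h1 : 0 ≤ Real.log (qd 1 z x) := Real.log_nonneg (qd_ge 1 z x)
      nlinarith
    · rw [lap_smul, lap_super, lap_green _ _ _ hy]
      have := lap_log_ge (le_refl (1:ℝ)) z y
      split_ifs with h
      · subst h
        have e : qd 1 y y = 1 := by simp [qd]
        rw [e] at this
        have h3 : (1:ℝ) ≤ Real.log (1 + (4 * 1 - 2) / 1 ^ 2) := by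
          rw [Real.le_log_iff_exp_le (by norm_num)]
          have := Real.exp_one_lt_d9
          norm_num; linarith
        nlinarith
      · have h3 : 0 ≤ Real.log (1 + (4 * 1 - 2) / qd 1 z y ^ 2) := Real.log_nonneg (by
          have : 0 ≤ (4 * 1 - 2) / qd 1 z y ^ 2 := div_nonneg (by norm_num) (sq_nonneg _)
          linarith)
        nlinarith
    · rw [green_off _ _ _ hyV]
      exact mul_nonneg (by positivity) (super_nonneg hn le_rfl (by nlinarith) hz hyU)
  · rw [green_off _ _ _ hx]; positivity

/-! ### Gradient estimate -/

lemma grad0 (h : Site → ℝ) (M : ℝ) (h0 : ∀ x, 0 ≤ h x) (hM : ∀ x, h x ≤ M) (m k : ℤ) (hk : 1 ≤ k)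
    (hkm : k ≤ m) (harm : ∀ x : Site, |x.1| < m → |x.2| < m → lap h x = 0) :
    h (k, 0) - h (0, 0) ≤ M * (4 * k / m) := by
  have hM0 : 0 ≤ M := (h0 0).trans (hM 0)
  have hmR : (1 : ℝ) ≤ m := by exact_mod_cast hk.trans hkm
  have hkR : (1 : ℝ) ≤ k := by exact_mod_cast hk
  have hkmR : (k : ℝ) ≤ m := by exact_mod_cast hkm
  rcases hkm.eq_or_lt with rfl | hkm'
  · have := hM (k, 0); have := h0 (0, 0)
    have : M * (4 * (k : ℝ) / k) = 4 * M := by field_simp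
    rw [this]; linarith
  set V : Finset Site := (Finset.Icc (-m) m ×ˢ Finset.Icc (-m) m).filter
    (fun x => k < 2 * x.1 ∧ x.1 < m ∧ |x.2| < m) with hVdef
  have memV : ∀ x : Site, x ∈ V ↔ k < 2 * x.1 ∧ x.1 < m ∧ |x.2| < m := by
    intro x
    simp only [hVdef, Finset.mem_filter, Finset.mem_product, Finset.mem_Icc, abs_lt]
    omega
  set U : Set Site := {x | k - 2 < 2 * x.1 ∧ x.1 ≤ m ∧ |x.2| ≤ m} with hU
  set d : Site → ℝ := fun x => h x - h (k - x.1, x.2) with hd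
  set f : Site → ℝ := fun x => if k < 2 * x.1 then max (d x) 0 else 0 with hf
  set b : Site → ℝ := fun x => M * ((4 * (x.2 : ℝ) ^ 2 - (2 * x.1 - k + 1) ^ 2 +
    8 * m * (2 * x.1 - k + 1)) / (4 * m ^ 2)) with hb
  have hdM : ∀ x, d x ≤ M := fun x => by
    have := hM x; have := h0 (k - x.1, x.2); simp only [hd]; linarith
  have hfM : ∀ x, f x ≤ M := fun x => by
    simp only [hf]; split_ifs
    · exact max_le (hdM x) hM0
    · exact hM0
  have hf0 : ∀ x, 0 ≤ f x := fun x => by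
    simp only [hf]; split_ifs
    · exact le_max_right _ _
    · exact le_rfl
  have hlapd : ∀ x ∈ V, lap d x = 0 := by
    intro x hx
    rw [memV] at hx
    have e1 := harm x (by rw [abs_lt]; omega) hx.2.2
    have e2 := harm (k - x.1, x.2) (by simp only; rw [abs_lt]; omega) hx.2.2
    simp only [lap] at e1 e2
    have i1 : k - (x.1 + 1) = k - x.1 - 1 := by ring
    have i2 : k - (x.1 - 1) = k - x.1 + 1 := by ring
    simp only [lap, hd, i1, i2]
    linarith
  have key := comparison' V U f b (fun x hx => ?_) (fun x hx => ?_) (fun x hxU hxV => ?_) (k, 0)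
    ((memV _).2 ⟨by simp only; omega, hkm', by simp only [abs_zero]; omega⟩)
  · have h1 : h (k, 0) - h (0, 0) ≤ f (k, 0) := by
      simp only [hf, hd]
      rw [if_pos (by omega), sub_self]
      exact le_max_left _ _
    refine h1.trans (key.trans ?_)
    simp only [hb]
    refine mul_le_mul_of_nonneg_left ?_ hM0
    rw [div_le_div_iff₀ (by positivity) (by positivity)]
    push_cast
    have : (4 * (0:ℝ) ^ 2 - (2 * k - k + 1) ^ 2 + 8 * m * (2 * k - k + 1)) ≤ 16 * m * k := by
      nlinarith
    nlinarith
  · rw [memV] at hx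
    simp only [hU, Set.mem_ofPred_eq, abs_le]
    have := abs_lt.1 hx.2.2
    omega
  · have e : lap b x = 0 := by
      simp only [lap, hb]; push_cast; ring
    rw [e]
    have hx' := (memV x).1 hx
    have hl := hlapd x hx
    by_cases hdx : 0 < d x
    · have hfx : f x = d x := by simp only [hf]; rw [if_pos hx'.1, max_eq_left hdx.le]
      have g : ∀ y : Site, k < 2 * y.1 → d y ≤ f y := fun y hy => by
        simp only [hf]; rw [if_pos hy]; exact le_max_left _ _
      have g1 := g (x.1 + 1, x.2) (by simp only; omega)
      have g3 := g (x.1, x.2 + 1) hx'.1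
      have g4 := g (x.1, x.2 - 1) hx'.1
      have g2 : d (x.1 - 1, x.2) ≤ f (x.1 - 1, x.2) := by
        by_cases hy : k < 2 * (x.1 - 1)
        · exact g _ hy
        · refine le_trans ?_ (hf0 _)
          have : 2 * (x.1 - 1) = k ∨ 2 * (x.1 - 1) = k - 1 := by omega
          rcases this with h2 | h2
          · have : k - (x.1 - 1) = x.1 - 1 := by omega
            simp only [hd, this]; simp
          · have : k - (x.1 - 1) = x.1 := by omega
            have h3 : k - x.1 = x.1 - 1 := by omega
            simp only [hd, this]
            simp only [hd, h3] at hdx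
            have : h (x.1, x.2) = h x := rfl
            linarith
      simp only [lap] at hl ⊢
      linarith
    · have hfx : f x = 0 := by simp only [hf]; rw [if_pos hx'.1, max_eq_right (not_lt.1 hdx)]
      simp only [lap, hfx]
      linarith [hf0 (x.1 + 1, x.2), hf0 (x.1 - 1, x.2), hf0 (x.1, x.2 + 1), hf0 (x.1, x.2 - 1)]
  · simp only [hU, Set.mem_ofPred_eq] at hxU
    rw [memV] at hxV
    have hx1 : (k : ℝ) - 1 ≤ 2 * x.1 := by
      have : k - 1 ≤ 2 * x.1 := by omega
      exact_mod_cast this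
    have hx2 : (x.1 : ℝ) ≤ m := by exact_mod_cast hxU.2.1
    by_cases hc1 : k < 2 * x.1
    · suffices hs : 1 ≤ ((4 * (x.2 : ℝ) ^ 2 - (2 * x.1 - k + 1) ^ 2 +
          8 * m * (2 * x.1 - k + 1)) / (4 * m ^ 2)) by
        calc f x ≤ M * 1 := by rw [mul_one]; exact hfM x
          _ ≤ _ := mul_le_mul_of_nonneg_left hs hM0
      rw [le_div_iff₀ (by positivity), one_mul]
      by_cases hc2 : x.1 < m
      · have h3 : |x.2| = m := by
          have : ¬ |x.2| < m := fun h => hxV ⟨hc1, hc2, h⟩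
          omega
        have h4 : (x.2 : ℝ) ^ 2 = (m : ℝ) ^ 2 := by
          have : x.2 ^ 2 = m ^ 2 := by rw [← sq_abs, h3]
          exact_mod_cast this
        rw [h4]; nlinarith
      · have h3 : (x.1 : ℝ) = m := by
          have : x.1 = m := by omega
          exact_mod_cast this
        rw [h3]
        nlinarith [sq_nonneg (x.2 : ℝ)]
    · have : f x = 0 := by simp only [hf]; rw [if_neg hc1]
      rw [this]
      simp only [hb]
      refine mul_nonneg hM0 (div_nonneg ?_ (by positivity))
      nlinarith [sq_nonneg (x.2 : ℝ)]

/-- General gradient estimate. -/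
lemma grad1 (h : Site → ℝ) (M : ℝ) (h0 : ∀ x, 0 ≤ h x) (hM : ∀ x, h x ≤ M) (m k : ℤ) (hk : 1 ≤ k)
    (hkm : k ≤ m) (c : Site) (harm : ∀ x : Site, |x.1 - c.1| < m → |x.2 - c.2| < m → lap h x = 0) :
    (h c - h (c.1 + k, c.2) ≤ M * (4 * k / m) ∧ h c - h (c.1 - k, c.2) ≤ M * (4 * k / m)) ∧
    (h c - h (c.1, c.2 + k) ≤ M * (4 * k / m) ∧ h c - h (c.1, c.2 - k) ≤ M * (4 * k / m)) := by
  have aux : ∀ x : Site, |x.1| < m → |x.2| < m → ∀ s t : ℤ, |s| = 1 → |t| = 1 →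
      lap h (c.1 + s * x.1, c.2 + t * x.2) = 0 := by
    intro x h1 h2 s t hs ht
    refine harm _ ?_ ?_
    · simp only [add_sub_cancel_left, abs_mul, hs, one_mul]; exact h1
    · simp only [add_sub_cancel_left, abs_mul, ht, one_mul]; exact h2
  have aux2 : ∀ x : Site, |x.1| < m → |x.2| < m → ∀ s t : ℤ, |s| = 1 → |t| = 1 →
      lap h (c.1 + s * x.2, c.2 + t * x.1) = 0 := by
    intro x h1 h2 s t hs ht
    exact aux (x.2, x.1) h2 h1 s t hs ht
  refine ⟨⟨?_, ?_⟩, ?_, ?_⟩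
  · have := grad0 (fun x => M - h (c.1 + x.1, c.2 + x.2)) M (fun x => by linarith [hM (c.1 + x.1, c.2 + x.2)])
      (fun x => by linarith [h0 (c.1 + x.1, c.2 + x.2)]) m k hk hkm (fun x h1 h2 => by
        have := aux x h1 h2 1 1 (by simp) (by simp)
        simp only [lap, one_mul] at this ⊢
        simp only [add_assoc, add_sub_assoc] at this ⊢
        linarith)
    simp only [add_zero] at this
    have e : h (c.1, c.2) = h c := rfl
    linarith
  · have := grad0 (fun x => M - h (c.1 - x.1, c.2 + x.2)) M (fun x => by linarith [hM (c.1 - x.1, c.2 + x.2)])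
      (fun x => by linarith [h0 (c.1 - x.1, c.2 + x.2)]) m k hk hkm (fun x h1 h2 => by
        have := aux x h1 h2 (-1) 1 (by simp) (by simp)
        have i1 : c.1 - (x.1 + 1) = c.1 + -1 * x.1 - 1 := by ring
        have i2 : c.1 - (x.1 - 1) = c.1 + -1 * x.1 + 1 := by ring
        have i3 : c.1 - x.1 = c.1 + -1 * x.1 := by ring
        simp only [lap, one_mul] at this ⊢
        simp only [i1, i2, i3, ← add_assoc, ← add_sub_assoc] at this ⊢
        linarith)
    simp only [add_zero, sub_zero] at this
    have e : h (c.1, c.2) = h c := rfl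
    linarith
  · have := grad0 (fun x => M - h (c.1 + x.2, c.2 + x.1)) M (fun x => by linarith [hM (c.1 + x.2, c.2 + x.1)])
      (fun x => by linarith [h0 (c.1 + x.2, c.2 + x.1)]) m k hk hkm (fun x h1 h2 => by
        have := aux2 x h1 h2 1 1 (by simp) (by simp)
        simp only [lap, one_mul] at this ⊢
        simp only [add_assoc, add_sub_assoc] at this ⊢
        linarith)
    simp only [add_zero] at this
    have e : h (c.1, c.2) = h c := rfl
    linarith
  · have := grad0 (fun x => M - h (c.1 + x.2, c.2 - x.1)) M (fun x => by linarith [hM (c.1 + x.2, c.2 - x.1)])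
      (fun x => by linarith [h0 (c.1 + x.2, c.2 - x.1)]) m k hk hkm (fun x h1 h2 => by
        have := aux2 x h1 h2 1 (-1) (by simp) (by simp)
        have i1 : c.2 - (x.1 + 1) = c.2 + -1 * x.1 - 1 := by ring
        have i2 : c.2 - (x.1 - 1) = c.2 + -1 * x.1 + 1 := by ring
        have i3 : c.2 - x.1 = c.2 + -1 * x.1 := by ring
        simp only [lap, one_mul] at this ⊢
        simp only [i1, i2, i3, ← add_assoc, ← add_sub_assoc] at this ⊢
        linarith)
    simp only [add_zero, sub_zero] at this
    have e : h (c.1, c.2) = h c := rfl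
    linarith

/-- two-step gradient estimate: `h c - h y` for `|y-c|_∞ ≤ k`, `2k ≤ m`. -/
lemma grad2 (h : Site → ℝ) (M : ℝ) (h0 : ∀ x, 0 ≤ h x) (hM : ∀ x, h x ≤ M) (m k : ℤ) (hk : 1 ≤ k)
    (hkm : 2 * k ≤ m) (c y : Site)
    (harm : ∀ x : Site, |x.1 - c.1| < m → |x.2 - c.2| < m → lap h x = 0)
    (hy1 : |y.1 - c.1| ≤ k) (hy2 : |y.2 - c.2| ≤ k) :
    h c - h y ≤ M * (12 * k / m) := by
  have hM0 : 0 ≤ M := (h0 0).trans (hM 0)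
  have hmR : (0 : ℝ) < m := by exact_mod_cast (by omega : 0 < m)
  have hkR : (0 : ℝ) < k := by exact_mod_cast (by omega : 0 < k)
  have s1 : h c - h (y.1, c.2) ≤ M * (4 * k / m) := by
    rcases lt_trichotomy (y.1 - c.1) 0 with hlt | heq | hgt
    · have hk1 : c.1 - y.1 ≤ k := by have := abs_le.1 hy1; omega
      have := (grad1 h M h0 hM m (c.1 - y.1) (by omega) (by omega) c harm).1.2
      have e : c.1 - (c.1 - y.1) = y.1 := by ring
      rw [e] at this
      refine this.trans (mul_le_mul_of_nonneg_left ?_ hM0)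
      gcongr
    · have : (y.1, c.2) = c := by ext <;> simp; omega
      rw [this, sub_self]; positivity
    · have hk1 : y.1 - c.1 ≤ k := by have := abs_le.1 hy1; omega
      have := (grad1 h M h0 hM m (y.1 - c.1) (by omega) (by omega) c harm).1.1
      have e : c.1 + (y.1 - c.1) = y.1 := by ring
      rw [e] at this
      refine this.trans (mul_le_mul_of_nonneg_left ?_ hM0)
      gcongr
  have s2 : h (y.1, c.2) - h y ≤ M * (4 * k / ((m - k : ℤ) : ℝ)) := by
    have harm' : ∀ x : Site, |x.1 - (y.1, c.2).1| < m - k → |x.2 - (y.1, c.2).2| < m - k →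
        lap h x = 0 := by
      intro x h1 h2
      simp only at h1 h2
      refine harm x ?_ (by omega)
      have := abs_add_le (x.1 - y.1) (y.1 - c.1)
      have e : x.1 - y.1 + (y.1 - c.1) = x.1 - c.1 := by ring
      rw [e] at this; omega
    have hmk : (0 : ℝ) < ((m - k : ℤ) : ℝ) := by exact_mod_cast (by omega : 0 < m - k)
    rcases lt_trichotomy (y.2 - c.2) 0 with hlt | heq | hgt
    · have hk1 : c.2 - y.2 ≤ k := by have := abs_le.1 hy2; omega
      have := (grad1 h M h0 hM (m - k) (c.2 - y.2) (by omega) (by omega) (y.1, c.2) harm').2.2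
      have e : c.2 - (c.2 - y.2) = y.2 := by ring
      simp only [e] at this
      refine this.trans (mul_le_mul_of_nonneg_left ?_ hM0)
      gcongr
    · have : (y.1, c.2) = y := by ext <;> simp; omega
      rw [this, sub_self]; positivity
    · have hk1 : y.2 - c.2 ≤ k := by have := abs_le.1 hy2; omega
      have := (grad1 h M h0 hM (m - k) (y.2 - c.2) (by omega) (by omega) (y.1, c.2) harm').2.1
      have e : c.2 + (y.2 - c.2) = y.2 := by ring
      simp only [e] at this
      refine this.trans (mul_le_mul_of_nonneg_left ?_ hM0)
      gcongr
  have s3 : M * (4 * k / ((m - k : ℤ) : ℝ)) ≤ M * (8 * k / m) := by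
    refine mul_le_mul_of_nonneg_left ?_ hM0
    have hmk : (0 : ℝ) < ((m - k : ℤ) : ℝ) := by exact_mod_cast (by omega : 0 < m - k)
    rw [div_le_div_iff₀ hmk hmR]
    push_cast
    have : 2 * (k : ℝ) ≤ m := by exact_mod_cast hkm
    nlinarith
  have : M * (12 * k / m) = M * (4 * k / m) + M * (8 * k / m) := by ring
  linarith

end

section

/-! ### Mass of the smoothed logarithm -/

def bx (c : Site) (R : ℕ) : Finset Site :=
  Finset.Icc (c.1 - R) (c.1 + R) ×ˢ Finset.Icc (c.2 - R) (c.2 + R)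

lemma tele_Icc (g : ℤ → ℝ) (c : ℤ) (R : ℕ) :
    ∑ i ∈ Finset.Icc (c - R) (c + R), (g (i + 1) + g (i - 1) - 2 * g i) =
      (g (c + R + 1) - g (c + R)) + (g (c - R - 1) - g (c - R)) := by
  induction R with
  | zero => simp; ring
  | succ k ih =>
    have : Finset.Icc (c - ((k + 1 : ℕ) : ℤ)) (c + ((k + 1 : ℕ) : ℤ)) =
        insert (c - k - 1) (insert (c + k + 1) (Finset.Icc (c - (k:ℤ)) (c + k))) := by
      ext x; simp only [Finset.mem_Icc, Finset.mem_insert]; push_cast; omega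
    rw [this, Finset.sum_insert (by simp; omega), Finset.sum_insert (by simp), ih]
    push_cast
    have e1 : c - (k:ℤ) - 1 + 1 = c - k := by ring
    have e2 : c + (k:ℤ) + 1 - 1 = c + k := by ring
    have e3 : c + ((k:ℤ) + 1) = c + k + 1 := by ring
    have e4 : c - ((k:ℤ) + 1) = c - k - 1 := by ring
    rw [e1, e2, e3, e4]; ring

lemma sum_Icc_shift (g : ℤ → ℝ) (c : ℤ) (R : ℕ) :
    ∑ i ∈ Finset.Icc (c - R) (c + R), g (i - c) = ∑ i ∈ Finset.Icc (-(R:ℤ)) R, g i := by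
  refine Finset.sum_nbij' (fun i => i - c) (fun i => i + c) ?_ ?_ ?_ ?_ ?_ <;>
    simp <;> intros <;> omega

/-- flux of the smoothed logarithm through the boundary of a box -/
lemma flux_eq {C : ℝ} (hC : 1 ≤ C) (c : Site) (R : ℕ) :
    ∑ x ∈ bx c R, lap (fun y => Real.log (qd C c y)) x =
      4 * ∑ k ∈ Finset.Icc (-(R:ℤ)) R,
        Real.log (1 + (2 * R + 1) / ((R:ℝ) ^ 2 + (k:ℝ) ^ 2 + C)) := by
  have hl : ∀ k : ℤ, Real.log (1 + (2 * R + 1) / ((R:ℝ) ^ 2 + (k:ℝ) ^ 2 + C)) =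
      Real.log (((R:ℝ) + 1) ^ 2 + (k:ℝ) ^ 2 + C) - Real.log ((R:ℝ) ^ 2 + (k:ℝ) ^ 2 + C) := by
    intro k
    rw [← Real.log_div (by positivity) (by positivity)]
    congr 1
    field_simp
    ring
  set f : Site → ℝ := fun y => Real.log (qd C c y) with hf
  have hlap : ∀ x : Site, lap f x = (f (x.1 + 1, x.2) + f (x.1 - 1, x.2) - 2 * f (x.1, x.2)) +
      (f (x.1, x.2 + 1) + f (x.1, x.2 - 1) - 2 * f (x.1, x.2)) := by
    intro x; unfold lap; ring
  simp only [hlap, Finset.sum_add_distrib (s := bx c R)]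
  have s1 : ∑ x ∈ bx c R, (f (x.1 + 1, x.2) + f (x.1 - 1, x.2) - 2 * f (x.1, x.2)) =
      2 * ∑ k ∈ Finset.Icc (-(R:ℤ)) R,
        Real.log (1 + (2 * R + 1) / ((R:ℝ) ^ 2 + (k:ℝ) ^ 2 + C)) := by
    unfold bx
    rw [Finset.sum_product_right, ← sum_Icc_shift _ c.2, Finset.mul_sum]
    refine Finset.sum_congr rfl fun j _ => ?_
    simp only
    rw [tele_Icc (fun i => f (i, j)), hl]
    simp only [hf, qd]
    push_cast
    have e1 : ((c.1:ℝ) + R + 1 - c.1) = R + 1 := by ring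
    have e2 : ((c.1:ℝ) + R - c.1) = R := by ring
    have e3 : ((c.1:ℝ) - R - 1 - c.1) ^ 2 = (R + 1) ^ 2 := by ring
    have e4 : ((c.1:ℝ) - R - c.1) ^ 2 = R ^ 2 := by ring
    rw [e1, e2, e3, e4]; ring
  have s2 : ∑ x ∈ bx c R, (f (x.1, x.2 + 1) + f (x.1, x.2 - 1) - 2 * f (x.1, x.2)) =
      2 * ∑ k ∈ Finset.Icc (-(R:ℤ)) R,
        Real.log (1 + (2 * R + 1) / ((R:ℝ) ^ 2 + (k:ℝ) ^ 2 + C)) := by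
    unfold bx
    rw [Finset.sum_product, ← sum_Icc_shift _ c.1, Finset.mul_sum]
    refine Finset.sum_congr rfl fun j _ => ?_
    simp only
    rw [tele_Icc (fun i => f (j, i)), hl]
    simp only [hf, qd]
    push_cast
    have e1 : ((c.2:ℝ) + R + 1 - c.2) = R + 1 := by ring
    have e2 : ((c.2:ℝ) + R - c.2) = R := by ring
    have e3 : ((c.2:ℝ) - R - 1 - c.2) ^ 2 = (R + 1) ^ 2 := by ring
    have e4 : ((c.2:ℝ) - R - c.2) ^ 2 = R ^ 2 := by ring
    rw [e1, e2, e3, e4]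
    rw [add_comm (((j:ℝ) - c.1) ^ 2), add_comm (((j:ℝ) - c.1) ^ 2)]; ring
  rw [s1, s2]; ring

lemma arctan_step {R : ℝ} (hR : 0 < R) {t : ℝ} (ht : 0 ≤ t) :
    R / (R ^ 2 + (t + 1) ^ 2) ≤ Real.arctan ((t + 1) / R) - Real.arctan (t / R) ∧
      Real.arctan ((t + 1) / R) - Real.arctan (t / R) ≤ R / (R ^ 2 + t ^ 2) := by
  have hd : ∀ x : ℝ, HasDerivAt (fun x => Real.arctan (x / R)) (R / (R ^ 2 + x ^ 2)) x := by
    intro x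
    have := (Real.hasDerivAt_arctan (x / R)).comp x ((hasDerivAt_id x).div_const R)
    have h1 : R ^ 2 + x ^ 2 ≠ 0 := by positivity
    have h2 : 1 + (x / R) ^ 2 ≠ 0 := by positivity
    have h3 : R / (R ^ 2 + x ^ 2) = 1 / (1 + (x / R) ^ 2) * (1 / R) := by field_simp
    rw [h3]; exact this
  obtain ⟨ξ, hξ, he⟩ := exists_hasDerivAt_eq_slope (fun x => Real.arctan (x / R))
    (fun x => R / (R ^ 2 + x ^ 2)) (show t < t + 1 by linarith)
    (fun x _ => (hd x).continuousAt.continuousWithinAt) (fun x _ => hd x)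
  simp only [add_sub_cancel_left, div_one] at he
  rw [← he]
  obtain ⟨h1, h2⟩ := hξ
  constructor <;> gcongr <;> nlinarith

lemma sum_sym (g : ℤ → ℝ) (hg : ∀ k, g (-k) = g k) (R : ℕ) :
    ∑ k ∈ Finset.Icc (-(R:ℤ)) R, g k = g 0 + 2 * ∑ k ∈ Finset.range R, g (k + 1) := by
  induction R with
  | zero => simp
  | succ k ih =>
    have : Finset.Icc (-((k + 1 : ℕ) : ℤ)) ((k + 1 : ℕ) : ℤ) =
        insert (-((k:ℤ) + 1)) (insert ((k:ℤ) + 1) (Finset.Icc (-(k:ℤ)) k)) := by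
      ext x; simp only [Finset.mem_Icc, Finset.mem_insert]; push_cast; omega
    rw [this, Finset.sum_insert (by simp; omega), Finset.sum_insert (by simp), ih,
      Finset.sum_range_succ, hg]; ring

lemma sum_arctan_le {R : ℕ} (hR : 0 < R) :
    ∑ k ∈ Finset.Icc (-(R:ℤ)) R, (R:ℝ) / ((R:ℝ) ^ 2 + (k:ℝ) ^ 2) ≤ π / 2 + 1 / R := by
  have hR' : (0:ℝ) < R := by exact_mod_cast hR
  rw [sum_sym _ (by intro k; push_cast; rw [neg_sq])]
  have : ∑ k ∈ Finset.range R, (R:ℝ) / ((R:ℝ) ^ 2 + (((k:ℤ) + 1 : ℤ):ℝ) ^ 2) ≤ π / 4 := by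
    calc _ ≤ ∑ k ∈ Finset.range R, (Real.arctan (((k + 1 : ℕ):ℝ) / R) - Real.arctan ((k:ℝ) / R)) := by
          refine Finset.sum_le_sum fun k _ => ?_
          have := (arctan_step hR' (Nat.cast_nonneg k)).1
          push_cast at this ⊢; exact this
      _ = Real.arctan ((R:ℝ) / R) - Real.arctan (((0:ℕ):ℝ) / R) :=
          Finset.sum_range_sub (fun k : ℕ => Real.arctan ((k:ℝ) / R)) R
      _ = π / 4 := by rw [div_self hR'.ne']; simp
  have h0 : (R:ℝ) / ((R:ℝ) ^ 2 + ((0:ℤ):ℝ) ^ 2) = 1 / R := by push_cast; field_simp; simp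
  rw [h0]; linarith

lemma le_sum_arctan {R : ℕ} (hR : 0 < R) :
    π / 2 ≤ ∑ k ∈ Finset.Icc (-(R:ℤ)) R, (R:ℝ) / ((R:ℝ) ^ 2 + (k:ℝ) ^ 2) := by
  have hR' : (0:ℝ) < R := by exact_mod_cast hR
  rw [sum_sym _ (by intro k; push_cast; rw [neg_sq])]
  have : π / 4 ≤ ∑ k ∈ Finset.range R, (R:ℝ) / ((R:ℝ) ^ 2 + (((k:ℤ):ℝ)) ^ 2) := by
    calc π / 4 = Real.arctan ((R:ℝ) / R) - Real.arctan (((0:ℕ):ℝ) / R) := by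
          rw [div_self hR'.ne']; simp
      _ = ∑ k ∈ Finset.range R, (Real.arctan (((k + 1 : ℕ):ℝ) / R) - Real.arctan ((k:ℝ) / R)) :=
          (Finset.sum_range_sub (fun k : ℕ => Real.arctan ((k:ℝ) / R)) R).symm
      _ ≤ _ := by
          refine Finset.sum_le_sum fun k _ => ?_
          have := (arctan_step hR' (Nat.cast_nonneg k)).2
          push_cast at this ⊢; exact this
  have h2 := Finset.sum_range_succ (fun k : ℕ => (R:ℝ) / ((R:ℝ) ^ 2 + (((k:ℤ):ℝ)) ^ 2)) R
  have h3 := Finset.sum_range_succ' (fun k : ℕ => (R:ℝ) / ((R:ℝ) ^ 2 + (((k:ℤ):ℝ)) ^ 2)) R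
  have h4 : (R:ℝ) / ((R:ℝ) ^ 2 + (((R:ℤ):ℝ)) ^ 2) = 1 / (2 * R) := by
    push_cast
    field_simp; ring
  have h5 : (R:ℝ) / ((R:ℝ) ^ 2 + (((0:ℕ):ℤ):ℝ) ^ 2) = 1 / R := by push_cast; field_simp; simp
  have h6 : (R:ℝ) / ((R:ℝ) ^ 2 + ((0:ℤ):ℝ) ^ 2) = 1 / R := by push_cast; field_simp; simp
  have h7 : (1:ℝ) / (2 * R) = 1 / 2 * (1 / R) := by field_simp
  rw [h5] at h3
  rw [h6]
  push_cast at *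
  linarith

lemma mass_up {C : ℝ} (hC : 1 ≤ C) (c : Site) (S : Finset Site) :
    ∑ x ∈ S, Real.log (1 + (4 * C - 2) / qd C c x ^ 2) ≤ 4 * π := by
  have key : ∀ R : ℕ, 0 < R → S ⊆ bx c R →
      ∑ x ∈ S, Real.log (1 + (4 * C - 2) / qd C c x ^ 2) ≤
        4 * ((2 + 1 / R) * (π / 2 + 1 / R)) := by
    intro R hR hS
    have hR' : (0:ℝ) < R := by exact_mod_cast hR
    calc _ ≤ ∑ x ∈ bx c R, Real.log (1 + (4 * C - 2) / qd C c x ^ 2) := by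
          refine Finset.sum_le_sum_of_subset_of_nonneg hS fun x _ _ => Real.log_nonneg ?_
          have : 0 ≤ (4 * C - 2) / qd C c x ^ 2 := div_nonneg (by linarith) (by positivity)
          linarith
      _ ≤ ∑ x ∈ bx c R, lap (fun y => Real.log (qd C c y)) x :=
          Finset.sum_le_sum fun x _ => lap_log_ge hC c x
      _ = _ := flux_eq hC c R
      _ ≤ 4 * ∑ k ∈ Finset.Icc (-(R:ℤ)) R, (2 + 1 / R) * ((R:ℝ) / ((R:ℝ) ^ 2 + (k:ℝ) ^ 2)) := by
          gcongr with k hk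
          have h1 : Real.log (1 + (2 * R + 1) / ((R:ℝ) ^ 2 + (k:ℝ) ^ 2 + C)) ≤
              (2 * R + 1) / ((R:ℝ) ^ 2 + (k:ℝ) ^ 2 + C) := by
            have := Real.log_le_sub_one_of_pos
              (show 0 < 1 + (2 * R + 1) / ((R:ℝ) ^ 2 + (k:ℝ) ^ 2 + C) by positivity)
            linarith
          refine h1.trans ?_
          have : (2 + 1 / R) * ((R:ℝ) / ((R:ℝ) ^ 2 + (k:ℝ) ^ 2)) =
              (2 * R + 1) / ((R:ℝ) ^ 2 + (k:ℝ) ^ 2) := by field_simp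
          rw [this]
          refine div_le_div_of_nonneg_left (by positivity) (by positivity) (by linarith)
      _ ≤ _ := by
          rw [← Finset.mul_sum]
          gcongr
          exact sum_arctan_le hR
  have lim : Tendsto (fun R : ℕ => 4 * ((2 + 1 / (R:ℝ)) * (π / 2 + 1 / (R:ℝ)))) atTop
      (nhds (4 * ((2 + 0) * (π / 2 + 0)))) := by
    have := tendsto_one_div_atTop_nhds_zero_nat (𝕜 := ℝ)
    exact ((this.const_add 2).mul (this.const_add (π / 2))).const_mul 4
  have : 4 * ((2 + 0) * (π / 2 + 0)) = 4 * π := by ring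
  rw [this] at lim
  refine ge_of_tendsto lim ?_
  have hex : ∃ R0 : ℕ, S ⊆ bx c R0 := by
    refine ⟨∑ x ∈ S, ((x.1 - c.1).natAbs + (x.2 - c.2).natAbs), fun x hx => ?_⟩
    have := Finset.single_le_sum (f := fun x : Site => (x.1 - c.1).natAbs + (x.2 - c.2).natAbs)
      (fun _ _ => Nat.zero_le _) hx
    simp only [bx, Finset.mem_product, Finset.mem_Icc]
    omega
  obtain ⟨R0, hR0⟩ := hex
  filter_upwards [eventually_ge_atTop (R0 + 1)] with R hR
  refine key R (by omega) (hR0.trans ?_)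
  intro x; simp only [bx, Finset.mem_product, Finset.mem_Icc]; omega

lemma mass_low {C : ℝ} (hC : 1 ≤ C) (c : Site) {R : ℕ} (hR : 3 ≤ R) (hCR : C ≤ (R:ℝ) ^ 2) :
    4 * π * ((1 - 3 / R) * (1 - C / (R:ℝ) ^ 2)) ≤
      ∑ x ∈ bx c R, lap (fun y => Real.log (qd C c y)) x := by
  have hR' : (3:ℝ) ≤ R := by exact_mod_cast hR
  have hRp : (0:ℝ) < R := by linarith
  have h3 : 0 ≤ 1 - 3 / (R:ℝ) := by
    rw [sub_nonneg, div_le_one hRp]; exact hR'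
  have h4 : 0 ≤ 1 - C / (R:ℝ) ^ 2 := by
    rw [sub_nonneg, div_le_one (by positivity)]; exact hCR
  rw [flux_eq hC]
  calc _ = 4 * ((1 - 3 / R) * (1 - C / (R:ℝ) ^ 2) * 2 * (π / 2)) := by ring
    _ ≤ 4 * ((1 - 3 / R) * (1 - C / (R:ℝ) ^ 2) * 2 *
          ∑ k ∈ Finset.Icc (-(R:ℤ)) R, (R:ℝ) / ((R:ℝ) ^ 2 + (k:ℝ) ^ 2)) := by
        gcongr
        exact le_sum_arctan (by omega)
    _ ≤ _ := by
        rw [Finset.mul_sum]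
        gcongr with k hk
        set D := (R:ℝ) ^ 2 + (k:ℝ) ^ 2 with hD
        have hDp : 0 < D := by positivity
        have hDR : (R:ℝ) ^ 2 ≤ D := by rw [hD]; nlinarith [sq_nonneg (k:ℝ)]
        set y := (2 * R + 1) / (D + C) with hy
        have hyp : 0 < y := by positivity
        have hy3 : y ≤ 3 / R := by
          rw [hy, div_le_div_iff₀ (by positivity) hRp]; nlinarith
        have hlog : y * (1 - 3 / R) ≤ Real.log (1 + y) := by
          have := Real.one_sub_inv_le_log_of_pos (show 0 < 1 + y by positivity)
          have e : 1 - (1 + y)⁻¹ = y / (1 + y) := by field_simp; ring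
          rw [e] at this
          refine le_trans ?_ this
          rw [le_div_iff₀ (by positivity)]
          have : (1 - 3 / (R:ℝ)) * (1 + y) ≤ 1 := by nlinarith
          nlinarith
        refine le_trans ?_ hlog
        have : (1 - C / (R:ℝ) ^ 2) * 2 * (R / D) ≤ y := by
          have h5 : 1 - C / (R:ℝ) ^ 2 ≤ D / (D + C) := by
            have : C / (D + C) ≤ C / (R:ℝ) ^ 2 := by gcongr; linarith
            have e : D / (D + C) = 1 - C / (D + C) := by field_simp; ring
            linarith
          calc _ ≤ D / (D + C) * 2 * (R / D) := by gcongr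
            _ = 2 * R / (D + C) := by field_simp
            _ ≤ y := by rw [hy]; gcongr; linarith
        nlinarith

/-- comparison of the two bounds for the Laplacian of the smoothed logarithm -/
lemma lam_compare {C : ℝ} (hC : 100 ≤ C) (c x : Site) :
    (4 * C + 15) / qd C c x ^ 2 ≤
      (1 + 10 / C) * Real.log (1 + (4 * C - 2) / qd C c x ^ 2) := by
  have hq := qd_pos (by linarith : 1 ≤ C) c x
  have hqC := qd_ge C c x
  set q := qd C c x
  set y := (4 * C - 2) / q ^ 2 with hy
  have hyp : 0 < y := div_pos (by linarith) (by positivity)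
  have hy4 : y ≤ 4 / C := by
    rw [hy, div_le_div_iff₀ (by positivity) (by linarith)]; nlinarith
  have h1 : (4 * C + 15) / q ^ 2 ≤ (1 + 5 / C) * y := by
    rw [hy, mul_div_assoc']
    gcongr
    have : (1 + 5 / C) * (4 * C - 2) = 4 * C + 18 - 10 / C := by field_simp; ring
    have h2 : 10 / C ≤ 1 := by rw [div_le_one (by linarith)]; linarith
    linarith
  have hlog : y / (1 + y) ≤ Real.log (1 + y) := by
    have := Real.one_sub_inv_le_log_of_pos (show 0 < 1 + y by positivity)
    have e : 1 - (1 + y)⁻¹ = y / (1 + y) := by field_simp; ring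
    rwa [e] at this
  have h2 : y ≤ (1 + 4 / C) * Real.log (1 + y) := by
    rw [div_le_iff₀ (by positivity)] at hlog
    have h0 : 0 ≤ Real.log (1 + y) := Real.log_nonneg (by linarith)
    nlinarith
  have h0 : 0 ≤ Real.log (1 + y) := Real.log_nonneg (by linarith)
  have h3 : (1 + 5 / C) * (1 + 4 / C) ≤ 1 + 10 / C := by
    have : 20 / C ≤ 1 := by rw [div_le_one (by linarith)]; linarith
    have h4 : 0 < 1 / C := by positivity
    have e5 : 5 / C = 5 * (1 / C) := by ring
    have e4 : 4 / C = 4 * (1 / C) := by ring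
    have e10 : 10 / C = 10 * (1 / C) := by ring
    have e20 : 20 / C = 20 * (1 / C) := by ring
    rw [e5, e4, e10]; rw [e20] at this
    nlinarith
  calc _ ≤ (1 + 5 / C) * y := h1
    _ ≤ (1 + 5 / C) * ((1 + 4 / C) * Real.log (1 + y)) := by gcongr
    _ = ((1 + 5 / C) * (1 + 4 / C)) * Real.log (1 + y) := by ring
    _ ≤ _ := by gcongr

end

section

/-! ### Energy, harmonic weights, covariance bounds -/

lemma tsum_shift_sq (V : Finset Site) (f : Site → ℝ) (hf : ∀ x ∉ V, f x = 0) (e : Site)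
    (W : Finset Site) (hVW : V ⊆ W) (hW : ∀ x, x + e ∈ V → x ∈ W) :
    ∑ x ∈ W, (f x - f (x + e)) ^ 2 =
      2 * ∑ x ∈ V, f x * f x - ∑ x ∈ V, f x * f (x + e) - ∑ x ∈ V, f (x - e) * f x := by
  have h1 : ∑ x ∈ W, f x * f x = ∑ x ∈ V, f x * f x :=
    (Finset.sum_subset hVW (fun x _ hx => by simp [hf x hx])).symm
  have h2 : ∑ x ∈ W, f (x + e) * f (x + e) = ∑ x ∈ V, f x * f x := by
    have a1 : ∑ x ∈ W, f (x + e) * f (x + e) = ∑' x, f (x + e) * f (x + e) :=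
      (tsum_eq_sum (fun x hx => by
        rw [hf _ (fun h => hx (hW x h))]; simp)).symm
    have a2 : ∑ x ∈ V, f x * f x = ∑' x, f x * f x :=
      (tsum_eq_sum (fun x hx => by simp [hf x hx])).symm
    rw [a1, a2, ← (Equiv.addRight e).tsum_eq (fun x => f x * f x)]
    simp
  have h3 : ∑ x ∈ W, f x * f (x + e) = ∑ x ∈ V, f x * f (x + e) :=
    (Finset.sum_subset hVW (fun x _ hx => by simp [hf x hx])).symm
  rw [← sum_shift V f f hf hf e]
  have : ∀ x, (f x - f (x + e)) ^ 2 = f x * f x + f (x + e) * f (x + e) - 2 * (f x * f (x + e)) := by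
    intro x; ring
  simp only [this, Finset.sum_sub_distrib, Finset.sum_add_distrib, ← Finset.mul_sum]
  rw [h1, h2, h3]; ring

lemma energy_bil (n : ℕ) (f : Site → ℝ) (hf : ∀ x ∉ Lam n, f x = 0) :
    (1 / (4 * π)) * ∑ x ∈ Lam (n + 4), ((f x - f (x + ((1 : ℤ), (0 : ℤ)))) ^ 2 +
      (f x - f (x + ((0 : ℤ), (1 : ℤ)))) ^ 2) = bil (Lam n) f f := by
  have hsub : Lam n ⊆ Lam (n + 4) := by
    intro x hx; rw [mem_Lam] at *; push_cast; omega
  rw [Finset.sum_add_distrib, tsum_shift_sq (Lam n) f hf (1, 0) _ hsub (by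
      intro x hx; rw [mem_Lam] at *; simp only [Prod.fst_add, Prod.snd_add] at hx; push_cast
      constructor
      · have := hx.1; have := abs_sub_abs_le_abs_sub x.1 (x.1 + 1)
        rw [show x.1 - (x.1 + 1) = -1 by ring] at this; simp at this; omega
      · have := hx.2; simp at this; omega),
    tsum_shift_sq (Lam n) f hf (0, 1) _ hsub (by
      intro x hx; rw [mem_Lam] at *; simp only [Prod.fst_add, Prod.snd_add] at hx; push_cast
      constructor
      · have := hx.1; simp at this; omega
      · have := hx.2; have := abs_sub_abs_le_abs_sub x.2 (x.2 + 1)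
        rw [show x.2 - (x.2 + 1) = -1 by ring] at this; simp at this; omega)]
  unfold bil
  congr 1
  have : ∀ x : Site, (-lap f x) * f x = 4 * (f x * f x) - f x * f (x + (1, 0)) - f (x - (1, 0)) * f x
      - f x * f (x + (0, 1)) - f (x - (0, 1)) * f x := by
    intro x
    have e1 : x + ((1:ℤ), (0:ℤ)) = (x.1 + 1, x.2) := by ext <;> simp
    have e2 : x - ((1:ℤ), (0:ℤ)) = (x.1 - 1, x.2) := by ext <;> simp
    have e3 : x + ((0:ℤ), (1:ℤ)) = (x.1, x.2 + 1) := by ext <;> simp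
    have e4 : x - ((0:ℤ), (1:ℤ)) = (x.1, x.2 - 1) := by ext <;> simp
    rw [e1, e2, e3, e4]; unfold lap; ring
  simp only [this, Finset.sum_sub_distrib, ← Finset.mul_sum]
  ring

lemma bil_self_nonneg (n : ℕ) (f : Site → ℝ) (hf : ∀ x ∉ Lam n, f x = 0) : 0 ≤ bil (Lam n) f f := by
  rw [← energy_bil n f hf]; have := pi_pos; positivity

lemma bil_sub_left (V : Finset Site) (f g h : Site → ℝ) :
    bil V (fun x => f x - g x) h = bil V f h - bil V g h := by
  simp only [bil, lap_sub, ← mul_sub, ← Finset.sum_sub_distrib]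
  congr 1; exact Finset.sum_congr rfl fun x _ => by ring

lemma bil_sub_right (V : Finset Site) (f g h : Site → ℝ) :
    bil V f (fun x => g x - h x) = bil V f g - bil V f h := by
  simp only [bil, ← mul_sub, ← Finset.sum_sub_distrib]

/-- the interior of the box of side `2m` centered at `c` -/
def inB (c : Site) (m : ℕ) : Finset Site :=
  (bx c m).filter (fun x => |x.1 - c.1| < (m:ℤ) ∧ |x.2 - c.2| < (m:ℤ))

def sph (c : Site) (m : ℕ) : Finset Site := bx c m \ inB c m

lemma mem_bx {c x : Site} {m : ℕ} : x ∈ bx c m ↔ |x.1 - c.1| ≤ (m:ℤ) ∧ |x.2 - c.2| ≤ (m:ℤ) := by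
  simp only [bx, Finset.mem_product, Finset.mem_Icc, abs_le]; omega

lemma mem_inB {c x : Site} {m : ℕ} : x ∈ inB c m ↔ |x.1 - c.1| < (m:ℤ) ∧ |x.2 - c.2| < (m:ℤ) := by
  rw [inB, Finset.mem_filter, mem_bx]; exact ⟨fun h => h.2, fun h => ⟨⟨h.1.le, h.2.le⟩, h⟩⟩

lemma inB_sub (c : Site) (m : ℕ) : inB c m ⊆ bx c m := Finset.filter_subset _ _

lemma nbr_inB {c x : Site} {m : ℕ} (hx : x ∈ inB c m) : (x.1 + 1, x.2) ∈ bx c m ∧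
    (x.1 - 1, x.2) ∈ bx c m ∧ (x.1, x.2 + 1) ∈ bx c m ∧ (x.1, x.2 - 1) ∈ bx c m := by
  rw [mem_inB] at hx
  simp only [mem_bx, abs_lt, abs_le] at *
  omega

/-- weights of the harmonic measure of the box, seen from its center -/
def pw (c : Site) (m : ℕ) (x : Site) : ℝ := (1 / (4 * π)) * lap (green (inB c m) c) x

def uf (n : ℕ) (m : ℕ) (c : Site) : Site → ℝ := fun x => green (Lam n) c x - green (inB c m) c x

lemma pw_nonneg {c : Site} {m : ℕ} {x : Site} (hx : x ∉ inB c m) : 0 ≤ pw c m x := by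
  unfold pw lap
  rw [green_off _ _ x hx]
  have := pi_pos
  have h := green_nonneg (inB c m) c
  have h1 := h (x.1 + 1, x.2); have h2 := h (x.1 - 1, x.2)
  have h3 := h (x.1, x.2 + 1); have h4 := h (x.1, x.2 - 1)
  simp only [mul_zero, sub_zero]
  positivity

lemma pw_zero {c : Site} {m : ℕ} {x : Site} (hx : x ∉ bx c m) : pw c m x = 0 := by
  unfold pw lap
  rw [mem_bx] at hx
  rw [green_off, green_off, green_off, green_off, green_off]
  · simp
  all_goals
    rw [mem_inB]; simp only [abs_lt, abs_le] at *; omega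

lemma sum_lap_inB {c : Site} {m : ℕ} (hm : 1 ≤ m) (g : Site → ℝ) :
    ∑ x ∈ inB c m, lap (green (inB c m) c) x * g x = -(4 * π) * g c := by
  have hc : c ∈ inB c m := by rw [mem_inB]; simp; omega
  rw [Finset.sum_congr rfl (fun x hx => by rw [lap_green _ _ x hx])]
  simp only [ite_mul, zero_mul]
  rw [Finset.sum_ite_eq' (inB c m) c]; simp [hc]

lemma pw_sum {c : Site} {m : ℕ} (hm : 1 ≤ m) : ∑ x ∈ sph c m, pw c m x = 1 := by
  set f := green (inB c m) c with hf
  have hfo : ∀ x ∉ inB c m, f x = 0 := green_off _ _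
  set g : Site → ℝ := fun x => if x ∈ bx c m then 1 else 0 with hg
  have h1 := lap_symm (bx c m) f g (fun x hx => hfo x (fun h => hx (inB_sub c m h)))
    (fun x hx => by simp [hg, hx])
  have h2 : ∑ x ∈ bx c m, lap g x * f x = 0 := by
    refine Finset.sum_eq_zero fun x hx => ?_
    by_cases h : x ∈ inB c m
    · obtain ⟨a1, a2, a3, a4⟩ := nbr_inB h
      have : lap g x = 0 := by
        simp only [lap, hg, a1, a2, a3, a4, hx, if_true]; norm_num
      rw [this, zero_mul]
    · rw [hfo x h, mul_zero]
  rw [h2] at h1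
  have h3 := Finset.sum_sdiff (f := fun x => lap f x * g x) (inB_sub c m)
  rw [h1, sum_lap_inB hm g] at h3
  have hgc : g c = 1 := by simp [hg, mem_bx]
  have h4 : ∑ x ∈ bx c m \ inB c m, lap f x * g x = ∑ x ∈ sph c m, lap f x := by
    refine Finset.sum_congr rfl fun x hx => ?_
    simp [hg, (Finset.mem_sdiff.1 hx).1]
  rw [h4, hgc] at h3
  simp only [pw, ← Finset.mul_sum]
  have h5 : ∑ x ∈ sph c m, lap f x = 4 * π := by linarith
  rw [← hf, h5]; field_simp

lemma uf_off {n m : ℕ} {c : Site} (hB : bx c m ⊆ Lam n) (x : Site) (hx : x ∉ Lam n) :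
    uf n m c x = 0 := by
  rw [uf, green_off _ _ x hx, green_off _ _ x (fun h => hx (hB (inB_sub c m h))), sub_zero]

lemma bil_greenB {n m : ℕ} (hm : 1 ≤ m) {c : Site} (hB : bx c m ⊆ Lam n) (g : Site → ℝ) :
    bil (Lam n) (green (inB c m) c) g = g c - ∑ x ∈ sph c m, pw c m x * g x := by
  unfold bil
  have h1 : ∑ x ∈ Lam n, (-lap (green (inB c m) c) x) * g x =
      ∑ x ∈ bx c m, (-lap (green (inB c m) c) x) * g x := by
    refine (Finset.sum_subset hB fun x _ hx => ?_).symm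
    have := pw_zero hx
    unfold pw at this
    rcases mul_eq_zero.1 this with h | h
    · exfalso; have := pi_pos; have : (0:ℝ) < 1 / (4 * π) := by positivity
      linarith
    · rw [h]; simp
  rw [h1, ← Finset.sum_sdiff (inB_sub c m)]
  have h2 := sum_lap_inB (c := c) hm g
  simp only [neg_mul, Finset.sum_neg_distrib, h2, pw, sph, mul_assoc, ← Finset.mul_sum]
  field_simp
  ring

lemma bil_uf {n m : ℕ} (hm : 1 ≤ m) {c : Site} (hB : bx c m ⊆ Lam n) (g : Site → ℝ) :
    bil (Lam n) (uf n m c) g = ∑ x ∈ sph c m, pw c m x * g x := by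
  have hc : c ∈ Lam n := hB (by simp [mem_bx])
  unfold uf
  rw [bil_sub_left, bil_green _ _ hc, bil_greenB hm hB]; ring

lemma sph_avg_le {c : Site} {m : ℕ} (hm : 1 ≤ m) (g : Site → ℝ) (A : ℝ) (h : ∀ x ∈ sph c m, g x ≤ A) :
    ∑ x ∈ sph c m, pw c m x * g x ≤ A := by
  calc _ ≤ ∑ x ∈ sph c m, pw c m x * A := by
        refine Finset.sum_le_sum fun x hx => ?_
        exact mul_le_mul_of_nonneg_left (h x hx) (pw_nonneg (Finset.mem_sdiff.1 hx).2)
    _ = A := by rw [← Finset.sum_mul, pw_sum hm, one_mul]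

lemma le_sph_avg {c : Site} {m : ℕ} (hm : 1 ≤ m) (g : Site → ℝ) (A : ℝ) (h : ∀ x ∈ sph c m, A ≤ g x) :
    A ≤ ∑ x ∈ sph c m, pw c m x * g x := by
  calc A = ∑ x ∈ sph c m, pw c m x * A := by rw [← Finset.sum_mul, pw_sum hm, one_mul]
    _ ≤ _ := by
        refine Finset.sum_le_sum fun x hx => ?_
        exact mul_le_mul_of_nonneg_left (h x hx) (pw_nonneg (Finset.mem_sdiff.1 hx).2)

lemma bil_uf_uf_le {n m : ℕ} (hm : 1 ≤ m) {c c' : Site} (hB : bx c m ⊆ Lam n) (A : ℝ)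
    (h : ∀ x ∈ sph c m, green (Lam n) x c' ≤ A) : bil (Lam n) (uf n m c) (uf n m c') ≤ A := by
  rw [bil_uf hm hB]
  refine sph_avg_le hm _ A fun x hx => ?_
  have := green_nonneg (inB c' m) c' x
  have h2 := h x hx
  rw [green_symm] at h2
  unfold uf; linarith

/-- upper bound on the Green function away from the diagonal -/
lemma green_upper {n m R : ℕ} (hn : 1 ≤ n) {c z : Site} (hB : bx c m ⊆ Lam n) (hz : z ∈ Lam n)
    (hzc : z ∉ inB c m) {C : ℝ} (hC : 1 ≤ C) (hCn : C ≤ (n:ℝ) ^ 2) (hR : 3 ≤ R) (hCR : C ≤ (R:ℝ) ^ 2)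
    (hRm : 2 * R ≤ m) :
    ((1 - 3 / (R:ℝ)) * (1 - C / (R:ℝ) ^ 2)) *
      (green (Lam n) z c - 4 * π * Real.log (16 * (n:ℝ) ^ 2) * (12 * R / m)) ≤
      Real.log (16 * (n:ℝ) ^ 2) - Real.log (qd C c z) := by
  have hpi := pi_pos
  have hc : c ∈ Lam n := hB (by simp [mem_bx])
  set lam : Site → ℝ := lap (fun y => Real.log (qd C c y)) with hlam
  have hlam0 : ∀ y, 0 ≤ lam y := fun y => by
    refine le_trans (Real.log_nonneg ?_) (lap_log_ge hC c y)
    have : 0 ≤ (4 * C - 2) / qd C c y ^ 2 := div_nonneg (by linarith) (by positivity)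
    linarith
  have hRL : bx c R ⊆ Lam n := fun y hy => hB (by rw [mem_bx] at *; omega)
  set err := 4 * π * Real.log (16 * (n:ℝ) ^ 2) * (12 * R / m) with herr
  have hgrad : ∀ y ∈ bx c R, green (Lam n) z c - err ≤ green (Lam n) z y := by
    intro y hy
    rw [mem_bx] at hy
    have := grad2 (green (Lam n) z) _ (green_nonneg _ z) (fun x => green_crude hn z x hz) m R
      (by omega) (by omega) c y (fun x h1 h2 => ?_) hy.1 hy.2
    · push_cast at this; linarith
    · have hx : x ∈ inB c m := mem_inB.2 ⟨h1, h2⟩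
      rw [lap_green _ _ _ (hB (inB_sub c m hx)), if_neg]
      rintro rfl; exact hzc hx
  have hF : (1 / (4 * π)) * ∑ y ∈ bx c R, lam y * green (Lam n) y z ≤
      Real.log (16 * (n:ℝ) ^ 2) - Real.log (qd C c z) := by
    refine comparison' (Lam n) (Lam (n + 2))
      (fun x => (1 / (4 * π)) * ∑ y ∈ bx c R, lam y * green (Lam n) y x)
      (fun x => Real.log (16 * (n:ℝ) ^ 2) - Real.log (qd C c x))
      (fun y hy => Lam_nbr hy) (fun x hx => ?_) (fun x hxU hxV => ?_) z hz
    · rw [lap_super, lap_smul, lap_sum]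
      simp only [lap_smul]
      rw [Finset.sum_congr rfl (fun y _ => by rw [lap_green _ _ _ hx])]
      simp only [mul_ite, mul_zero]
      rw [Finset.sum_ite_eq (bx c R) x]
      have := hlam0 x
      split_ifs
      · apply le_of_eq; field_simp; rfl
      · simp only [mul_zero]; change - lam x ≤ 0; linarith
    · rw [Finset.sum_eq_zero (fun y _ => by rw [green_off _ _ _ hxV, mul_zero]), mul_zero]
      exact super_nonneg hn hC hCn hc hxU
  have h1 : (∑ y ∈ bx c R, lam y) * (green (Lam n) z c - err) ≤ ∑ y ∈ bx c R, lam y * green (Lam n) y z := by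
    rw [Finset.sum_mul]
    refine Finset.sum_le_sum fun y hy => ?_
    rw [green_symm _ y z]
    exact mul_le_mul_of_nonneg_left (hgrad y hy) (hlam0 y)
  by_cases hneg : green (Lam n) z c - err ≤ 0
  · refine le_trans ?_ (super_nonneg hn hC hCn hc (Lam_nbr hz).1)
    refine mul_nonpos_of_nonneg_of_nonpos (mul_nonneg ?_ ?_) hneg
    · rw [sub_nonneg, div_le_one (by positivity)]; exact_mod_cast hR
    · rw [sub_nonneg, div_le_one (by positivity)]; exact hCR
  · push Not at hneg
    refine le_trans ?_ hF
    have h2 := mass_low hC c hR hCR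
    have h3 := mul_le_mul_of_nonneg_right h2 hneg.le
    have h4 := h3.trans h1
    rw [one_div, inv_mul_eq_div, le_div_iff₀ (by positivity)]
    nlinarith

/-- lower bound on the variance of the harmonic average -/
lemma var_lower {n m : ℕ} (hn : 1 ≤ n) (hm : 10 ≤ m) (hmn : 7 * m ≤ n) {c : Site}
    (hc : 4 * |c.1| ≤ (n:ℤ) ∧ 4 * |c.2| ≤ (n:ℤ)) (hB : bx c m ⊆ Lam n) :
    2 * Real.log ((n:ℝ) ^ 2 / (48 * (m:ℝ) ^ 2)) -
      (1 + 10 / (m:ℝ) ^ 2) * Real.log ((n:ℝ) ^ 2 / (16 * (m:ℝ) ^ 2)) ≤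
      bil (Lam n) (uf n m c) (uf n m c) := by
  have hpi := pi_pos
  have hm' : (10:ℝ) ≤ m := by exact_mod_cast hm
  have hn' : (1:ℝ) ≤ n := by exact_mod_cast hn
  have hmn' : 7 * (m:ℝ) ≤ n := by exact_mod_cast hmn
  set C : ℝ := (m:ℝ) ^ 2 with hCdef
  have hC : 100 ≤ C := by rw [hCdef]; nlinarith
  have hC1 : 1 ≤ C := by linarith
  set l : Site → ℝ := fun x => Real.log ((n:ℝ) ^ 2 / 16) - Real.log (qd C c x) with hl
  set f : Site → ℝ := fun x => max 0 (l x) with hf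
  have hfo : ∀ x ∉ Lam n, f x = 0 := by
    intro x hx
    refine max_eq_left ?_
    rw [hl, sub_nonpos]
    refine Real.log_le_log (by positivity) ?_
    rw [mem_Lam, not_and_or] at hx
    have hz : (n:ℝ) ^ 2 / 16 ≤ ((x.1:ℝ) - c.1) ^ 2 + ((x.2:ℝ) - c.2) ^ 2 := by
      have aux : ∀ a b : ℤ, ¬ (2 * |a| ≤ (n:ℤ)) → 4 * |b| ≤ (n:ℤ) → (n:ℝ) ^ 2 / 16 ≤ ((a:ℝ) - b) ^ 2 := by
        intro a b ha hb
        have h1 : (n:ℤ) ≤ 4 * |a - b| := by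
          have := abs_sub_abs_le_abs_sub a b; omega
        have h2 : (n:ℝ) ≤ 4 * |(a:ℝ) - b| := by exact_mod_cast h1
        rw [← sq_abs ((a:ℝ) - b)]
        nlinarith [abs_nonneg ((a:ℝ) - b)]
      rcases hx with hx | hx
      · have := aux _ _ hx hc.1; nlinarith [sq_nonneg ((x.2:ℝ) - c.2)]
      · have := aux _ _ hx hc.2; nlinarith [sq_nonneg ((x.1:ℝ) - c.1)]
    unfold qd; linarith
  have hu := uf_off (n := n) hB
  have hpsd := bil_self_nonneg n (fun x => uf n m c x - f x) (fun x hx => by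
    simp only [hu x hx, hfo x hx, sub_zero])
  rw [bil_sub_left, bil_sub_right, bil_sub_right, bil_symm _ f _ hfo hu] at hpsd
  have h1 : Real.log ((n:ℝ) ^ 2 / (48 * C)) ≤ bil (Lam n) (uf n m c) f := by
    rw [bil_uf (by omega) hB]
    refine le_sph_avg (by omega) _ _ fun x hx => ?_
    refine le_trans ?_ (le_max_right _ _)
    have e : (n:ℝ) ^ 2 / (48 * C) = (n:ℝ) ^ 2 / 16 / (3 * C) := by field_simp; norm_num
    rw [e, Real.log_div (by positivity) (by positivity)]
    have hx' := mem_bx.1 (Finset.mem_sdiff.1 hx).1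
    have : qd C c x ≤ 3 * C := by
      have a1 : |(x.1:ℝ) - c.1| ≤ m := by exact_mod_cast hx'.1
      have a2 : |(x.2:ℝ) - c.2| ≤ m := by exact_mod_cast hx'.2
      have b1 := sq_le_sq' (abs_le.1 a1).1 (abs_le.1 a1).2
      have b2 := sq_le_sq' (abs_le.1 a2).1 (abs_le.1 a2).2
      unfold qd; rw [hCdef]; linarith
    have := Real.log_le_log (qd_pos hC1 c x) this
    simp only [hl]; linarith
  set M := Real.log ((n:ℝ) ^ 2 / (16 * C)) with hM
  have hM0 : 0 ≤ M := by
    refine Real.log_nonneg ?_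
    rw [le_div_iff₀ (by positivity), hCdef]; nlinarith
  have hfM : ∀ x, f x ≤ M := by
    intro x
    refine max_le hM0 ?_
    have e : (n:ℝ) ^ 2 / (16 * C) = (n:ℝ) ^ 2 / 16 / C := by field_simp
    rw [hM, e, Real.log_div (by positivity) (by positivity)]
    have := Real.log_le_log (by linarith) (qd_ge C c x)
    simp only [hl]; linarith
  have h2 : bil (Lam n) f f ≤ (1 + 10 / C) * M := by
    unfold bil
    have hx : ∀ x ∈ Lam n, (-lap f x) * f x ≤
        ((1 + 10 / C) * M) * Real.log (1 + (4 * C - 2) / qd C c x ^ 2) := by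
      intro x _
      have hlog0 : 0 ≤ Real.log (1 + (4 * C - 2) / qd C c x ^ 2) := by
        apply Real.log_nonneg
        have : 0 ≤ (4 * C - 2) / qd C c x ^ 2 := div_nonneg (by linarith) (by positivity)
        linarith
      by_cases hp : l x ≤ 0
      · have : f x = 0 := max_eq_left hp
        rw [this, mul_zero]; positivity
      · push Not at hp
        have hfx : f x = l x := max_eq_right hp.le
        have hfl : ∀ y, l y ≤ f y := fun y => le_max_right _ _
        have hlap : -lap f x ≤ (1 + 10 / C) * Real.log (1 + (4 * C - 2) / qd C c x ^ 2) := by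
          refine le_trans ?_ ((lap_log_le hC1 c x).trans (lam_compare hC c x))
          have a1 := hfl (x.1 + 1, x.2); have a2 := hfl (x.1 - 1, x.2)
          have a3 := hfl (x.1, x.2 + 1); have a4 := hfl (x.1, x.2 - 1)
          simp only [lap, hfx]
          simp only [hl] at a1 a2 a3 a4 ⊢
          linarith
        have hf0 : 0 ≤ f x := le_max_left _ _
        calc (-lap f x) * f x ≤ ((1 + 10 / C) * Real.log (1 + (4 * C - 2) / qd C c x ^ 2)) * f x := by
              gcongr
          _ ≤ ((1 + 10 / C) * Real.log (1 + (4 * C - 2) / qd C c x ^ 2)) * M := by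
              gcongr; exact hfM x
          _ = _ := by ring
    calc _ ≤ (1 / (4 * π)) * ∑ x ∈ Lam n,
          ((1 + 10 / C) * M) * Real.log (1 + (4 * C - 2) / qd C c x ^ 2) := by
          refine mul_le_mul_of_nonneg_left (Finset.sum_le_sum hx) (by positivity)
      _ ≤ (1 / (4 * π)) * (((1 + 10 / C) * M) * (4 * π)) := by
          rw [← Finset.mul_sum]; gcongr; exact mass_up hC1 c _
      _ = _ := by field_simp
  linarith

end

section

/-! ### Gaussian densities on finite dimensional spaces -/

open ProbabilityTheory

set_option linter.unusedSectionVars false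

section gd

variable {E : Type*} [NormedAddCommGroup E] [NormedSpace ℝ E] [FiniteDimensional ℝ E]
  [MeasurableSpace E] [BorelSpace E]

def gd0 (ν : Measure E) (B : E →ₗ[ℝ] E →ₗ[ℝ] ℝ) : Measure E :=
  ν.withDensity (fun x => ENNReal.ofReal (Real.exp (-((1 / 2) * B x x))))

def gd (ν : Measure E) (B : E →ₗ[ℝ] E →ₗ[ℝ] ℝ) : Measure E := (gd0 ν B Set.univ)⁻¹ • gd0 ν B

structure GoodForm (ν : Measure E) (B : E →ₗ[ℝ] E →ₗ[ℝ] ℝ) : Prop where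
  symm : ∀ x y, B x y = B y x
  pos : ∀ x, B x x ≤ 0 → x = 0
  int : Integrable (fun x => Real.exp (-((1 / 2) * B x x))) ν

variable {ν : Measure E} [ν.IsAddHaarMeasure] {B : E →ₗ[ℝ] E →ₗ[ℝ] ℝ}

lemma contB1 (B : E →ₗ[ℝ] E →ₗ[ℝ] ℝ) (f : E) : Continuous (fun x => B f x) :=
  LinearMap.continuous_of_finiteDimensional (B f)

lemma contB2 (B : E →ₗ[ℝ] E →ₗ[ℝ] ℝ) : Continuous (fun x => B x x) := by
  let b := Module.finBasis ℝ E
  have : (fun x => B x x) = fun x => ∑ i, (b.repr x i) * B (b i) x := by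
    funext x
    have h : B x = ∑ i, (b.repr x i) • B (b i) := by
      conv_lhs => rw [← b.sum_repr x]
      rw [map_sum]
      simp only [map_smul]
    conv_lhs => rw [h]
    rw [LinearMap.sum_apply]
    simp only [LinearMap.smul_apply, smul_eq_mul]
  rw [this]
  refine continuous_finsetSum _ fun i _ => ?_
  have h1 : Continuous (fun x => b.coord i x) := LinearMap.continuous_of_finiteDimensional _
  exact h1.mul (contB1 B (b i))

lemma gd0_lint (hB : GoodForm ν B) :
    gd0 ν B Set.univ = ENNReal.ofReal (∫ x, Real.exp (-((1 / 2) * B x x)) ∂ν) := by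
  rw [gd0, withDensity_apply _ MeasurableSet.univ, Measure.restrict_univ,
    ofReal_integral_eq_lintegral_ofReal hB.int (ae_of_all _ fun x => (Real.exp_pos _).le)]

lemma gdZ_pos (hB : GoodForm ν B) : 0 < ∫ x, Real.exp (-((1 / 2) * B x x)) ∂ν := by
  have hne : ν ≠ 0 := NeZero.ne ν
  exact integral_exp_pos hB.int

lemma gd_int (hB : GoodForm ν B) (F : E → ℝ) :
    ∫ x, F x ∂(gd ν B) = (∫ x, Real.exp (-((1 / 2) * B x x)) ∂ν)⁻¹ *
      ∫ x, Real.exp (-((1 / 2) * B x x)) * F x ∂ν := by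
  have hm : Measurable (fun x => Real.exp (-((1 / 2) * B x x))) :=
    (Real.continuous_exp.comp (((contB2 B).const_mul _).neg)).measurable
  rw [gd, integral_smul_measure, gd0_lint hB, gd0]
  rw [integral_withDensity_eq_integral_toReal_smul₀ (hm.ennreal_ofReal.aemeasurable)
    (ae_of_all _ fun x => ENNReal.ofReal_lt_top)]
  rw [ENNReal.toReal_inv, ENNReal.toReal_ofReal (gdZ_pos hB).le, smul_eq_mul]
  congr 2
  funext x
  rw [ENNReal.toReal_ofReal (Real.exp_pos _).le, smul_eq_mul]

lemma gd_prob (hB : GoodForm ν B) : IsProbabilityMeasure (gd ν B) := by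
  constructor
  rw [gd, Measure.smul_apply, smul_eq_mul, gd0_lint hB]
  refine ENNReal.inv_mul_cancel ?_ ENNReal.ofReal_ne_top
  rw [Ne, ENNReal.ofReal_eq_zero, not_le]; exact gdZ_pos hB

lemma gd_mgf (hB : GoodForm ν B) (f : E) :
    ∫ x, Real.exp (B f x) ∂(gd ν B) = Real.exp ((1 / 2) * B f f) := by
  rw [gd_int hB]
  have h : ∀ x, Real.exp (-((1 / 2) * B x x)) * Real.exp (B f x) =
      Real.exp ((1 / 2) * B f f) * Real.exp (-((1 / 2) * B (x - f) (x - f))) := by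
    intro x
    rw [← Real.exp_add, ← Real.exp_add]
    congr 1
    simp only [map_sub, LinearMap.sub_apply]
    rw [hB.symm x f]; ring
  simp only [h]
  rw [integral_const_mul, integral_sub_right_eq_self (fun x => Real.exp (-((1 / 2) * B x x))) f]
  have := gdZ_pos hB
  rw [mul_comm, mul_assoc, mul_inv_cancel₀ this.ne', mul_one]

lemma gd_mgf_int (hB : GoodForm ν B) (f : E) : Integrable (fun x => Real.exp (B f x)) (gd ν B) := by
  by_contra h
  have := gd_mgf hB f
  rw [integral_undef h] at this
  exact (Real.exp_pos _).ne this

lemma gd_map (hB : GoodForm ν B) (f : E) :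
    (gd ν B).map (fun x => B f x) = gaussianReal 0 (B f f).toNNReal := by
  have := gd_prob hB
  have hm : Measurable (fun x => B f x) := (contB1 B f).measurable
  have hff : 0 ≤ B f f := by
    by_contra h
    push Not at h
    have := hB.pos f h.le
    rw [this] at h; simp at h
  have hmgf : mgf (fun x => B f x) (gd ν B) = mgf id (gaussianReal 0 (B f f).toNNReal) := by
    funext t
    rw [mgf_id_gaussianReal, mgf]
    have e : ∀ x, t * B f x = B (t • f) x := fun x => by simp
    simp only [e]
    rw [gd_mgf hB]
    congr 1
    simp only [map_smul, LinearMap.smul_apply, smul_eq_mul, Real.coe_toNNReal _ hff]; ring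
  have hset : integrableExpSet (fun x => B f x) (gd ν B) = Set.univ := by
    ext t
    simp only [integrableExpSet, Set.mem_ofPred_eq, Set.mem_univ, iff_true]
    have e : ∀ x, t * B f x = B (t • f) x := fun x => by simp
    simp only [e]; exact gd_mgf_int hB _
  have hEq := eqOn_complexMGF_of_mgf hmgf
  rw [hset] at hEq
  have := Measure.ext_of_complexMGF_eq hm.aemeasurable aemeasurable_id
    (funext fun z => hEq (by simp : z ∈ {z : ℂ | z.re ∈ interior Set.univ}))
  rw [this, Measure.map_id]

lemma gd_riesz (hB : GoodForm ν B) (L : E →L[ℝ] ℝ) : ∃ f, ∀ x, L x = B f x := by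
  have hinj : Function.Injective B := by
    rw [injective_iff_map_eq_zero]
    intro x hx
    exact hB.pos x (by rw [hx]; simp)
  have hsurj : Function.Surjective B :=
    (LinearMap.injective_iff_surjective_of_finrank_eq_finrank
      (Subspace.dual_finrank_eq (K := ℝ) (V := E)).symm).1 hinj
  obtain ⟨f, hf⟩ := hsurj (L : E →ₗ[ℝ] ℝ)
  exact ⟨f, fun x => by rw [hf]; rfl⟩

lemma gd_gaussian (hB : GoodForm ν B) : IsGaussian (gd ν B) := by
  refine isGaussian_of_map_eq_gaussianReal fun L => ?_
  obtain ⟨f, hf⟩ := gd_riesz hB L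
  refine ⟨0, (B f f).toNNReal, ?_⟩
  rw [← gd_map hB f]
  congr 1; funext x; exact hf x

lemma gd_var (hB : GoodForm ν B) (f : E) : Var[fun x => B f x; gd ν B] = B f f := by
  have hm : Measurable (fun x => B f x) := (contB1 B f).measurable
  have hff : 0 ≤ B f f := by
    by_contra h
    push Not at h
    have := hB.pos f h.le
    rw [this] at h; simp at h
  have h1 := gd_map hB f
  have h2 : Var[id; (gd ν B).map (fun x => B f x)] = Var[fun x => B f x; gd ν B] :=
    variance_id_map hm.aemeasurable
  rw [← h2, h1, variance_id_gaussianReal, Real.coe_toNNReal _ hff]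

lemma gd_mean (hB : GoodForm ν B) : ∫ x, x ∂(gd ν B) = 0 := by
  have := gd_gaussian hB
  have hall : ∀ L : E →L[ℝ] ℝ, L (∫ x, x ∂(gd ν B)) = 0 := by
    intro L
    rw [← IsGaussian.integral_dual]
    obtain ⟨f, hf⟩ := gd_riesz hB L
    simp only [hf]
    have hm : Measurable (fun x => B f x) := (contB1 B f).measurable
    have h2 : ∫ y, y ∂((gd ν B).map (fun x => B f x)) = ∫ x, B f x ∂(gd ν B) :=
      integral_map hm.aemeasurable (by fun_prop)
    rw [← h2, gd_map hB f]
    exact integral_id_gaussianReal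
  by_contra hne
  obtain ⟨L, hL⟩ := SeparatingDual.exists_ne_zero (R := ℝ) hne
  exact hL (hall L)

lemma gd_cov (hB : GoodForm ν B) (f g : E) :
    cov[fun x => B f x, fun x => B g x; gd ν B] = B f g := by
  have := gd_gaussian hB
  have hm : ∀ f, MemLp (fun x => B f x) 2 (gd ν B) := fun f =>
    IsGaussian.memLp_dual (gd ν B) (LinearMap.toContinuousLinearMap (B f)) 2 (by norm_num)
  have h1 := variance_fun_add (hm f) (hm g)
  have h2 := gd_var hB (f + g)
  simp only [map_add, LinearMap.add_apply] at h2
  rw [h2, gd_var hB, gd_var hB, hB.symm g f] at h1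
  linarith

end gd

end

section

/-! ### Gaussian concentration of log-sum-exp -/

open ProbabilityTheory

set_option linter.unusedSectionVars false

section conc

variable {E : Type*} [NormedAddCommGroup E] [NormedSpace ℝ E] [FiniteDimensional ℝ E]
  [MeasurableSpace E] [BorelSpace E] {ν : Measure E} [ν.IsAddHaarMeasure] {B : E →ₗ[ℝ] E →ₗ[ℝ] ℝ}

def lse (B : E →ₗ[ℝ] E →ₗ[ℝ] ℝ) {κ : Type*} (S : Finset κ) (f : κ → E) (x : E) : ℝ :=
  ∑ c ∈ S, Real.exp (B (f c) x)

def lsw (B : E →ₗ[ℝ] E →ₗ[ℝ] ℝ) {κ : Type*} (S : Finset κ) (f : κ → E) (c : κ) (x : E) : ℝ :=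
  Real.exp (B (f c) x) / lse B S f x

variable {κ : Type*} {S : Finset κ} {f : κ → E}

lemma lse_pos (hS : S.Nonempty) (x : E) : 0 < lse B S f x :=
  Finset.sum_pos (fun _ _ => Real.exp_pos _) hS

lemma lse_cont : Continuous (lse B S f) :=
  continuous_finsetSum _ fun c _ => Real.continuous_exp.comp (contB1 B (f c))

lemma lsw_cont (hS : S.Nonempty) (c : κ) : Continuous (lsw B S f c) :=
  (Real.continuous_exp.comp (contB1 B (f c))).div₀ lse_cont (fun x => (lse_pos hS x).ne')

lemma lsw_nonneg (hS : S.Nonempty) (c : κ) (x : E) : 0 ≤ lsw B S f c x :=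
  div_nonneg (Real.exp_pos _).le (lse_pos hS x).le

lemma lsw_sum (hS : S.Nonempty) (x : E) : ∑ c ∈ S, lsw B S f c x = 1 := by
  simp only [lsw, ← Finset.sum_div]
  exact div_self (lse_pos hS x).ne'

lemma path_ineq (hS : S.Nonempty) (l : ℝ) (x y : E) :
    Real.exp (l * (Real.log (lse B S f y) - Real.log (lse B S f x))) ≤
      (2 / π) * ∫ θ in (0:ℝ)..(π / 2), ∑ c ∈ S,
        lsw B S f c (Real.cos θ • x + Real.sin θ • y) *
          Real.exp (l * (π / 2) * B (f c) (-Real.sin θ • x + Real.cos θ • y)) := by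
  have hpi := pi_pos
  set G : ℝ → ℝ := fun θ => ∑ c ∈ S, lsw B S f c (Real.cos θ • x + Real.sin θ • y) *
    B (f c) (-Real.sin θ • x + Real.cos θ • y) with hG
  have hX : Continuous fun θ : ℝ => Real.cos θ • x + Real.sin θ • y := by fun_prop
  have hX' : Continuous fun θ : ℝ => -Real.sin θ • x + Real.cos θ • y := by fun_prop
  have hGc : Continuous G := continuous_finsetSum _ fun c _ =>
    ((lsw_cont hS c).comp hX).mul ((contB1 B (f c)).comp hX')
  have hder : ∀ θ, HasDerivAt (fun θ => Real.log (lse B S f (Real.cos θ • x + Real.sin θ • y))) (G θ) θ := by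
    intro θ
    have h1 : ∀ c ∈ S, HasDerivAt (fun θ : ℝ => Real.exp (B (f c) (Real.cos θ • x + Real.sin θ • y)))
        (Real.exp (B (f c) (Real.cos θ • x + Real.sin θ • y)) *
          B (f c) (-Real.sin θ • x + Real.cos θ • y)) θ := by
      intro c _
      have h2 : HasDerivAt (fun θ : ℝ => B (f c) (Real.cos θ • x + Real.sin θ • y))
          (B (f c) (-Real.sin θ • x + Real.cos θ • y)) θ := by
        simp only [map_add, map_smul, smul_eq_mul]
        exact ((Real.hasDerivAt_cos θ).mul_const _).add ((Real.hasDerivAt_sin θ).mul_const _)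
      exact h2.exp
    have h3 := HasDerivAt.fun_sum h1
    have h4 := HasDerivAt.log h3 (lse_pos (B := B) (f := f) hS _).ne'
    have e : G θ = (∑ c ∈ S, Real.exp (B (f c) (Real.cos θ • x + Real.sin θ • y)) *
          B (f c) (-Real.sin θ • x + Real.cos θ • y)) /
          ∑ c ∈ S, Real.exp (B (f c) (Real.cos θ • x + Real.sin θ • y)) := by
      simp only [hG, lsw, Finset.sum_div]
      refine Finset.sum_congr rfl fun c _ => ?_
      simp only [lse]; ring
    rw [e]; exact h4
  have hFTC : ∫ θ in (0:ℝ)..(π / 2), G θ = Real.log (lse B S f y) - Real.log (lse B S f x) := by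
    rw [intervalIntegral.integral_eq_sub_of_hasDerivAt (fun θ _ => hder θ)
      (hGc.intervalIntegrable _ _)]
    simp
  set I := l * (Real.log (lse B S f y) - Real.log (lse B S f x)) with hI
  have hpt : ∀ θ, Real.exp I * (1 + (l * (π / 2) * G θ - I)) ≤ ∑ c ∈ S,
        lsw B S f c (Real.cos θ • x + Real.sin θ • y) *
          Real.exp (l * (π / 2) * B (f c) (-Real.sin θ • x + Real.cos θ • y)) := by
    intro θ
    have h1 : ∀ c, Real.exp I * (1 + (l * (π / 2) * B (f c) (-Real.sin θ • x + Real.cos θ • y) - I)) ≤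
        Real.exp (l * (π / 2) * B (f c) (-Real.sin θ • x + Real.cos θ • y)) := by
      intro c
      set t := l * (π / 2) * B (f c) (-Real.sin θ • x + Real.cos θ • y)
      have := Real.add_one_le_exp (t - I)
      calc _ ≤ Real.exp I * Real.exp (t - I) := by gcongr; linarith
        _ = _ := by rw [← Real.exp_add]; congr 1; ring
    calc _ = ∑ c ∈ S, lsw B S f c (Real.cos θ • x + Real.sin θ • y) *
          (Real.exp I * (1 + (l * (π / 2) * B (f c) (-Real.sin θ • x + Real.cos θ • y) - I))) := by
          have hs := lsw_sum (B := B) (f := f) hS (Real.cos θ • x + Real.sin θ • y)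
          have : ∀ c, lsw B S f c (Real.cos θ • x + Real.sin θ • y) *
            (Real.exp I * (1 + (l * (π / 2) * B (f c) (-Real.sin θ • x + Real.cos θ • y) - I))) =
            (Real.exp I * (1 - I)) * lsw B S f c (Real.cos θ • x + Real.sin θ • y) +
            (Real.exp I * (l * (π / 2))) * (lsw B S f c (Real.cos θ • x + Real.sin θ • y) *
              B (f c) (-Real.sin θ • x + Real.cos θ • y)) := by intro c; ring
          simp only [this, Finset.sum_add_distrib, ← Finset.mul_sum, hs]
          simp only [hG]; ring
      _ ≤ _ := Finset.sum_le_sum fun c _ => mul_le_mul_of_nonneg_left (h1 c) (lsw_nonneg hS c _)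
  have hRc : Continuous fun θ : ℝ => ∑ c ∈ S,
        lsw B S f c (Real.cos θ • x + Real.sin θ • y) *
          Real.exp (l * (π / 2) * B (f c) (-Real.sin θ • x + Real.cos θ • y)) :=
    continuous_finsetSum _ fun c _ => ((lsw_cont hS c).comp hX).mul
      (Real.continuous_exp.comp (((contB1 B (f c)).comp hX').const_mul _))
  have hLc : Continuous fun θ : ℝ => Real.exp I * (1 + (l * (π / 2) * G θ - I)) :=
    ((continuous_const.add ((hGc.const_mul _).sub continuous_const)).const_mul _)
  have hmono := intervalIntegral.integral_mono_on (μ := volume) (show (0:ℝ) ≤ π / 2 by positivity)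
    (hLc.intervalIntegrable _ _) (hRc.intervalIntegrable _ _) (fun θ _ => hpt θ)
  have hL : ∫ θ in (0:ℝ)..(π / 2), Real.exp I * (1 + (l * (π / 2) * G θ - I)) = Real.exp I * (π / 2) := by
    rw [intervalIntegral.integral_const_mul]
    congr 1
    have e : ∀ θ, 1 + (l * (π / 2) * G θ - I) = (1 - I) + l * (π / 2) * G θ := by intro θ; ring
    simp only [e]
    rw [intervalIntegral.integral_add (by simp) ((hGc.const_mul _).intervalIntegrable _ _),
      intervalIntegral.integral_const_mul, hFTC]
    simp only [intervalIntegral.integral_const, smul_eq_mul, hI]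
    ring
  rw [hL] at hmono
  calc Real.exp I = (2 / π) * (Real.exp I * (π / 2)) := by field_simp
    _ ≤ _ := by gcongr

def Phi (B : E →ₗ[ℝ] E →ₗ[ℝ] ℝ) {κ : Type*} (S : Finset κ) (f : κ → E) (l : ℝ) (p : E × E) : ℝ :=
  ∑ c ∈ S, lsw B S f c p.1 * Real.exp (l * (π / 2) * B (f c) p.2)

lemma Phi_cont (hS : S.Nonempty) (l : ℝ) : Continuous (Phi B S f l) :=
  continuous_finsetSum _ fun c _ => ((lsw_cont hS c).comp continuous_fst).mul
      (Real.continuous_exp.comp (((contB1 B (f c)).comp continuous_snd).const_mul _))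

lemma Phi_nonneg (hS : S.Nonempty) (l : ℝ) (p : E × E) : 0 ≤ Phi B S f l p :=
  Finset.sum_nonneg fun c _ => mul_nonneg (lsw_nonneg hS c _) (Real.exp_pos _).le

def rot (θ : ℝ) (p : E × E) : E × E :=
  (Real.cos θ • p.1 + Real.sin θ • p.2, -Real.sin θ • p.1 + Real.cos θ • p.2)

lemma rot_cont : Continuous fun q : (E × E) × ℝ => rot q.2 q.1 := by
  unfold rot; fun_prop

lemma rot_map {μ : Measure E} [IsGaussian μ] (h : μ[id] = 0) (θ : ℝ) :
    (μ.prod μ).map (rot θ) = μ.prod μ := by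
  have := IsGaussian.map_rotation_eq_self (μ := μ) h θ
  have e : (rot θ : E × E → E × E) = ⇑(ContinuousLinearMap.rotation (E := E) θ) := by
    funext p
    rw [ContinuousLinearMap.rotation_apply]; rfl
  rw [e]; exact this

lemma path_ineq2 (hS : S.Nonempty) (l : ℝ) (p : E × E) :
    ENNReal.ofReal (Real.exp (l * (Real.log (lse B S f p.2) - Real.log (lse B S f p.1)))) ≤
      ENNReal.ofReal (2 / π) * ∫⁻ θ in Set.Ioc 0 (π / 2), ENNReal.ofReal (Phi B S f l (rot θ p)) := by
  have hpi := pi_pos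
  have h1 : Real.exp (l * (Real.log (lse B S f p.2) - Real.log (lse B S f p.1))) ≤
      (2 / π) * ∫ θ in (0:ℝ)..(π / 2), Phi B S f l (rot θ p) := path_ineq hS l p.1 p.2
  have hc : Continuous fun θ => Phi B S f l (rot θ p) :=
    (Phi_cont hS l).comp (rot_cont.comp (by fun_prop : Continuous fun θ : ℝ => (p, θ)))
  rw [intervalIntegral.integral_of_le (by positivity)] at h1
  refine (ENNReal.ofReal_le_ofReal h1).trans ?_
  rw [ENNReal.ofReal_mul (by positivity), ofReal_integral_eq_lintegral_ofReal]
  · exact (hc.continuousOn.integrableOn_compact isCompact_Icc).mono_set Set.Ioc_subset_Icc_self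
  · exact ae_of_all _ fun θ => Phi_nonneg hS l _

lemma Phi_lint (hB : GoodForm ν B) (hS : S.Nonempty) (V : ℝ) (hV : ∀ c ∈ S, B (f c) (f c) ≤ V) (l : ℝ) :
    ∫⁻ p, ENNReal.ofReal (Phi B S f l p) ∂((gd ν B).prod (gd ν B)) ≤
      ENNReal.ofReal (Real.exp (l ^ 2 * π ^ 2 * V / 8)) := by
  have hP := gd_prob hB
  rw [lintegral_prod _ (Phi_cont hS l).measurable.ennreal_ofReal.aemeasurable]
  have hx : ∀ x, ∫⁻ y, ENNReal.ofReal (Phi B S f l (x, y)) ∂(gd ν B) ≤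
      ENNReal.ofReal (Real.exp (l ^ 2 * π ^ 2 * V / 8)) := by
    intro x
    have e0 : ∀ y, Phi B S f l (x, y) = ∑ c ∈ S, lsw B S f c x * Real.exp (B ((l * (π / 2)) • f c) y) := by
      intro y; simp [Phi]
    have hi : Integrable (fun y => Phi B S f l (x, y)) (gd ν B) := by
      simp only [e0]
      exact integrable_finsetSum _ fun c _ => (gd_mgf_int hB _).const_mul _
    rw [← ofReal_integral_eq_lintegral_ofReal hi (ae_of_all _ fun y => Phi_nonneg hS l _)]
    refine ENNReal.ofReal_le_ofReal ?_
    simp only [e0]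
    rw [integral_finsetSum _ fun c _ => (gd_mgf_int hB _).const_mul _]
    simp only [integral_const_mul]
    calc _ ≤ ∑ c ∈ S, lsw B S f c x * Real.exp (l ^ 2 * π ^ 2 * V / 8) := by
          refine Finset.sum_le_sum fun c hc => mul_le_mul_of_nonneg_left ?_ (lsw_nonneg hS c x)
          rw [gd_mgf hB]
          refine Real.exp_le_exp.2 ?_
          simp only [map_smul, LinearMap.smul_apply, smul_eq_mul]
          have h2 : l ^ 2 * π ^ 2 * (B (f c) (f c)) ≤ l ^ 2 * π ^ 2 * V :=
            mul_le_mul_of_nonneg_left (hV c hc) (by positivity)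
          nlinarith
      _ = _ := by rw [← Finset.sum_mul, lsw_sum hS, one_mul]
  calc _ ≤ ∫⁻ x, ENNReal.ofReal (Real.exp (l ^ 2 * π ^ 2 * V / 8)) ∂(gd ν B) := lintegral_mono hx
    _ = _ := by simp

lemma conc_mgf (hB : GoodForm ν B) (hS : S.Nonempty) (V : ℝ) (hV : ∀ c ∈ S, B (f c) (f c) ≤ V) (l : ℝ) :
    ∫⁻ p, ENNReal.ofReal (Real.exp (l * (Real.log (lse B S f p.2) - Real.log (lse B S f p.1))))
      ∂((gd ν B).prod (gd ν B)) ≤ ENNReal.ofReal (Real.exp (l ^ 2 * π ^ 2 * V / 8)) := by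
  have hpi := pi_pos
  have hG := gd_gaussian hB
  have hP := gd_prob hB
  have hmean : (gd ν B)[id] = 0 := gd_mean hB
  have hfin := Phi_lint hB hS V hV l
  have hΦm : Measurable fun p => ENNReal.ofReal (Phi B S f l p) :=
    (Phi_cont hS l).measurable.ennreal_ofReal
  have hpt := path_ineq2 (B := B) (f := f) hS l
  have hrm : ∀ θ, Measurable (rot (E := E) θ) := fun θ =>
    (rot_cont.comp (by fun_prop : Continuous fun p : E × E => (p, θ))).measurable
  have hrot : ∀ θ, ∫⁻ p, ENNReal.ofReal (Phi B S f l (rot θ p)) ∂((gd ν B).prod (gd ν B)) =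
      ∫⁻ p, ENNReal.ofReal (Phi B S f l p) ∂((gd ν B).prod (gd ν B)) := by
    intro θ
    rw [← lintegral_map (f := fun p => ENNReal.ofReal (Phi B S f l p)) hΦm (hrm θ), rot_map hmean]
  have hjm : AEMeasurable (Function.uncurry fun (p : E × E) (θ : ℝ) => ENNReal.ofReal (Phi B S f l (rot θ p)))
      (((gd ν B).prod (gd ν B)).prod (volume.restrict (Set.Ioc 0 (π / 2)))) :=
    (hΦm.comp rot_cont.measurable).aemeasurable
  calc _ ≤ ∫⁻ p, ENNReal.ofReal (2 / π) * (∫⁻ θ in Set.Ioc 0 (π / 2),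
        ENNReal.ofReal (Phi B S f l (rot θ p))) ∂((gd ν B).prod (gd ν B)) := lintegral_mono hpt
    _ = ENNReal.ofReal (2 / π) * ∫⁻ p, (∫⁻ θ in Set.Ioc 0 (π / 2),
        ENNReal.ofReal (Phi B S f l (rot θ p))) ∂((gd ν B).prod (gd ν B)) :=
        lintegral_const_mul' _ _ ENNReal.ofReal_ne_top
    _ = ENNReal.ofReal (2 / π) * ∫⁻ θ in Set.Ioc 0 (π / 2), ∫⁻ p,
        ENNReal.ofReal (Phi B S f l (rot θ p)) ∂((gd ν B).prod (gd ν B)) := by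
        rw [lintegral_lintegral_swap hjm]
    _ ≤ ENNReal.ofReal (2 / π) * ∫⁻ θ in Set.Ioc 0 (π / 2), ENNReal.ofReal (Real.exp (l ^ 2 * π ^ 2 * V / 8)) := by
        refine mul_le_mul' le_rfl (lintegral_mono fun θ => ?_)
        rw [hrot]; exact hfin
    _ = ENNReal.ofReal (Real.exp (l ^ 2 * π ^ 2 * V / 8)) := by
        rw [lintegral_const, Measure.restrict_apply MeasurableSet.univ, Set.univ_inter, Real.volume_Ioc,
          mul_comm (ENNReal.ofReal (Real.exp _)), ← mul_assoc, ← ENNReal.ofReal_mul (by positivity)]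
        have : 2 / π * (π / 2 - 0) = 1 := by field_simp; simp
        rw [this, ENNReal.ofReal_one, one_mul]

/-- two-sided concentration: small values and large values cannot both be likely -/
lemma conc (hB : GoodForm ν B) (hS : S.Nonempty) (V : ℝ) (hV : ∀ c ∈ S, B (f c) (f c) ≤ V)
    (l : ℝ) (hl : 0 ≤ l) (a b : ℝ) :
    gd ν B {x | Real.log (lse B S f x) ≤ a} * gd ν B {x | b ≤ Real.log (lse B S f x)} ≤
      ENNReal.ofReal (Real.exp (l ^ 2 * π ^ 2 * V / 8 - l * (b - a))) := by
  have hP := gd_prob hB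
  have h := conc_mgf hB hS V hV l
  rw [← Measure.prod_prod]
  have hmk : ∀ p ∈ ({x | Real.log (lse B S f x) ≤ a} ×ˢ {x | b ≤ Real.log (lse B S f x)} : Set (E × E)),
      ENNReal.ofReal (Real.exp (l * (b - a))) ≤
      ENNReal.ofReal (Real.exp (l * (Real.log (lse B S f p.2) - Real.log (lse B S f p.1)))) := by
    rintro p ⟨h1, h2⟩
    simp only [Set.mem_ofPred_eq] at h1 h2
    refine ENNReal.ofReal_le_ofReal (Real.exp_le_exp.2 ?_)
    exact mul_le_mul_of_nonneg_left (by linarith) hl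
  have hmk2 := (mul_le_mul' (le_refl (ENNReal.ofReal (Real.exp (l * (b - a)))))
    (measure_mono (μ := (gd ν B).prod (gd ν B)) hmk)).trans
    ((mul_meas_ge_le_lintegral₀ (μ := (gd ν B).prod (gd ν B))
      (f := fun p : E × E => ENNReal.ofReal (Real.exp (l * (Real.log (lse B S f p.2) - Real.log (lse B S f p.1)))))
      (by
        have hc : Continuous fun x => Real.log (lse B S f x) :=
          lse_cont.log fun x => (lse_pos hS x).ne'
        have : Continuous fun p : E × E =>
            Real.exp (l * (Real.log (lse B S f p.2) - Real.log (lse B S f p.1))) := by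
          have h1 := hc.comp (continuous_snd (X := E) (Y := E))
          have h2 := hc.comp (continuous_fst (X := E) (Y := E))
          exact Real.continuous_exp.comp ((h1.sub h2).const_mul l)
        exact this.measurable.ennreal_ofReal.aemeasurable) _).trans h)
  set M := ((gd ν B).prod (gd ν B))
    ({x | Real.log (lse B S f x) ≤ a} ×ˢ {x | b ≤ Real.log (lse B S f x)})
  calc M = ENNReal.ofReal (Real.exp (-(l * (b - a)))) * (ENNReal.ofReal (Real.exp (l * (b - a))) * M) := by
        rw [← mul_assoc, ← ENNReal.ofReal_mul (Real.exp_pos _).le, ← Real.exp_add]; simp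
    _ ≤ ENNReal.ofReal (Real.exp (-(l * (b - a)))) * ENNReal.ofReal (Real.exp (l ^ 2 * π ^ 2 * V / 8)) := by
        gcongr
    _ = _ := by
        rw [← ENNReal.ofReal_mul (Real.exp_pos _).le, ← Real.exp_add]
        congr 2; ring

end conc

end

section

/-! ### The GFF as a Gaussian measure -/

open ProbabilityTheory

abbrev CE (n N : ℕ) : Type := {x // x ∈ Lam n} → Spin N

abbrev nuE (n N : ℕ) : Measure (CE n N) := Measure.pi fun _ => (volume : Measure (Spin N))

def ef {n N : ℕ} (ω : CE n N) (i : Fin N) : Site → ℝ := fun x => extZero n ω x i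

lemma ef_off {n N : ℕ} (ω : CE n N) (i : Fin N) (x : Site) (hx : x ∉ Lam n) : ef ω i x = 0 := by
  simp [ef, extZero, hx]

lemma ef_on {n N : ℕ} (ω : CE n N) (i : Fin N) (x : {x // x ∈ Lam n}) : ef ω i x = ω x i := by
  simp [ef, extZero]

lemma ef_add {n N : ℕ} (ω η : CE n N) (i : Fin N) : ef (ω + η) i = fun x => ef ω i x + ef η i x := by
  funext x
  by_cases hx : x ∈ Lam n <;> simp [ef, extZero, hx]

lemma ef_smul {n N : ℕ} (a : ℝ) (ω : CE n N) (i : Fin N) : ef (a • ω) i = fun x => a * ef ω i x := by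
  funext x
  by_cases hx : x ∈ Lam n <;> simp [ef, extZero, hx]

lemma bil_add_left (V : Finset Site) (f g h : Site → ℝ) :
    bil V (fun x => f x + g x) h = bil V f h + bil V g h := by
  simp only [bil, lap_add, ← mul_add, ← Finset.sum_add_distrib]
  congr 1; exact Finset.sum_congr rfl fun x _ => by ring

lemma bil_add_right (V : Finset Site) (f g h : Site → ℝ) :
    bil V f (fun x => g x + h x) = bil V f g + bil V f h := by
  simp only [bil, ← mul_add, ← Finset.sum_add_distrib]

lemma bil_smul_left (V : Finset Site) (a : ℝ) (f h : Site → ℝ) :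
    bil V (fun x => a * f x) h = a * bil V f h := by
  simp only [bil, lap_smul, Finset.mul_sum]
  exact Finset.sum_congr rfl fun x _ => by ring

lemma bil_smul_right (V : Finset Site) (a : ℝ) (f h : Site → ℝ) :
    bil V f (fun x => a * h x) = a * bil V f h := by
  simp only [bil, Finset.mul_sum]
  exact Finset.sum_congr rfl fun x _ => by ring

def BG (n N : ℕ) : CE n N →ₗ[ℝ] CE n N →ₗ[ℝ] ℝ :=
  LinearMap.mk₂ ℝ (fun ω η => ∑ i, bil (Lam n) (ef ω i) (ef η i))
    (fun a b c => by simp only [ef_add, bil_add_left, Finset.sum_add_distrib])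
    (fun a b c => by simp only [ef_smul, bil_smul_left, smul_eq_mul, Finset.mul_sum])
    (fun a b c => by simp only [ef_add, bil_add_right, Finset.sum_add_distrib])
    (fun a b c => by simp only [ef_smul, bil_smul_right, smul_eq_mul, Finset.mul_sum])

lemma BG_apply {n N : ℕ} (ω η : CE n N) : BG n N ω η = ∑ i, bil (Lam n) (ef ω i) (ef η i) := rfl

lemma bil_cs {n : ℕ} {y : Site} (hy : y ∈ Lam n) (f : Site → ℝ) (hf : ∀ x ∉ Lam n, f x = 0) :
    f y ^ 2 ≤ (green (Lam n) y y + 1) * bil (Lam n) f f := by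
  set K := green (Lam n) y y + 1 with hK
  have hg0 := green_nonneg (Lam n) y y
  have hKp : 0 < K := by linarith
  set t := f y / K with ht
  set g := green (Lam n) y with hg
  have h := bil_self_nonneg n (fun x => f x - t * g x) (fun x hx => by
    rw [hf x hx, hg, green_off _ _ x hx]; ring)
  rw [bil_sub_left, bil_sub_right, bil_sub_right, bil_smul_left, bil_smul_left, bil_smul_right,
    bil_smul_right, bil_symm (Lam n) f g hf (green_off _ _), hg, bil_green _ _ hy, bil_green _ _ hy] at h
  have e : f y = t * K := by rw [ht]; field_simp
  have hgg : green (Lam n) y y = K - 1 := by rw [hK]; ring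
  rw [hgg, e] at h
  rw [e]
  nlinarith [sq_nonneg t]

lemma norm_sq_ef {n N : ℕ} (ω : CE n N) (y : {x // x ∈ Lam n}) : ‖ω y‖ ^ 2 = ∑ i, ef ω i y ^ 2 := by
  rw [EuclideanSpace.norm_sq_eq]
  exact Finset.sum_congr rfl fun i _ => by rw [ef_on, Real.norm_eq_abs, sq_abs]

lemma BG_self_ge {n N : ℕ} (ω : CE n N) (y : {x // x ∈ Lam n}) :
    ‖ω y‖ ^ 2 ≤ (green (Lam n) y y + 1) * BG n N ω ω := by
  rw [norm_sq_ef, BG_apply, Finset.mul_sum]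
  exact Finset.sum_le_sum fun i _ => bil_cs y.2 _ (ef_off ω i)

lemma BG_nonneg {n N : ℕ} (ω : CE n N) : 0 ≤ BG n N ω ω := by
  rw [BG_apply]
  exact Finset.sum_nonneg fun i _ => bil_self_nonneg n _ (ef_off ω i)

lemma gauss_int (N : ℕ) (c : ℝ) (hc : 0 < c) :
    Integrable (fun v : Spin N => Real.exp (-(c * ‖v‖ ^ 2))) volume := by
  have h := (GaussianFourier.integrable_cexp_neg_mul_sq_norm_add (V := Spin N) (b := (c : ℂ))
    (by simpa using hc) 0 0).norm
  refine h.congr (ae_of_all _ fun v => ?_)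
  simp only [Complex.norm_exp]
  congr 1
  simp [← Complex.ofReal_pow]

lemma BG_good (n N : ℕ) : GoodForm (nuE n N) (BG n N) := by
  refine ⟨fun ω η => ?_, fun ω h => ?_, ?_⟩
  · simp only [BG_apply]
    exact Finset.sum_congr rfl fun i _ => bil_symm _ _ _ (ef_off ω i) (ef_off η i)
  · funext y
    have h1 := BG_self_ge ω y
    have h2 := BG_nonneg ω
    have h3 : BG n N ω ω = 0 := le_antisymm h h2
    rw [h3, mul_zero] at h1
    have : ‖ω y‖ = 0 := by nlinarith [norm_nonneg (ω y)]
    simpa using this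
  · set K : ℝ := 1 + ∑ y : {x // x ∈ Lam n}, (green (Lam n) y y + 1) with hK
    have hK0 : 0 ≤ ∑ y : {x // x ∈ Lam n}, (green (Lam n) (y : Site) y + 1) :=
      Finset.sum_nonneg fun y _ => by linarith [green_nonneg (Lam n) y y]
    have hKp : 0 < K := by linarith
    have hdom := Integrable.fintype_prod (ι := {x // x ∈ Lam n}) (μ := fun _ => (volume : Measure (Spin N)))
      (f := fun _ (v : Spin N) => Real.exp (-((1 / (2 * K)) * ‖v‖ ^ 2)))
      (fun _ => gauss_int N _ (by positivity))
    refine hdom.mono' ?_ (ae_of_all _ fun ω => ?_)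
    · exact (Real.continuous_exp.comp (((contB2 (BG n N)).const_mul _).neg)).measurable.aestronglyMeasurable
    · rw [Real.norm_eq_abs, abs_of_pos (Real.exp_pos _), ← Real.exp_sum]
      refine Real.exp_le_exp.2 ?_
      rw [Finset.sum_neg_distrib, ← Finset.mul_sum]
      have h1 : ∑ y, ‖ω y‖ ^ 2 ≤ K * BG n N ω ω := by
        calc _ ≤ ∑ y : {x // x ∈ Lam n}, (green (Lam n) (y : Site) y + 1) * BG n N ω ω :=
              Finset.sum_le_sum fun y _ => BG_self_ge ω y
          _ = (K - 1) * BG n N ω ω := by rw [← Finset.sum_mul, hK]; ring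
          _ ≤ _ := by nlinarith [BG_nonneg ω]
      have h2 : 1 / (2 * K) * ∑ y, ‖ω y‖ ^ 2 ≤ 1 / (2 * K) * (K * BG n N ω ω) := by gcongr
      have h3 : 1 / (2 * K) * (K * BG n N ω ω) = 1 / 2 * BG n N ω ω := by field_simp
      linarith

lemma dirEnergy_eq {n N : ℕ} (ω : CE n N) : dirEnergy n N (extZero n ω) = 1 / 2 * BG n N ω ω := by
  rw [BG_apply, dirEnergy]
  have h : ∀ i, bil (Lam n) (ef ω i) (ef ω i) = _ := fun i => (energy_bil n _ (ef_off ω i)).symm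
  simp only [h]
  rw [← Finset.mul_sum, Finset.sum_comm, ← mul_assoc]
  congr 1
  · ring
  · refine Finset.sum_congr rfl fun x _ => ?_
    rw [Finset.sum_add_distrib]
    congr 1
    all_goals
      rw [EuclideanSpace.norm_sq_eq]
      refine Finset.sum_congr rfl fun i _ => ?_
      rw [Real.norm_eq_abs, sq_abs]; rfl

lemma extZero_meas (n N : ℕ) : Measurable (extZero n : CE n N → Conf N) := by
  refine measurable_pi_iff.2 fun x => ?_
  by_cases hx : x ∈ Lam n
  · simpa [extZero, hx] using measurable_pi_apply (⟨x, hx⟩ : {x // x ∈ Lam n})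
  · simp [extZero, hx]

abbrev gE (n N : ℕ) : Measure (CE n N) := gd (nuE n N) (BG n N)

lemma gff_eq (n N : ℕ) : gff n N = (gE n N).map (extZero n) := by
  have h : gffAux n N = gd0 (nuE n N) (BG n N) := by
    rw [gffAux, gd0]
    simp only [dirEnergy_eq]
  rw [gff, h, gE, gd, Measure.map_smul]

/-- restriction of functions to the box -/
def rs (n N : ℕ) (g : Fin N → Site → ℝ) : CE n N := fun x => WithLp.toLp 2 fun i => g i x

lemma ef_rs {n N : ℕ} (g : Fin N → Site → ℝ) (hg : ∀ i, ∀ x ∉ Lam n, g i x = 0) (i : Fin N) :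
    ef (rs n N g) i = g i := by
  funext x
  by_cases hx : x ∈ Lam n
  · simp [ef, extZero, hx, rs]
  · rw [ef_off _ _ _ hx, hg i x hx]

end

section

/-! ### Harmonic extension -/

open ProbabilityTheory

def hv (N m : ℕ) (c : Site) (φ : Conf N) : Spin N := ∑ x ∈ sph c m, pw c m x • φ x

/-- evaluation as a continuous linear map -/
def evL (n N : ℕ) (x : Site) : CE n N →L[ℝ] Spin N :=
  LinearMap.toContinuousLinearMap
    { toFun := fun ω => extZero n ω x
      map_add' := fun ω η => by by_cases hx : x ∈ Lam n <;> simp [extZero, hx]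
      map_smul' := fun a ω => by by_cases hx : x ∈ Lam n <;> simp [extZero, hx] }

lemma evL_apply {n N : ℕ} (x : Site) (ω : CE n N) : evL n N x ω = extZero n ω x := rfl

def resL (n N m : ℕ) (c : Site) : CE n N →L[ℝ] CE n N :=
  LinearMap.toContinuousLinearMap
    { toFun := fun ω x => if (x : Site) ∈ inB c m then 0 else ω x
      map_add' := fun ω η => by funext x; by_cases hx : (x : Site) ∈ inB c m <;> simp [hx]
      map_smul' := fun a ω => by funext x; by_cases hx : (x : Site) ∈ inB c m <;> simp [hx] }

lemma resL_apply {n N m : ℕ} (c : Site) (ω : CE n N) (x : {x // x ∈ Lam n}) :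
    resL n N m c ω x = if (x : Site) ∈ inB c m then 0 else ω x := rfl

def difL (n N m : ℕ) (c : Site) : CE n N →L[ℝ] Spin N :=
  evL n N c - ∑ x ∈ sph c m, pw c m x • evL n N x

lemma difL_apply {n N m : ℕ} (c : Site) (ω : CE n N) :
    difL n N m c ω = extZero n ω c - hv N m c (extZero n ω) := by
  simp [difL, hv, evL_apply]

lemma difL_coord {n N m : ℕ} (hm : 1 ≤ m) {c : Site} (hB : bx c m ⊆ Lam n) (ω : CE n N) (i : Fin N) :
    difL n N m c ω i = bil (Lam n) (green (inB c m) c) (ef ω i) := by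
  rw [bil_greenB hm hB, difL_apply]
  simp [hv, ef]

lemma dual_euclid {N : ℕ} (L : Spin N →L[ℝ] ℝ) (v : Spin N) :
    L v = ∑ i, L (EuclideanSpace.single i 1) * v i := by
  conv_lhs => rw [← (EuclideanSpace.basisFun (Fin N) ℝ).sum_repr v]
  simp [mul_comm]

lemma dif_indep {n N m : ℕ} (hm : 1 ≤ m) {c : Site} (hB : bx c m ⊆ Lam n) :
    IndepFun (difL n N m c) (resL n N m c) (gE n N) := by
  have hG : IsGaussian (gE n N) := gd_gaussian (BG_good n N)
  refine HasGaussianLaw.indepFun_of_covariance_strongDual ?_ ?_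
  · exact (IsGaussian.hasGaussianLaw_id (μ := gE n N)).map ((difL n N m c).prod (resL n N m c))
  · intro L₁ L₂
    set f1 : CE n N := rs n N fun i x => L₁ (EuclideanSpace.single i 1) * green (inB c m) c x with hf1
    have hoff : ∀ i, ∀ x ∉ Lam n, L₁ (EuclideanSpace.single i 1) * green (inB c m) c x = 0 := by
      intro i x hx
      rw [green_off _ _ x (fun h => hx (hB (inB_sub c m h))), mul_zero]
    have e1 : (⇑L₁ ∘ ⇑(difL n N m c)) = fun ω => BG n N f1 ω := by
      funext ω
      simp only [Function.comp]
      rw [dual_euclid, BG_apply]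
      refine Finset.sum_congr rfl fun i _ => ?_
      rw [hf1, ef_rs _ hoff, difL_coord hm hB, bil_smul_left]
    obtain ⟨f2, hf2⟩ := gd_riesz (BG_good n N) (L₂.comp (resL n N m c))
    have e2 : (⇑L₂ ∘ ⇑(resL n N m c)) = fun ω => BG n N f2 ω := by
      funext ω; exact hf2 ω
    rw [e1, e2, gd_cov (BG_good n N), (BG_good n N).symm, ← hf2]
    have : resL n N m c f1 = 0 := by
      funext x
      rw [resL_apply]
      split_ifs with h
      · rfl
      · ext i
        simp [hf1, rs, green_off _ _ _ h]
    rw [ContinuousLinearMap.comp_apply, this, map_zero]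

lemma mGrid_le (N : ℕ) (K : Set Site) : mGrid N K ≤ (inferInstance : MeasurableSpace (Conf N)) := by
  have : Measurable (fun (φ : Conf N) (y : K) => φ y) :=
    measurable_pi_iff.2 fun y => measurable_pi_apply _
  exact this.comap_le

lemma hv_meas (N m : ℕ) (c : Site) : Measurable (hv N m c) := by
  unfold hv
  refine Finset.measurable_fun_sum _ fun x _ => ?_
  have h : Measurable fun φ : Conf N => φ x := measurable_pi_apply x
  exact h.const_smul (pw c m x)

lemma hv_smeas (N m : ℕ) (c : Site) (K : Set Site) (hK : ∀ x ∈ sph c m, x ∈ K) :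
    StronglyMeasurable[mGrid N K] (hv N m c) := by
  have hx : ∀ x ∈ K, Measurable[mGrid N K] (fun φ : Conf N => φ x) := by
    intro x hx
    have h1 : Measurable[mGrid N K] (fun (φ : Conf N) (y : K) => φ y) := comap_measurable _
    exact (measurable_pi_apply (⟨x, hx⟩ : K)).comp h1
  refine Measurable.stronglyMeasurable ?_
  unfold hv
  refine Finset.measurable_fun_sum _ fun x hxs => ?_
  have h := hx x (hK x hxs)
  exact h.const_smul (pw c m x)

lemma gff_prob (n N : ℕ) : IsProbabilityMeasure (gff n N) := by
  have := gd_prob (BG_good n N)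
  rw [gff_eq]
  exact Measure.isProbabilityMeasure_map (extZero_meas n N).aemeasurable

lemma harm_eq {n N m : ℕ} (hm : 1 ≤ m) {c : Site} (hB : bx c m ⊆ Lam n) (K : Set Site)
    (hK1 : ∀ x ∈ K, x ∉ inB c m) (hK2 : ∀ x ∈ sph c m, x ∈ K) :
    harmExt n N K c =ᵐ[gff n N] hv N m c := by
  have hPE := gd_prob (BG_good n N)
  have hG : IsGaussian (gE n N) := gd_gaussian (BG_good n N)
  have hP := gff_prob n N
  have hid : Integrable (fun ω : CE n N => ω) (gE n N) := IsGaussian.integrable_id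
  set A : Conf N → Spin N := fun ψ => ψ c - hv N m c ψ with hA
  have hAm : Measurable A := (measurable_pi_apply c).sub (hv_meas N m c)
  have hAe : ∀ ω, A (extZero n ω) = difL n N m c ω := fun ω => (difL_apply c ω).symm
  have hevi : ∀ x, Integrable (fun ψ : Conf N => ψ x) (gff n N) := by
    intro x
    rw [gff_eq, integrable_map_measure (measurable_pi_apply x).aestronglyMeasurable
      (extZero_meas n N).aemeasurable]
    exact (evL n N x).integrable_comp hid
  have hhvi : Integrable (hv N m c) (gff n N) := by
    unfold hv
    exact integrable_finsetSum _ fun x _ => (hevi x).smul (pw c m x)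
  have hAi : Integrable A (gff n N) := (hevi c).sub hhvi
  have hA0 : ∫ ψ, A ψ ∂(gff n N) = 0 := by
    rw [gff_eq, integral_map (extZero_meas n N).aemeasurable hAm.aestronglyMeasurable]
    simp only [hAe]
    rw [ContinuousLinearMap.integral_comp_comm _ hid, gd_mean (BG_good n N), map_zero]
  have hGm : Measurable (fun (φ : Conf N) (y : K) => φ y) :=
    measurable_pi_iff.2 fun y => measurable_pi_apply _
  have hind : IndepFun A (fun (φ : Conf N) (y : K) => φ y) (gff n N) := by
    rw [indepFun_iff_measure_inter_preimage_eq_mul]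
    intro s t hs ht
    have hdi := dif_indep (N := N) hm hB
    have hcomp : IndepFun (difL n N m c) (fun (ω : CE n N) (y : K) => extZero n ω y) (gE n N) := by
      have e : (fun (ω : CE n N) (y : K) => extZero n ω y) =
          (fun (ω : CE n N) (y : K) => extZero n ω y) ∘ (resL n N m c) := by
        funext ω y
        have hy := hK1 y y.2
        by_cases hx : (y : Site) ∈ Lam n <;> simp [extZero, hx, resL_apply, hy]
      rw [e]
      exact hdi.comp (φ := id) measurable_id (hGm.comp (extZero_meas n N))
    have := hcomp.measure_inter_preimage_eq_mul s t hs ht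
    rw [gff_eq, Measure.map_apply (extZero_meas n N) ((hAm hs).inter (hGm ht)),
      Measure.map_apply (extZero_meas n N) (hAm hs), Measure.map_apply (extZero_meas n N) (hGm ht)]
    have e1 : extZero n ⁻¹' (A ⁻¹' s) = (difL n N m c) ⁻¹' s := by
      ext ω; simp only [Set.mem_preimage, hAe]
    rw [Set.preimage_inter, e1]
    exact this
  have hcA : (gff n N)[A | mGrid N K] =ᵐ[gff n N] fun _ => 0 := by
    have h := condExp_indep_eq (m₁ := MeasurableSpace.comap A inferInstance) (m₂ := mGrid N K)
      (μ := gff n N) (f := A) hAm.comap_le (mGrid_le N K) (comap_measurable A).stronglyMeasurable hind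
    rw [hA0] at h
    exact h
  have hch : (gff n N)[hv N m c | mGrid N K] = hv N m c :=
    condExp_of_stronglyMeasurable (mGrid_le N K) (hv_smeas N m c K hK2) hhvi
  have hsplit : (fun ψ : Conf N => ψ c) = A + hv N m c := by
    funext ψ; simp [hA]
  unfold harmExt
  rw [hsplit]
  filter_upwards [condExp_add hAi hhvi (mGrid N K), hcA] with ψ h1 h2
  rw [h1, Pi.add_apply, h2, hch, zero_add]

/-- representation of `⟨γ, h_c⟩` by the bilinear form -/
def fvec (n N m : ℕ) (γ : Fin N → ℝ) (c : Site) : CE n N := rs n N fun i x => γ i * uf n m c x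

lemma fvec_apply {n N m : ℕ} (hm : 1 ≤ m) {c : Site} (hB : bx c m ⊆ Lam n) (γ : Fin N → ℝ) (ω : CE n N) :
    BG n N (fvec n N m γ c) ω = ∑ i, γ i * hv N m c (extZero n ω) i := by
  rw [BG_apply]
  refine Finset.sum_congr rfl fun i _ => ?_
  rw [fvec, ef_rs _ (fun i x hx => by rw [uf_off hB x hx, mul_zero]), bil_smul_left, bil_uf hm hB]
  simp [hv, ef]

lemma fvec_fvec {n N m : ℕ} {c c' : Site} (hB : bx c m ⊆ Lam n) (hB' : bx c' m ⊆ Lam n)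
    (γ γ' : Fin N → ℝ) :
    BG n N (fvec n N m γ c) (fvec n N m γ' c') = (∑ i, γ i * γ' i) * bil (Lam n) (uf n m c) (uf n m c') := by
  rw [BG_apply, Finset.sum_mul]
  refine Finset.sum_congr rfl fun i _ => ?_
  rw [fvec, fvec, ef_rs _ (fun i x hx => by rw [uf_off hB x hx, mul_zero]),
    ef_rs _ (fun i x hx => by rw [uf_off hB' x hx, mul_zero]), bil_smul_left, bil_smul_right, mul_assoc]

lemma fvec_add (n N m : ℕ) (γ γ' : Fin N → ℝ) (c c' : Site) (ω : CE n N) :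
    BG n N (fvec n N m γ c + fvec n N m γ' c') ω = BG n N (fvec n N m γ c) ω + BG n N (fvec n N m γ' c') ω := by
  simp

end

section

/-! ### Abstract probabilistic argument -/

open ProbabilityTheory

set_option linter.unusedSectionVars false

lemma pz {Ω : Type*} [MeasurableSpace Ω] {μ : Measure Ω} [IsProbabilityMeasure μ] {Z : Ω → ℝ}
    (hm : Measurable Z) (h0 : ∀ x, 0 ≤ Z x) (h1 : Integrable Z μ) (h2 : Integrable (fun x => Z x ^ 2) μ)
    (hp : 0 < ∫ x, Z x ∂μ) (K : ℝ) (hK : 0 < K) (hle : ∫ x, Z x ^ 2 ∂μ ≤ K * (∫ x, Z x ∂μ) ^ 2) :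
    1 / (4 * K) ≤ μ.real {x | (∫ x, Z x ∂μ) / 2 ≤ Z x} := by
  set a := ∫ x, Z x ∂μ with ha
  set u := 2 * K * a with hu
  have hup : 0 < u := by positivity
  set A := {x | a / 2 ≤ Z x} with hA
  have hAm : MeasurableSet A := measurableSet_le measurable_const hm
  have hpt : ∀ x, Z x - a / 2 ≤ Z x ^ 2 / (2 * u) + (u / 2) * A.indicator 1 x := by
    intro x
    have hq : 0 ≤ Z x ^ 2 / (2 * u) := by positivity
    by_cases hx : x ∈ A
    · rw [Set.indicator_of_mem hx]
      have : Z x ≤ Z x ^ 2 / (2 * u) + u / 2 := by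
        rw [← sub_nonneg]
        have : Z x ^ 2 / (2 * u) + u / 2 - Z x = (Z x - u) ^ 2 / (2 * u) := by field_simp; ring
        rw [this]; positivity
      simp only [Pi.one_apply]
      linarith
    · rw [Set.indicator_of_notMem hx]
      have : Z x < a / 2 := by simpa [hA] using hx
      linarith
  have hi1 : Integrable (A.indicator (1 : Ω → ℝ)) μ := (integrable_const (1:ℝ)).indicator hAm
  have hint := integral_mono (h1.sub (integrable_const (a / 2)))
    ((h2.div_const (2 * u)).add (hi1.const_mul (u / 2))) hpt
  simp only [Pi.sub_apply, Pi.add_apply] at hint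
  rw [integral_sub h1 (integrable_const _), integral_add (h2.div_const _) (hi1.const_mul _),
    integral_const_mul, integral_indicator_one hAm] at hint
  simp only [integral_const, probReal_univ, smul_eq_mul, one_mul] at hint
  rw [← ha] at hint
  have h30 : ∫ x, Z x ^ 2 / (2 * u) ∂μ = (∫ x, Z x ^ 2 ∂μ) / (2 * u) := integral_div _ _
  have h3 : (∫ x, Z x ^ 2 ∂μ) / (2 * u) ≤ K * a ^ 2 / (2 * u) := by gcongr
  have h4 : K * a ^ 2 / (2 * u) = a / 4 := by rw [hu]; field_simp; norm_num
  have h5 : a / 4 ≤ u / 2 * μ.real A := by linarith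
  rw [hu] at h5
  rw [div_le_iff₀ (by positivity)]
  nlinarith

section mainprob

variable {E : Type*} [NormedAddCommGroup E] [NormedSpace ℝ E] [FiniteDimensional ℝ E]
  [MeasurableSpace E] [BorelSpace E] {ν : Measure E} [ν.IsAddHaarMeasure] {B : E →ₗ[ℝ] E →ₗ[ℝ] ℝ}

variable {κ : Type*} {S : Finset κ} {f : κ → E}

lemma lse_int (hB : GoodForm ν B) : Integrable (lse B S f) (gd ν B) := by
  unfold lse
  exact integrable_finsetSum _ fun c _ => gd_mgf_int hB _

lemma lse_mean (hB : GoodForm ν B) :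
    ∫ x, lse B S f x ∂(gd ν B) = ∑ c ∈ S, Real.exp ((1 / 2) * B (f c) (f c)) := by
  unfold lse
  rw [integral_finsetSum _ fun c _ => gd_mgf_int hB _]
  simp only [gd_mgf hB]

lemma lse_sq (x : E) : lse B S f x ^ 2 = ∑ c ∈ S, ∑ c' ∈ S, Real.exp (B (f c + f c') x) := by
  unfold lse
  rw [sq, Finset.sum_mul_sum]
  refine Finset.sum_congr rfl fun c _ => Finset.sum_congr rfl fun c' _ => ?_
  rw [← Real.exp_add]; simp

lemma lse_sq_int (hB : GoodForm ν B) : Integrable (fun x => lse B S f x ^ 2) (gd ν B) := by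
  simp only [lse_sq]
  exact integrable_finsetSum _ fun c _ => integrable_finsetSum _ fun c' _ => gd_mgf_int hB _

lemma lse_sq_mean (hB : GoodForm ν B) :
    ∫ x, lse B S f x ^ 2 ∂(gd ν B) = ∑ c ∈ S, ∑ c' ∈ S,
      Real.exp ((1 / 2) * B (f c) (f c) + (1 / 2) * B (f c') (f c') + B (f c) (f c')) := by
  simp only [lse_sq]
  rw [integral_finsetSum _ fun c _ => integrable_finsetSum _ fun c' _ => gd_mgf_int hB _]
  refine Finset.sum_congr rfl fun c _ => ?_
  rw [integral_finsetSum _ fun c' _ => gd_mgf_int hB _]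
  refine Finset.sum_congr rfl fun c' _ => ?_
  rw [gd_mgf hB]
  congr 1
  simp only [map_add, LinearMap.add_apply]
  rw [hB.symm (f c') (f c)]; ring

/-- lower bound for the partition function -/
lemma low_Z (hB : GoodForm ν B) (hS : S.Nonempty) {L w η η' : ℝ} (hL : 0 < L) (hη : 0 < η) (hη' : 0 < η')
    (hηη : 100 * η ≤ η' ^ 2) (hη1 : η ≤ 1) (hw : w ≤ 2)
    (hlo : ∀ c ∈ S, (w - η) * L ≤ B (f c) (f c)) (hup : ∀ c ∈ S, B (f c) (f c) ≤ (w + η) * L)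
    (hsum : ∑ c ∈ S, ∑ c' ∈ S, Real.exp (B (f c) (f c')) ≤ (S.card : ℝ) ^ 2 * Real.exp (η * L)) :
    gd ν B {x | lse B S f x ≤ (1 / 2) * S.card * Real.exp ((w / 2 - η - η') * L)} ≤
      ENNReal.ofReal (4 * Real.exp (-(η' ^ 2 / 100) * L)) := by
  have hP := gd_prob hB
  set a := ∫ x, lse B S f x ∂(gd ν B) with ha
  have hM : (0:ℝ) < S.card := by exact_mod_cast hS.card_pos
  have ha1 : (S.card : ℝ) * Real.exp ((w / 2 - η / 2) * L) ≤ a := by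
    rw [ha, lse_mean hB, ← nsmul_eq_mul]
    refine Finset.card_nsmul_le_sum _ _ _ fun c hc => Real.exp_le_exp.2 ?_
    have := hlo c hc
    linarith
  have hap : 0 < a := lt_of_lt_of_le (by positivity) ha1
  have hm2 : ∫ x, lse B S f x ^ 2 ∂(gd ν B) ≤ Real.exp (3 * η * L) * a ^ 2 := by
    rw [lse_sq_mean hB]
    calc _ ≤ ∑ c ∈ S, ∑ c' ∈ S, Real.exp ((w + η) * L) * Real.exp (B (f c) (f c')) := by
          refine Finset.sum_le_sum fun c hc => Finset.sum_le_sum fun c' hc' => ?_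
          rw [← Real.exp_add]
          refine Real.exp_le_exp.2 ?_
          linarith [hup c hc, hup c' hc']
      _ = Real.exp ((w + η) * L) * ∑ c ∈ S, ∑ c' ∈ S, Real.exp (B (f c) (f c')) := by
          simp only [Finset.mul_sum]
      _ ≤ Real.exp ((w + η) * L) * ((S.card : ℝ) ^ 2 * Real.exp (η * L)) := by gcongr
      _ = Real.exp (3 * η * L) * ((S.card : ℝ) * Real.exp ((w / 2 - η / 2) * L)) ^ 2 := by
          rw [mul_pow, ← Real.exp_nat_mul]
          have e : Real.exp ((w + η) * L) * Real.exp (η * L) =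
            Real.exp (3 * η * L) * Real.exp ((2:ℕ) * ((w / 2 - η / 2) * L)) := by
            rw [← Real.exp_add, ← Real.exp_add]; congr 1; push_cast; ring
          linear_combination ((S.card : ℝ) ^ 2) * e
      _ ≤ _ := by gcongr
  have hpz := pz (lse_cont (B := B) (S := S) (f := f)).measurable (fun x => (lse_pos hS x).le)
    (lse_int hB) (lse_sq_int hB) hap _ (Real.exp_pos _) hm2
  rw [← ha] at hpz
  have hset : {x | a / 2 ≤ lse B S f x} ⊆ {x | Real.log (a / 2) ≤ Real.log (lse B S f x)} := by
    intro x hx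
    exact Real.log_le_log (by positivity) hx
  have hset2 : {x | lse B S f x ≤ (1 / 2) * S.card * Real.exp ((w / 2 - η - η') * L)} ⊆
      {x | Real.log (lse B S f x) ≤ Real.log (a / 2) - η' * L} := by
    intro x hx
    simp only [Set.mem_ofPred_eq] at hx ⊢
    rw [Real.log_le_iff_le_exp (lse_pos hS x), Real.exp_sub, Real.exp_log (by positivity), le_div_iff₀ (Real.exp_pos _)]
    calc _ ≤ (1 / 2) * S.card * Real.exp ((w / 2 - η - η') * L) * Real.exp (η' * L) := by gcongr
      _ = (1 / 2) * (S.card * Real.exp ((w / 2 - η) * L)) := by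
          rw [mul_assoc, ← Real.exp_add]
          have : (w / 2 - η - η') * L + η' * L = (w / 2 - η) * L := by ring
          rw [this]; ring
      _ ≤ (1 / 2) * (S.card * Real.exp ((w / 2 - η / 2) * L)) := by gcongr; linarith
      _ ≤ _ := by linarith
  refine (measure_mono hset2).trans ?_
  have hc := conc hB hS ((w + η) * L) hup (η' / 10) (by positivity) (Real.log (a / 2) - η' * L) (Real.log (a / 2))
  set P1 := gd ν B {x | Real.log (lse B S f x) ≤ Real.log (a / 2) - η' * L}
  have hP2 : ENNReal.ofReal (1 / (4 * Real.exp (3 * η * L))) ≤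
      gd ν B {x | Real.log (a / 2) ≤ Real.log (lse B S f x)} := by
    refine le_trans ?_ (measure_mono hset)
    rw [← ofReal_measureReal]
    exact ENNReal.ofReal_le_ofReal hpz
  have h3 : P1 * ENNReal.ofReal (1 / (4 * Real.exp (3 * η * L))) ≤ _ := (mul_le_mul' le_rfl hP2).trans hc
  have hK : 0 < 4 * Real.exp (3 * η * L) := by positivity
  calc P1 = P1 * ENNReal.ofReal (1 / (4 * Real.exp (3 * η * L))) * ENNReal.ofReal (4 * Real.exp (3 * η * L)) := by
        rw [mul_assoc, ← ENNReal.ofReal_mul (by positivity), one_div, inv_mul_cancel₀ hK.ne', ENNReal.ofReal_one, mul_one]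
    _ ≤ _ := mul_le_mul' h3 le_rfl
    _ ≤ _ := by
        rw [← ENNReal.ofReal_mul (Real.exp_pos _).le]
        refine ENNReal.ofReal_le_ofReal ?_
        rw [mul_left_comm, ← Real.exp_add]
        gcongr
        have hpi : π ^ 2 ≤ 10 := by
          have := Real.pi_lt_d2; have := Real.pi_pos; nlinarith
        have hwη : w + η ≤ 3 := by linarith
        have : π ^ 2 * (w + η) ≤ 30 := by
          have := sq_nonneg π
          nlinarith
        have e : (η' / 10) ^ 2 * π ^ 2 * ((w + η) * L) / 8 = (η' ^ 2 * L / 800) * (π ^ 2 * (w + η)) := by ring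
        have h5 : (η' ^ 2 * L / 800) * (π ^ 2 * (w + η)) ≤ (η' ^ 2 * L / 800) * 30 := by gcongr
        rw [e]
        have h6 : 3 * η * L ≤ 3 * (η' ^ 2 / 100) * L := by gcongr; linarith
        nlinarith [mul_pos (pow_pos hη' 2) hL]

/-- Markov bound -/
lemma up_Z (hB : GoodForm ν B) (V : ℝ) (hV : ∀ c ∈ S, B (f c) (f c) ≤ V) (θ : ℝ) (hθ : 0 < θ) :
    gd ν B {x | θ ≤ lse B S f x} ≤ ENNReal.ofReal (S.card * Real.exp (V / 2) / θ) := by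
  have hP := gd_prob hB
  rw [← ofReal_measureReal]
  refine ENNReal.ofReal_le_ofReal ?_
  have h := mul_meas_ge_le_integral_of_nonneg (μ := gd ν B) (f := lse B S f)
    (ae_of_all _ fun x => Finset.sum_nonneg fun _ _ => (Real.exp_pos _).le) (lse_int hB) θ
  rw [le_div_iff₀ hθ, mul_comm]
  refine h.trans ?_
  rw [lse_mean hB, ← nsmul_eq_mul]
  exact Finset.sum_le_card_nsmul _ _ _ fun c hc => Real.exp_le_exp.2 (by linarith [hV c hc])

end mainprob

end

section

/-! ### Counting -/

open ProbabilityTheory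

set_option linter.unusedSectionVars false

section countprob

variable {E : Type*} [NormedAddCommGroup E] [NormedSpace ℝ E] [FiniteDimensional ℝ E]
  [MeasurableSpace E] [BorelSpace E] {ν : Measure E} [ν.IsAddHaarMeasure] {B : E →ₗ[ℝ] E →ₗ[ℝ] ℝ}

variable {κ : Type*} {S : Finset κ} {N : ℕ}

def tilt (γ : Fin N → ℝ) (t : ℝ) (i : Fin N) : Fin N → ℝ := fun j => γ j + if j = i then t else 0

lemma tilt_lin (γ : Fin N → ℝ) (t : ℝ) (i : Fin N) (h : Fin N → ℝ) :
    ∑ j, tilt γ t i j * h j = ∑ j, γ j * h j + t * h i := by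
  simp [tilt, add_mul, Finset.sum_add_distrib]

lemma tilt_sq (γ : Fin N → ℝ) (t : ℝ) (i : Fin N) :
    ∑ j, tilt γ t i j * tilt γ t i j = ∑ j, γ j * γ j + 2 * t * γ i + t ^ 2 := by
  rw [tilt_lin]
  have : ∑ j, γ j * tilt γ t i j = ∑ j, γ j * γ j + t * γ i := by
    rw [← tilt_lin γ t i γ]; exact Finset.sum_congr rfl fun j _ => mul_comm _ _
  rw [this]; simp [tilt]; ring

lemma up_tilt (hB : GoodForm ν B) (hS : S.Nonempty) {G : κ → κ → ℝ} {F : (Fin N → ℝ) → κ → E}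
    (hFF : ∀ γ γ' : Fin N → ℝ, ∀ c ∈ S, ∀ c' ∈ S, B (F γ c) (F γ' c') = (∑ i, γ i * γ' i) * G c c')
    {L v δ η η' : ℝ} (hN : 0 < N) (hL : 0 < L) (hv2 : v ≤ 2) (hδ : 0 < δ) (hδ1 : δ ≤ 1)
    (hη' : η' = δ ^ 2 / 16) (hη0 : 0 ≤ η) (hη : η ≤ η' ^ 2 / 100)
    (hG2 : ∀ c ∈ S, G c c ≤ (v + η) * L)
    {γ : Fin N → ℝ} (hγ0 : ∀ i, 0 ≤ γ i) (hγ1 : ∑ i, γ i * γ i ≤ 1) (i : Fin N) (σ : ℝ) (hσ : σ ^ 2 = 1) :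
    gd ν B {x | S.card * Real.exp (((∑ i, γ i * γ i) * v / 2 - η - η' + δ / 2 * (σ * (v * γ i) + δ)) * L) / (8 * N)
      ≤ lse B S (F (tilt γ (σ * (δ / 2)) i)) x} ≤ ENNReal.ofReal (8 * N * Real.exp (-(δ ^ 2 / 16) * L)) := by
  have hM : (0:ℝ) < S.card := by exact_mod_cast hS.card_pos
  have hN' : (0:ℝ) < N := by exact_mod_cast hN
  set g := ∑ i, γ i * γ i with hg
  have hg0 : 0 ≤ g := Finset.sum_nonneg fun i _ => mul_self_nonneg _
  have hγi : γ i ≤ 1 := by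
    have : γ i * γ i ≤ g := Finset.single_le_sum (f := fun i => γ i * γ i) (fun i _ => mul_self_nonneg _) (Finset.mem_univ i)
    nlinarith [hγ0 i]
  have hσ1 : |σ| = 1 := by
    rw [← Real.sqrt_sq_eq_abs, hσ, Real.sqrt_one]
  have hσγ : σ * γ i ≤ 1 := by
    calc σ * γ i ≤ |σ * γ i| := le_abs_self _
      _ = γ i := by rw [abs_mul, hσ1, one_mul, abs_of_nonneg (hγ0 i)]
      _ ≤ 1 := hγi
  set Q := g + 2 * (σ * (δ / 2)) * γ i + (σ * (δ / 2)) ^ 2 with hQ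
  have hQe : ∑ j, tilt γ (σ * (δ / 2)) i j * tilt γ (σ * (δ / 2)) i j = Q := tilt_sq _ _ _
  have hQ0 : 0 ≤ Q := by rw [← hQe]; exact Finset.sum_nonneg fun i _ => mul_self_nonneg _
  have hQ' : Q = g + δ * (σ * γ i) + δ ^ 2 / 4 := by
    rw [hQ]; linear_combination (δ ^ 2 / 4) * hσ
  have hQ4 : Q ≤ 4 := by
    rw [hQ']; nlinarith
  refine (up_Z hB (Q * ((v + η) * L)) (fun c hc => ?_) _ (by positivity)).trans (ENNReal.ofReal_le_ofReal ?_)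
  · rw [hFF _ _ c hc c hc, hQe]
    exact mul_le_mul_of_nonneg_left (hG2 c hc) hQ0
  · set X := (g * v / 2 - η - η' + δ / 2 * (σ * (v * γ i) + δ)) * L with hX
    have e : (S.card : ℝ) * Real.exp (Q * ((v + η) * L) / 2) / (S.card * Real.exp X / (8 * N)) =
        8 * N * Real.exp (Q * ((v + η) * L) / 2 - X) := by
      rw [Real.exp_sub]; field_simp
    rw [e]
    gcongr
    have e2 : Q * ((v + η) * L) / 2 - X = (δ ^ 2 / 8 * v - δ ^ 2 / 2 + η + η' + Q * η / 2) * L := by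
      rw [hX, hQ']; ring
    rw [e2]
    refine mul_le_mul_of_nonneg_right ?_ hL.le
    have h1 : Q * η ≤ 4 * η := by gcongr
    have h2 : δ ^ 2 / 8 * v ≤ δ ^ 2 / 8 * 2 := by gcongr
    have hd : 0 < δ ^ 2 := by positivity
    have hd1 : δ ^ 2 ≤ 1 := by nlinarith
    have h3 : η ≤ δ ^ 2 / 100 := by
      rw [hη'] at hη; nlinarith
    rw [hη']
    nlinarith

lemma count_low (hB : GoodForm ν B) (hS : S.Nonempty) {G : κ → κ → ℝ} {F : (Fin N → ℝ) → κ → E}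
    {H : κ → E → Fin N → ℝ}
    (hF : ∀ γ : Fin N → ℝ, ∀ c ∈ S, ∀ x, B (F γ c) x = ∑ i, γ i * H c x i)
    (hFF : ∀ γ γ' : Fin N → ℝ, ∀ c ∈ S, ∀ c' ∈ S, B (F γ c) (F γ' c') = (∑ i, γ i * γ' i) * G c c')
    {L v δ η η' : ℝ} (hN : 0 < N) (hL : 0 < L) (hv0 : 0 ≤ v) (hv2 : v ≤ 2) (hδ : 0 < δ) (hδ1 : δ ≤ 1)
    (hη' : η' = δ ^ 2 / 16) (hη0 : 0 < η) (hη : η ≤ η' ^ 2 / 100)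
    (hG1 : ∀ c ∈ S, (v - η) * L ≤ G c c) (hG2 : ∀ c ∈ S, G c c ≤ (v + η) * L)
    {γ : Fin N → ℝ} (hγ0 : ∀ i, 0 ≤ γ i) (hγ1 : ∑ i, γ i * γ i ≤ 1)
    (hsum : ∑ c ∈ S, ∑ c' ∈ S, Real.exp ((∑ i, γ i * γ i) * G c c') ≤ (S.card : ℝ) ^ 2 * Real.exp (η * L)) :
    gd ν B {x | ((S.filter fun c => ∀ i, (v * γ i - δ) * L < H c x i ∧ H c x i < (v * γ i + δ) * L).card : ℝ) ≤
      (1 / 4) * S.card * Real.exp ((-(v / 2) - η - η' - N * δ) * L)} ≤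
      ENNReal.ofReal (4 * Real.exp (-(η' ^ 2 / 100) * L)) +
        ∑ _i : Fin N, (ENNReal.ofReal (8 * N * Real.exp (-(δ ^ 2 / 16) * L)) +
          ENNReal.ofReal (8 * N * Real.exp (-(δ ^ 2 / 16) * L))) := by
  have hM : (0:ℝ) < S.card := by exact_mod_cast hS.card_pos
  have hN' : (0:ℝ) < N := by exact_mod_cast hN
  have hup := fun i σ hσ => up_tilt hB hS hFF hN hL hv2 hδ hδ1 hη' hη0.le hη hG2 hγ0 hγ1 i σ hσ
  set g := ∑ i, γ i * γ i with hg
  have hg0 : 0 ≤ g := Finset.sum_nonneg fun i _ => mul_self_nonneg _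
  have hγi : ∀ i, γ i ≤ 1 := by
    intro i
    have : γ i * γ i ≤ g := Finset.single_le_sum (f := fun i => γ i * γ i) (fun i _ => mul_self_nonneg _) (Finset.mem_univ i)
    nlinarith [hγ0 i]
  have hη'0 : 0 < η' := by rw [hη']; positivity
  have hη'1 : η' ≤ 1 := by rw [hη']; nlinarith
  have hlow := low_Z (f := F γ) hB hS (w := g * v) (η := η) (η' := η') hL hη0 hη'0 (by linarith) (by nlinarith)
    (by nlinarith) (fun c hc => by
      rw [hFF _ _ c hc c hc, ← hg]
      have := mul_le_mul_of_nonneg_left (hG1 c hc) hg0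
      have : g * η * L ≤ 1 * η * L := by gcongr
      nlinarith) (fun c hc => by
      rw [hFF _ _ c hc c hc, ← hg]
      have := mul_le_mul_of_nonneg_left (hG2 c hc) hg0
      have : g * η * L ≤ 1 * η * L := by gcongr
      nlinarith) (by
      refine le_trans (le_of_eq ?_) hsum
      exact Finset.sum_congr rfl fun c hc => Finset.sum_congr rfl fun c' hc' => by rw [hFF _ _ c hc c' hc'])
  set A := {x | lse B S (F γ) x ≤ (1 / 2) * S.card * Real.exp ((g * v / 2 - η - η') * L)} with hA
  set T : ℝ → Fin N → Set E := fun σ i => {x | S.card * Real.exp ((g * v / 2 - η - η' + δ / 2 * (σ * (v * γ i) + δ)) * L) / (8 * N)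
      ≤ lse B S (F (tilt γ (σ * (δ / 2)) i)) x} with hT
  refine (measure_mono (t := A ∪ ⋃ i, (T 1 i ∪ T (-1) i)) ?_).trans ?_
  swap
  · refine (measure_union_le _ _).trans (add_le_add hlow ?_)
    refine (measure_iUnion_fintype_le _ _).trans (Finset.sum_le_sum fun i _ => ?_)
    exact (measure_union_le _ _).trans (add_le_add (hup i 1 (by norm_num)) (hup i (-1) (by norm_num)))
  intro x hx
  by_contra hbad
  simp only [Set.mem_union, Set.mem_iUnion, not_or, not_exists] at hbad
  obtain ⟨hA', hT'⟩ := hbad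
  simp only [hA, hT, Set.mem_ofPred_eq, not_le] at hA' hT' hx
  set W := (S.card : ℝ) * Real.exp ((g * v / 2 - η - η') * L) with hW
  have hWp : 0 < W := by positivity
  set O : ℝ → Fin N → ℝ := fun σ i => Real.exp (-(δ / 2 * (σ * (v * γ i) + δ)) * L) *
    lse B S (F (tilt γ (σ * (δ / 2)) i)) x with hO
  have hOb : ∀ σ i, lse B S (F (tilt γ (σ * (δ / 2)) i)) x < S.card * Real.exp ((g * v / 2 - η - η' + δ / 2 * (σ * (v * γ i) + δ)) * L) / (8 * N) →
      O σ i ≤ W / (8 * N) := by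
    intro σ i h
    calc O σ i ≤ Real.exp (-(δ / 2 * (σ * (v * γ i) + δ)) * L) * (S.card * Real.exp ((g * v / 2 - η - η' + δ / 2 * (σ * (v * γ i) + δ)) * L) / (8 * N)) := by
          simp only [hO]; gcongr
      _ = S.card * (Real.exp (-(δ / 2 * (σ * (v * γ i) + δ)) * L) * Real.exp ((g * v / 2 - η - η' + δ / 2 * (σ * (v * γ i) + δ)) * L)) / (8 * N) := by ring
      _ = _ := by
          rw [← Real.exp_add, hW]; congr 3; ring_nf
  set Gd := S.filter fun c => ∀ i, (v * γ i - δ) * L < H c x i ∧ H c x i < (v * γ i + δ) * L with hGd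
  have hZ : lse B S (F γ) x ≤ Gd.card * Real.exp ((g * v + N * δ) * L) + ∑ i, (O 1 i + O (-1) i) := by
    have hOs : ∑ i, (O 1 i + O (-1) i) = ∑ c ∈ S, ∑ i, (
        Real.exp (-(δ / 2 * (1 * (v * γ i) + δ)) * L) * Real.exp (B (F (tilt γ (1 * (δ / 2)) i) c) x) +
        Real.exp (-(δ / 2 * ((-1) * (v * γ i) + δ)) * L) * Real.exp (B (F (tilt γ ((-1) * (δ / 2)) i) c) x)) := by
      rw [Finset.sum_comm]
      refine Finset.sum_congr rfl fun i _ => ?_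
      rw [Finset.sum_add_distrib, ← Finset.mul_sum, ← Finset.mul_sum]; rfl
    have hGs : (Gd.card : ℝ) * Real.exp ((g * v + N * δ) * L) =
        ∑ c ∈ S, if (∀ i, (v * γ i - δ) * L < H c x i ∧ H c x i < (v * γ i + δ) * L) then Real.exp ((g * v + N * δ) * L) else 0 := by
      rw [← Finset.sum_filter, Finset.sum_const, nsmul_eq_mul]
    rw [hOs, hGs, ← Finset.sum_add_distrib]
    refine Finset.sum_le_sum fun c hc => ?_
    have hterm : ∀ i σ, Real.exp (-(δ / 2 * (σ * (v * γ i) + δ)) * L) * Real.exp (B (F (tilt γ (σ * (δ / 2)) i) c) x) =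
        Real.exp (B (F γ c) x + δ / 2 * (σ * H c x i - (σ * (v * γ i) + δ) * L)) := by
      intro i σ
      rw [← Real.exp_add, hF _ c hc, hF _ c hc, tilt_lin]; congr 1; ring
    simp only [hterm]
    split_ifs with hgood
    · have : Real.exp (B (F γ c) x) ≤ Real.exp ((g * v + N * δ) * L) := by
        refine Real.exp_le_exp.2 ?_
        rw [hF _ c hc]
        calc ∑ i, γ i * H c x i ≤ ∑ i, (γ i * γ i * v + δ) * L := by
              refine Finset.sum_le_sum fun i _ => ?_
              have h1 := mul_le_mul_of_nonneg_left (hgood i).2.le (hγ0 i)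
              have h2 : γ i * (δ * L) ≤ 1 * (δ * L) := by gcongr; exact hγi i
              nlinarith
          _ = _ := by rw [← Finset.sum_mul, Finset.sum_add_distrib, ← Finset.sum_mul]; simp [hg]
      have : 0 ≤ ∑ i, (Real.exp (B (F γ c) x + δ / 2 * (1 * H c x i - (1 * (v * γ i) + δ) * L)) +
        Real.exp (B (F γ c) x + δ / 2 * ((-1) * H c x i - ((-1) * (v * γ i) + δ) * L))) := by positivity
      linarith
    · push Not at hgood
      obtain ⟨i, hi⟩ := hgood
      rw [zero_add]
      refine le_trans ?_ (Finset.single_le_sum (f := fun i => (Real.exp (B (F γ c) x + δ / 2 * (1 * H c x i - (1 * (v * γ i) + δ) * L)) +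
        Real.exp (B (F γ c) x + δ / 2 * ((-1) * H c x i - ((-1) * (v * γ i) + δ) * L)))) (fun i _ => by positivity) (Finset.mem_univ i))
      by_cases h : (v * γ i - δ) * L < H c x i
      · have h2 := hi h
        have : Real.exp (B (F γ c) x) ≤ Real.exp (B (F γ c) x + δ / 2 * (1 * H c x i - (1 * (v * γ i) + δ) * L)) := by
          refine Real.exp_le_exp.2 ?_
          have : 0 ≤ δ / 2 * (1 * H c x i - (1 * (v * γ i) + δ) * L) := by
            apply mul_nonneg (by positivity); linarith
          linarith
        have := Real.exp_pos (B (F γ c) x + δ / 2 * ((-1) * H c x i - ((-1) * (v * γ i) + δ) * L))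
        linarith
      · have h2 := not_lt.1 h
        have : Real.exp (B (F γ c) x) ≤ Real.exp (B (F γ c) x + δ / 2 * ((-1) * H c x i - ((-1) * (v * γ i) + δ) * L)) := by
          refine Real.exp_le_exp.2 ?_
          have : 0 ≤ δ / 2 * ((-1) * H c x i - ((-1) * (v * γ i) + δ) * L) := by
            apply mul_nonneg (by positivity); linarith
          linarith
        have := Real.exp_pos (B (F γ c) x + δ / 2 * (1 * H c x i - (1 * (v * γ i) + δ) * L))
        linarith
  have hOsum : ∑ i, (O 1 i + O (-1) i) ≤ W / 4 := by
    calc _ ≤ ∑ _i : Fin N, (W / (8 * N) + W / (8 * N)) :=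
          Finset.sum_le_sum fun i _ => add_le_add (hOb 1 i (hT' i).1) (hOb (-1) i (hT' i).2)
      _ = W / 4 := by simp; field_simp; norm_num
  have hA2 : W / 2 < lse B S (F γ) x := by rw [hW]; linarith
  have hcard : (Gd.card : ℝ) * Real.exp ((g * v + N * δ) * L) ≤ W / 4 := by
    calc _ ≤ (1 / 4) * S.card * Real.exp ((-(v / 2) - η - η' - N * δ) * L) * Real.exp ((g * v + N * δ) * L) := by gcongr
      _ = (1 / 4) * S.card * Real.exp ((g * v - v / 2 - η - η') * L) := by
          rw [mul_assoc, ← Real.exp_add]; congr 2; ring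
      _ ≤ (1 / 4) * S.card * Real.exp ((g * v / 2 - η - η') * L) := by
          gcongr; nlinarith
      _ = _ := by rw [hW]; ring
  linarith

end countprob

end

section

/-! ### Geometry of the grid -/

lemma odd_sep {m x k k' : ℤ} (hm : 0 < m) (h : |x - k' * (2 * m)| = m) : ¬ |x - k * (2 * m)| < m := by
  intro h2
  rw [abs_lt] at h2
  rcases (abs_eq hm.le).1 h with h1 | h1
  · rcases le_or_gt k k' with hk | hk
    · nlinarith
    · have : k' + 1 ≤ k := hk
      nlinarith
  · rcases lt_or_ge k k' with hk | hk
    · have : k + 1 ≤ k' := hk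
      nlinarith
    · nlinarith

lemma mem_sph {c x : Site} {m : ℕ} (hm : 1 ≤ m) : x ∈ sph c m ↔ (|x.1 - c.1| ≤ (m:ℤ) ∧ |x.2 - c.2| ≤ (m:ℤ)) ∧
    (|x.1 - c.1| = (m:ℤ) ∨ |x.2 - c.2| = (m:ℤ)) := by
  rw [sph, Finset.mem_sdiff, mem_bx, mem_inB]
  omega

lemma sph_sep {m : ℕ} (hm : 1 ≤ m) {k l k' l' : ℤ} {x : Site}
    (hx : x ∈ sph ((k' * (2 * m), l' * (2 * m)) : Site) m) : x ∉ inB ((k * (2 * m), l * (2 * m)) : Site) m := by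
  rw [mem_sph hm] at hx
  rw [mem_inB]
  rintro ⟨h1, h2⟩
  have hm' : (0:ℤ) < m := by exact_mod_cast hm
  rcases hx.2 with h | h
  · exact odd_sep hm' h h1
  · exact odd_sep hm' h h2

lemma box_eq {a : ℤ} {m : ℕ} (ha : a = 2 * m) {c x : Site} : x ∈ boxAt a c ↔ x ∈ bx c m := by
  rw [mem_bx, boxAt, Set.mem_ofPred_eq, ha]; omega

lemma bdry_eq {a : ℤ} {m : ℕ} (hm : 1 ≤ m) (ha : a = 2 * m) {c x : Site} : x ∈ innerBdryAt a c ↔ x ∈ sph c m := by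
  rw [innerBdryAt, Set.mem_ofPred_eq, box_eq ha, mem_bx, mem_sph hm, ha]; omega

def cset (D : Set (ℝ × ℝ)) (n : ℕ) (α ρ : ℝ) : Finset Site :=
  (centersF D n α (0, 0)).filter (fun c => boxAt (evenSide n α) c ⊆ latBall ρ)

lemma cen_form {D : Set (ℝ × ℝ)} {n m : ℕ} {α : ℝ} (ha : evenSide n α = 2 * m) {c : Site}
    (hc : c ∈ centersF D n α (0, 0)) : ∃ k l : ℤ, c = (k * (2 * m), l * (2 * m)) := by
  rw [centersF, Finset.mem_filter] at hc
  obtain ⟨k, l, h⟩ := hc.2.1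
  refine ⟨k, l, ?_⟩
  rw [h, ha]; ext <;> simp

lemma grid_K1 {D : Set (ℝ × ℝ)} {n m : ℕ} {α : ℝ} (hm : 1 ≤ m) (ha : evenSide n α = 2 * m) {c : Site}
    (hc : c ∈ centersF D n α (0, 0)) : ∀ x ∈ gridK D n α (0, 0), x ∉ inB c m := by
  intro x hx
  rw [gridK] at hx
  simp only [Set.mem_iUnion] at hx
  obtain ⟨c', hc', hx⟩ := hx
  rw [bdry_eq hm ha] at hx
  obtain ⟨k, l, rfl⟩ := cen_form ha hc
  obtain ⟨k', l', rfl⟩ := cen_form ha hc'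
  exact sph_sep hm hx

lemma grid_K2 {D : Set (ℝ × ℝ)} {n m : ℕ} {α : ℝ} (hm : 1 ≤ m) (ha : evenSide n α = 2 * m) {c : Site}
    (hc : c ∈ centersF D n α (0, 0)) : ∀ x ∈ sph c m, x ∈ gridK D n α (0, 0) := by
  intro x hx
  rw [gridK]
  simp only [Set.mem_iUnion]
  exact ⟨c, hc, (bdry_eq hm ha).2 hx⟩

lemma latBall_coord {n : ℕ} {ρ : ℝ} (hρ : ρ ≤ 1 / 4) {x : Site} (hx : x ∈ latBall (ρ * n)) :
    4 * |x.1| ≤ (n : ℤ) ∧ 4 * |x.2| ≤ (n : ℤ) := by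
  have h : Real.sqrt ((x.1 : ℝ) ^ 2 + (x.2 : ℝ) ^ 2) < ρ * n := hx
  have hn : (0:ℝ) ≤ n := Nat.cast_nonneg n
  have h3 : ρ * n ≤ n / 4 := by nlinarith
  have h1 : |(x.1:ℝ)| ≤ Real.sqrt ((x.1 : ℝ) ^ 2 + (x.2 : ℝ) ^ 2) :=
    Real.abs_le_sqrt (by nlinarith [sq_nonneg (x.2:ℝ)])
  have h2 : |(x.2:ℝ)| ≤ Real.sqrt ((x.1 : ℝ) ^ 2 + (x.2 : ℝ) ^ 2) :=
    Real.abs_le_sqrt (by nlinarith [sq_nonneg (x.1:ℝ)])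
  constructor
  · have : (4:ℝ) * |(x.1:ℝ)| ≤ n := by linarith
    exact_mod_cast this
  · have : (4:ℝ) * |(x.2:ℝ)| ≤ n := by linarith
    exact_mod_cast this

lemma cset_sub {D : Set (ℝ × ℝ)} {n m : ℕ} {α ρ : ℝ} (hρ : ρ ≤ 1 / 4) (ha : evenSide n α = 2 * m) {c : Site}
    (hc : c ∈ cset D n α (ρ * n)) : bx c m ⊆ Lam n ∧ 4 * |c.1| ≤ (n : ℤ) ∧ 4 * |c.2| ≤ (n : ℤ) := by
  rw [cset, Finset.mem_filter] at hc
  constructor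
  · intro x hx
    have := latBall_coord hρ (hc.2 ((box_eq ha).2 hx))
    rw [mem_Lam]
    omega
  · exact latBall_coord hρ (hc.2 ((box_eq ha).2 (by rw [mem_bx]; simp)))

/-! ### Covariance upper bound -/

lemma coord_low {m : ℕ} {x k k' : ℤ} (h : |x - k * (2 * m)| ≤ (m:ℤ)) :
    ((m:ℝ)) ^ 2 * ((k' - k : ℤ) : ℝ) ^ 2 ≤ ((x:ℝ) - (k' * (2 * m) : ℤ)) ^ 2 := by
  have hm : (0:ℤ) ≤ m := Int.natCast_nonneg m
  have key : ((m:ℤ)) ^ 2 * (k' - k) ^ 2 ≤ (x - k' * (2 * m)) ^ 2 := by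
    rw [← mul_pow]
    rw [sq_le_sq]
    rw [abs_le] at h
    rcases lt_trichotomy k k' with hk | hk | hk
    · have h1 : 1 ≤ k' - k := by omega
      rw [abs_of_nonneg (by nlinarith : (0:ℤ) ≤ m * (k' - k))]
      rw [le_abs]; right; nlinarith
    · subst hk; simp
    · have h1 : 1 ≤ k - k' := by omega
      rw [abs_of_nonpos (by nlinarith : m * (k' - k) ≤ (0:ℤ))]
      rw [le_abs]; left; nlinarith
  have := (Int.cast_le (R := ℝ)).2 key
  push_cast at this ⊢
  exact this

lemma qd_low {m : ℕ} (hm : 1 ≤ m) {k l k' l' : ℤ} {x : Site}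
    (hx : x ∈ sph ((k * (2 * m), l * (2 * m)) : Site) m) :
    (m:ℝ) ^ 2 * (1 + ((k' - k : ℤ) : ℝ) ^ 2 + ((l' - l : ℤ) : ℝ) ^ 2) / 2 ≤ qd 1 ((k' * (2 * m), l' * (2 * m)) : Site) x := by
  rw [mem_sph hm] at hx
  have h1 := coord_low (k' := k') hx.1.1
  have h2 := coord_low (k' := l') hx.1.2
  simp only [qd]
  have hm0 : (0:ℝ) ≤ (m:ℝ) ^ 2 := by positivity
  by_cases h : k' = k ∧ l' = l
  · obtain ⟨rfl, rfl⟩ := h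
    simp only [sub_self, Int.cast_zero]
    rcases hx.2 with h | h
    · have : ((x.1 : ℝ) - (k' * (2 * m) : ℤ)) ^ 2 = (m:ℝ)^2 := by
        rw [← sq_abs]
        have : |(x.1 : ℝ) - (k' * (2 * m) : ℤ)| = (m:ℝ) := by exact_mod_cast h
        rw [this]
      nlinarith [sq_nonneg ((x.2 : ℝ) - (l' * (2 * m) : ℤ))]
    · have : ((x.2 : ℝ) - (l' * (2 * m) : ℤ)) ^ 2 = (m:ℝ)^2 := by
        rw [← sq_abs]
        have : |(x.2 : ℝ) - (l' * (2 * m) : ℤ)| = (m:ℝ) := by exact_mod_cast h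
        rw [this]
      nlinarith [sq_nonneg ((x.1 : ℝ) - (k' * (2 * m) : ℤ))]
  · have : (1:ℝ) ≤ ((k' - k : ℤ) : ℝ) ^ 2 + ((l' - l : ℤ) : ℝ) ^ 2 := by
      have : (1:ℤ) ≤ (k' - k) ^ 2 + (l' - l) ^ 2 := by
        by_contra h3
        have e1 : (k' - k) ^ 2 = 0 := by nlinarith [sq_nonneg (k' - k), sq_nonneg (l' - l)]
        have e2 : (l' - l) ^ 2 = 0 := by nlinarith [sq_nonneg (k' - k), sq_nonneg (l' - l)]
        rw [sq_eq_zero_iff] at e1 e2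
        exact h ⟨by omega, by omega⟩
      exact_mod_cast this
    nlinarith

lemma upper_arith {R m Lg g e ρ A : ℝ} (hR3' : 3 ≤ R) (hm0 : 0 < m) (hRm' : R * R ≤ m) (hLg0 : 0 ≤ Lg)
    (he : e = 4 * π * Lg * (12 * R / m)) (hρ : ρ = (1 - 3 / R) * (1 - 1 / R ^ 2))
    (hU : ρ * (g - e) ≤ A) (hc : g ≤ 4 * π * Lg) (herr : 64 * π * Lg ≤ R) : g ≤ A + 1 := by
  have hR0 : (0:ℝ) < R := by linarith
  have hinv : 1 / R ^ 2 ≤ 1 / R := by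
    apply one_div_le_one_div_of_le hR0; nlinarith
  have h3 : 3 / R ≤ 1 := by rw [div_le_one hR0]; exact hR3'
  have hi0 : 0 ≤ 1 / R^2 := by positivity
  have h30 : 0 ≤ 3 / R := by positivity
  have hiR : 3 / R = 3 * (1 / R) := by ring
  have hρ1 : ρ ≤ 1 := by rw [hρ]; nlinarith
  have hρ2 : 1 - ρ ≤ 4 * (1 / R) := by rw [hρ]; nlinarith
  have he1 : e ≤ 48 * π * Lg * (1 / R) := by
    have : 12 * R / m ≤ 12 * (1 / R) := by
      rw [mul_one_div, div_le_div_iff₀ hm0 hR0]; nlinarith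
    calc e ≤ 4 * π * Lg * (12 * (1 / R)) := by
          rw [he]; exact mul_le_mul_of_nonneg_left this (by positivity)
      _ = _ := by ring
  have he0 : 0 ≤ e := by rw [he]; positivity
  have hstep : (1 - ρ) * (g - e) ≤ 16 * π * Lg * (1 / R) := by
    rcases le_or_gt 0 (g - e) with h | h
    · calc (1 - ρ) * (g - e) ≤ (4 * (1 / R)) * (g - e) := mul_le_mul_of_nonneg_right hρ2 h
        _ ≤ (4 * (1 / R)) * (4 * π * Lg) := mul_le_mul_of_nonneg_left (by linarith) (by positivity)
        _ = _ := by ring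
    · have h1 : (1 - ρ) * (g - e) ≤ 0 := mul_nonpos_of_nonneg_of_nonpos (by linarith) h.le
      have h2 : 0 ≤ 16 * π * Lg * (1 / R) := by positivity
      linarith
  have hfin : 64 * π * Lg * (1 / R) ≤ 1 := by
    rw [mul_one_div, div_le_one hR0]; exact herr
  nlinarith only [hU, hstep, hfin, he1]

lemma G_upper {n m : ℕ} (hn : 1 ≤ n) (hm : 9 ≤ m) {k l k' l' : ℤ}
    (hB : bx ((k * (2 * m), l * (2 * m)) : Site) m ⊆ Lam n)
    (hB' : bx ((k' * (2 * m), l' * (2 * m)) : Site) m ⊆ Lam n)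
    (herr : 64 * π * log (16 * (n:ℝ) ^ 2) ≤ (Nat.sqrt m : ℝ)) :
    bil (Lam n) (uf n m ((k * (2 * m), l * (2 * m)) : Site)) (uf n m ((k' * (2 * m), l' * (2 * m)) : Site))
      ≤ log (32 * (n:ℝ) ^ 2 / ((m:ℝ) ^ 2 * (1 + ((k' - k : ℤ) : ℝ) ^ 2 + ((l' - l : ℤ) : ℝ) ^ 2))) + 1 := by
  apply bil_uf_uf_le (by omega) hB
  intro x hx
  have hm1 : 1 ≤ m := by omega
  have hR3 : 3 ≤ Nat.sqrt m := by rw [Nat.le_sqrt]; omega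
  have hRm : Nat.sqrt m * Nat.sqrt m ≤ m := Nat.sqrt_le m
  set R := Nat.sqrt m with hR
  have hxL : x ∈ Lam n := hB (Finset.sdiff_subset hx)
  have hn1 : (1:ℝ) ≤ n := by exact_mod_cast hn
  have hR3' : (3:ℝ) ≤ R := by exact_mod_cast hR3
  have hRm' : (R:ℝ) * R ≤ m := by exact_mod_cast hRm
  have hU := green_upper (R := R) hn hB' hxL (sph_sep hm1 hx) (C := 1) le_rfl (by nlinarith) hR3
    (by nlinarith) (by nlinarith)
  have hc := green_crude hn x ((k' * (2 * m), l' * (2 * m)) : Site) hxL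
  have hq := qd_low hm1 (k' := k') (l' := l') hx
  have hm0 : (0:ℝ) < m := by exact_mod_cast hm1
  set q : ℝ := 1 + ((k' - k : ℤ) : ℝ) ^ 2 + ((l' - l : ℤ) : ℝ) ^ 2 with hqd
  have hq0 : 0 < q := by positivity
  set g := green (Lam n) x ((k' * (2 * m), l' * (2 * m)) : Site) with hg
  set Lg := log (16 * (n:ℝ) ^ 2) with hLg
  have hLg0 : 0 ≤ Lg := log_nonneg (by nlinarith)
  have hlq : log ((m:ℝ) ^ 2 * q / 2) ≤ log (qd 1 ((k' * (2 * m), l' * (2 * m)) : Site) x) :=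
    log_le_log (by positivity) hq
  have hrew : log (32 * (n:ℝ) ^ 2 / ((m:ℝ) ^ 2 * q)) = Lg - log ((m:ℝ) ^ 2 * q / 2) := by
    rw [hLg, ← log_div (by positivity) (by positivity)]
    congr 1; field_simp; ring
  rw [hrew]
  exact upper_arith hR3' hm0 hRm' hLg0 rfl rfl (hU.trans (sub_le_sub_left hlq _)) hc herr

lemma G_exp {n m : ℕ} (hn : 1 ≤ n) (hm : 9 ≤ m) {k l k' l' : ℤ}
    (hB : bx ((k * (2 * m), l * (2 * m)) : Site) m ⊆ Lam n)
    (hB' : bx ((k' * (2 * m), l' * (2 * m)) : Site) m ⊆ Lam n)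
    (herr : 64 * π * log (16 * (n:ℝ) ^ 2) ≤ (Nat.sqrt m : ℝ)) :
    exp (bil (Lam n) (uf n m ((k * (2 * m), l * (2 * m)) : Site)) (uf n m ((k' * (2 * m), l' * (2 * m)) : Site)))
      ≤ 100 * ((n:ℝ) ^ 2 / (m:ℝ) ^ 2) * (1 / (1 + ((k' - k : ℤ) : ℝ) ^ 2 + ((l' - l : ℤ) : ℝ) ^ 2)) := by
  have h := exp_le_exp.2 (G_upper hn hm hB hB' herr)
  refine h.trans ?_
  have hn1 : (0:ℝ) < n := by exact_mod_cast hn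
  have hm1 : (0:ℝ) < m := by exact_mod_cast (by omega : 0 < m)
  rw [exp_add, exp_log (by positivity)]
  set q : ℝ := 1 + ((k' - k : ℤ) : ℝ) ^ 2 + ((l' - l : ℤ) : ℝ) ^ 2 with hqd
  have hq0 : 0 < q := by positivity
  have he : exp 1 ≤ 3 := by linarith [exp_one_lt_d9]
  have e1 : 32 * (n:ℝ) ^ 2 / ((m:ℝ) ^ 2 * q) = 32 * ((n:ℝ) ^ 2 / (m:ℝ) ^ 2 * (1 / q)) := by field_simp
  rw [e1]
  have h0 : 0 ≤ ((n:ℝ) ^ 2 / (m:ℝ) ^ 2 * (1 / q)) := by positivity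
  nlinarith

/-! ### Lattice sum -/

lemma sum_one (n : ℕ) : ∑ k ∈ Finset.Icc (-(n:ℤ)) n, 1 / (1 + |(k:ℝ)|) ≤ 2 * (1 + log (n + 1)) := by
  have h1 : ∑ k ∈ Finset.Icc (-(n:ℤ)) n, 1 / (1 + |(k:ℝ)|) ≤
      ∑ j ∈ Finset.range (n + 1), 1 / (1 + (j:ℝ)) + ∑ j ∈ Finset.range (n + 1), 1 / (1 + (j:ℝ)) := by
    have hsub : Finset.Icc (-(n:ℤ)) n ⊆ (Finset.range (n + 1)).image (fun j : ℕ => (j:ℤ)) ∪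
        (Finset.range (n + 1)).image (fun j : ℕ => -(j:ℤ)) := by
      intro k hk
      rw [Finset.mem_Icc] at hk
      rw [Finset.mem_union, Finset.mem_image, Finset.mem_image]
      rcases le_total 0 k with h | h
      · left; exact ⟨k.toNat, by rw [Finset.mem_range]; omega, by omega⟩
      · right; exact ⟨(-k).toNat, by rw [Finset.mem_range]; omega, by omega⟩
    have hnn : ∀ k : ℤ, 0 ≤ 1 / (1 + |(k:ℝ)|) := fun k => by positivity
    refine (Finset.sum_le_sum_of_subset_of_nonneg hsub (fun k _ _ => hnn k)).trans ?_
    refine (le_add_of_nonneg_right (Finset.sum_nonneg fun k _ => hnn k)).trans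
      ((Finset.sum_union_inter (s₁ := (Finset.range (n + 1)).image (fun j : ℕ => (j:ℤ)))
        (s₂ := (Finset.range (n + 1)).image (fun j : ℕ => -(j:ℤ)))
        (f := fun k : ℤ => 1 / (1 + |(k:ℝ)|))).le.trans ?_)
    rw [Finset.sum_image (by intro a _ b _ h; simpa using h), Finset.sum_image (by intro a _ b _ h; simpa using h)]
    simp
  have h2 : ∑ j ∈ Finset.range (n + 1), 1 / (1 + (j:ℝ)) ≤ 1 + log (n + 1) := by
    have := harmonic_le_one_add_log (n + 1)
    rw [harmonic] at this
    push_cast at this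
    refine le_trans (le_of_eq ?_) this
    exact Finset.sum_congr rfl fun j _ => by rw [one_div, add_comm]
  linarith

lemma sum_two (n : ℕ) : ∑ p ∈ Finset.Icc (-(n:ℤ)) n ×ˢ Finset.Icc (-(n:ℤ)) n,
    1 / (1 + (p.1:ℝ) ^ 2 + (p.2:ℝ) ^ 2) ≤ 8 * (1 + log (n + 1)) ^ 2 := by
  have h1 : ∀ p ∈ Finset.Icc (-(n:ℤ)) n ×ˢ Finset.Icc (-(n:ℤ)) n,
      1 / (1 + (p.1:ℝ) ^ 2 + (p.2:ℝ) ^ 2) ≤ 2 * ((1 / (1 + |(p.1:ℝ)|)) * (1 / (1 + |(p.2:ℝ)|))) := by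
    intro p _
    have e : 2 * ((1 / (1 + |(p.1:ℝ)|)) * (1 / (1 + |(p.2:ℝ)|))) = 2 / ((1 + |(p.1:ℝ)|) * (1 + |(p.2:ℝ)|)) := by
      field_simp
    rw [e, div_le_div_iff₀ (by positivity) (by positivity)]
    have a := sq_abs (p.1:ℝ)
    have b := sq_abs (p.2:ℝ)
    nlinarith [sq_nonneg (|(p.1:ℝ)| - |(p.2:ℝ)|), sq_nonneg (|(p.1:ℝ)| - 1), sq_nonneg (|(p.2:ℝ)| - 1)]
  refine (Finset.sum_le_sum h1).trans ?_
  rw [← Finset.mul_sum, Finset.sum_product]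
  simp only [← Finset.mul_sum]
  rw [← Finset.sum_mul]
  have h0 : 0 ≤ ∑ k ∈ Finset.Icc (-(n:ℤ)) n, 1 / (1 + |(k:ℝ)|) := Finset.sum_nonneg fun k _ => by positivity
  have h2 := sum_one n
  nlinarith

end

section

/-! ### Second moment sum -/

lemma row_sum {n m : ℕ} (hn : 1 ≤ n) (hm : 9 ≤ m) (S : Finset Site)
    (hS : ∀ c ∈ S, ∃ k l : ℤ, c = (k * (2 * m), l * (2 * m))) (hSB : ∀ c ∈ S, bx c m ⊆ Lam n)
    (herr : 64 * π * log (16 * (n:ℝ) ^ 2) ≤ (Nat.sqrt m : ℝ)) {g : ℝ} (hg0 : 0 ≤ g) (hg1 : g ≤ 1)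
    {c : Site} (hc : c ∈ S) :
    ∑ c' ∈ S, exp (g * bil (Lam n) (uf n m c) (uf n m c')) ≤
      S.card + 100 * ((n:ℝ) ^ 2 / (m:ℝ) ^ 2) * (8 * (1 + log (n + 1)) ^ 2) := by
  have hstep : ∀ c' ∈ S, exp (g * bil (Lam n) (uf n m c) (uf n m c')) ≤
      1 + exp (bil (Lam n) (uf n m c) (uf n m c')) := by
    intro c' _
    set b := bil (Lam n) (uf n m c) (uf n m c')
    rcases le_total 0 b with h | h
    · have : exp (g * b) ≤ exp b := exp_le_exp.2 (by nlinarith)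
      linarith
    · have : exp (g * b) ≤ 1 := exp_le_one_iff.2 (mul_nonpos_of_nonneg_of_nonpos hg0 h)
      have := exp_pos b
      linarith
  refine (Finset.sum_le_sum hstep).trans ?_
  rw [Finset.sum_add_distrib, Finset.sum_const, nsmul_eq_mul, mul_one]
  refine add_le_add le_rfl ?_
  obtain ⟨k, l, hkl⟩ := hS c hc
  have hm0 : (0:ℤ) < 2 * m := by omega
  set T : Site → Site := fun c' => ((c'.1 - c.1) / (2 * m), (c'.2 - c.2) / (2 * m)) with hT
  have hTv : ∀ k' l' : ℤ, T (k' * (2 * m), l' * (2 * m)) = (k' - k, l' - l) := by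
    intro k' l'
    simp only [hT, hkl, ← sub_mul]
    rw [Int.mul_ediv_cancel _ hm0.ne', Int.mul_ediv_cancel _ hm0.ne']
  have hb : ∀ c' ∈ S, exp (bil (Lam n) (uf n m c) (uf n m c')) ≤
      100 * ((n:ℝ) ^ 2 / (m:ℝ) ^ 2) * (1 / (1 + ((T c').1 : ℝ) ^ 2 + ((T c').2 : ℝ) ^ 2)) := by
    intro c' hc'
    obtain ⟨k', l', hkl'⟩ := hS c' hc'
    have h1 := hSB c hc
    have h2 := hSB c' hc'
    rw [hkl', hTv]
    rw [hkl'] at h2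
    rw [hkl] at h1 ⊢
    exact G_exp hn hm h1 h2 herr
  refine (Finset.sum_le_sum hb).trans ?_
  rw [← Finset.mul_sum]
  refine mul_le_mul_of_nonneg_left ?_ (by positivity)
  refine le_trans ?_ (sum_two n)
  have hinj : Set.InjOn T S := by
    intro a ha b hb hab
    obtain ⟨k1, l1, rfl⟩ := hS a ha
    obtain ⟨k2, l2, rfl⟩ := hS b hb
    rw [hTv, hTv, Prod.mk.injEq] at hab
    have e1 : k1 = k2 := by omega
    have e2 : l1 = l2 := by omega
    rw [e1, e2]
  have himg := Finset.sum_image (f := fun p : Site => 1 / (1 + (p.1:ℝ) ^ 2 + (p.2:ℝ) ^ 2)) hinj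
  rw [← himg]
  refine Finset.sum_le_sum_of_subset_of_nonneg ?_ (fun p _ _ => by positivity)
  intro p hp
  rw [Finset.mem_image] at hp
  obtain ⟨c', hc', rfl⟩ := hp
  have aux : ∀ j : ℤ, |j * (2 * m)| ≤ n → -(n:ℤ) ≤ j ∧ j ≤ n := by
    intro j hj
    rw [abs_mul, abs_of_pos hm0] at hj
    rw [← abs_le]
    nlinarith [abs_nonneg j]
  have m1 := mem_Lam.1 (hSB c hc (mem_bx.2 (by simp) : c ∈ bx c m))
  have m2 := mem_Lam.1 (hSB c' hc' (mem_bx.2 (by simp) : c' ∈ bx c' m))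
  obtain ⟨k', l', hkl'⟩ := hS c' hc'
  rw [hkl', hTv, Finset.mem_product, Finset.mem_Icc, Finset.mem_Icc]
  rw [hkl] at m1
  rw [hkl'] at m2
  simp only at m1 m2
  constructor
  · apply aux
    rw [sub_mul]
    have := abs_sub (k' * (2 * (m:ℤ))) (k * (2 * m))
    omega
  · apply aux
    rw [sub_mul]
    have := abs_sub (l' * (2 * (m:ℤ))) (l * (2 * m))
    omega

/-! ### Number of centers -/

lemma cset_card {D : Set (ℝ × ℝ)} {n m : ℕ} {α ρ : ℝ} (hm : 1 ≤ m) (ha : evenSide n α = 2 * m)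
    (hρ4 : ρ ≤ 1 / 4) (hD : ∀ x : Site, x ∈ latBall (ρ * n) → x ∈ Dn D n) (J : ℕ)
    (hJ : (4 * (m:ℝ)) * (J + 1) < ρ * n) : ((J:ℝ) + 1) ^ 2 ≤ (cset D n α (ρ * n)).card := by
  set T : ℕ × ℕ → Site := fun p => ((p.1:ℤ) * (2 * m), (p.2:ℤ) * (2 * m)) with hT
  have hinj : Function.Injective T := by
    intro p q h
    simp only [hT, Prod.mk.injEq] at h
    have hm0 : (2 * (m:ℤ)) ≠ 0 := by omega
    ext
    · exact_mod_cast mul_right_cancel₀ hm0 h.1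
    · exact_mod_cast mul_right_cancel₀ hm0 h.2
  have hsub : (Finset.range (J + 1) ×ˢ Finset.range (J + 1)).image T ⊆ cset D n α (ρ * n) := by
    intro c hc
    rw [Finset.mem_image] at hc
    obtain ⟨⟨i, j⟩, hp, rfl⟩ := hc
    rw [Finset.mem_product, Finset.mem_range, Finset.mem_range] at hp
    have hball : ∀ x ∈ bx (T (i, j)) m, x ∈ latBall (ρ * n) := by
      intro x hx
      rw [mem_bx] at hx
      have hi : ((i:ℝ)) ≤ J := by exact_mod_cast (by simpa using Nat.lt_succ_iff.1 hp.1)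
      have hj : ((j:ℝ)) ≤ J := by exact_mod_cast (by simpa using Nat.lt_succ_iff.1 hp.2)
      have h1 : |(x.1:ℝ) - i * (2 * m)| ≤ m := by exact_mod_cast hx.1
      have h2 : |(x.2:ℝ) - j * (2 * m)| ≤ m := by exact_mod_cast hx.2
      have hm0 : (0:ℝ) < m := by exact_mod_cast hm
      have hi0 : (0:ℝ) ≤ i := Nat.cast_nonneg i
      have hj0 : (0:ℝ) ≤ j := Nat.cast_nonneg j
      rw [abs_le] at h1 h2
      have b1 : |(x.1:ℝ)| ≤ 2 * m * (J + 1) := by rw [abs_le]; constructor <;> nlinarith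
      have b2 : |(x.2:ℝ)| ≤ 2 * m * (J + 1) := by rw [abs_le]; constructor <;> nlinarith
      change Real.sqrt _ < _
      refine lt_of_le_of_lt ?_ hJ
      rw [Real.sqrt_le_left (by positivity)]
      have c1 := sq_le_sq' (by linarith [abs_nonneg (x.1:ℝ)]) b1
      have c2 := sq_le_sq' (by linarith [abs_nonneg (x.2:ℝ)]) b2
      rw [sq_abs] at c1 c2
      nlinarith
    rw [cset, Finset.mem_filter, centersF, Finset.mem_filter, isCenter]
    have hbb : boxAt (evenSide n α) (T (i, j)) ⊆ latBall (ρ * n) := fun x hx => hball x ((box_eq ha).1 hx)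
    refine ⟨⟨?_, ⟨i, j, ?_⟩, fun x hx => hD x (hbb hx)⟩, hbb⟩
    · have := latBall_coord hρ4 (hball (T (i, j)) (by rw [mem_bx]; simp))
      rw [mem_Lam]
      omega
    · rw [ha]; simp [hT]
  have := Finset.card_le_card hsub
  rw [Finset.card_image_of_injective _ hinj, Finset.card_product, Finset.card_range] at this
  have h2 : (((J + 1) * (J + 1) : ℕ) : ℝ) ≤ (cset D n α (ρ * n)).card := by exact_mod_cast this
  push_cast at h2
  nlinarith

end

section

/-! ### The bound for fixed n -/

lemma fixed_n {N : ℕ} (hN : 0 < N) {D : Set (ℝ × ℝ)} {n m : ℕ} {α ρ v δ η η' κ : ℝ} {γ : Fin N → ℝ} {s : Fin N → ℝ}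
    (hn : 2 ≤ n) (hm : 10 ≤ m) (hmn : 7 * m ≤ n) (ha : evenSide n α = 2 * m) (hρ : ρ ≤ 1 / 4)
    (hs : ∀ i, s i = v * γ i)
    (hv0 : 0 ≤ v) (hv2 : v ≤ 2) (hδ : 0 < δ) (hδ1 : δ ≤ 1) (hη' : η' = δ ^ 2 / 16) (hη0 : 0 < η)
    (hη : η ≤ η' ^ 2 / 100) (hγ0 : ∀ i, 0 ≤ γ i) (hγ1 : ∑ i, γ i * γ i ≤ 1)
    (hne : (cset D n α (ρ * n)).Nonempty)
    (herr : 64 * π * log (16 * (n:ℝ) ^ 2) ≤ (Nat.sqrt m : ℝ))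
    (hlow : (v - η) * log n ≤ 2 * log ((n:ℝ) ^ 2 / (48 * (m:ℝ) ^ 2)) -
      (1 + 10 / (m:ℝ) ^ 2) * log ((n:ℝ) ^ 2 / (16 * (m:ℝ) ^ 2)))
    (hupp : log (32 * (n:ℝ) ^ 2 / (m:ℝ) ^ 2) + 1 ≤ (v + η) * log n)
    (hsum : (cset D n α (ρ * n)).card + 100 * ((n:ℝ) ^ 2 / (m:ℝ) ^ 2) * (8 * (1 + log (n + 1)) ^ 2) ≤
      (cset D n α (ρ * n)).card * exp (η * log n))
    (hcnt : (n:ℝ) ^ κ ≤ (1 / 4) * (cset D n α (ρ * n)).card * exp ((-(v / 2) - η - η' - N * δ) * log n)) :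
    gff n N {φ : Conf N | (countRange D N n α (ρ * n) s δ φ : ℝ) ≤ (n : ℝ) ^ κ} ≤
      ENNReal.ofReal (4 * exp (-(η' ^ 2 / 100) * log n)) +
        ∑ _i : Fin N, (ENNReal.ofReal (8 * N * exp (-(δ ^ 2 / 16) * log n)) +
          ENNReal.ofReal (8 * N * exp (-(δ ^ 2 / 16) * log n))) := by
  set S := cset D n α (ρ * n) with hS
  have hm1 : 1 ≤ m := by omega
  have hn1 : 1 ≤ n := by omega
  have hcen : ∀ c ∈ S, c ∈ centersF D n α (0, 0) := fun c hc => (Finset.mem_filter.1 hc).1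
  have hform : ∀ c ∈ S, ∃ k l : ℤ, c = (k * (2 * m), l * (2 * m)) := fun c hc => cen_form ha (hcen c hc)
  have hSB : ∀ c ∈ S, bx c m ⊆ Lam n := fun c hc => (cset_sub hρ ha hc).1
  set g := ∑ i, γ i * γ i with hg
  have hg0 : 0 ≤ g := Finset.sum_nonneg fun i _ => mul_self_nonneg _
  have hL : 0 < log n := log_pos (by exact_mod_cast hn)
  set H : Site → CE n N → Fin N → ℝ := fun c ω i => hv N m c (extZero n ω) i with hH
  have hcl := count_low (N := N) (BG_good n N) hne (G := fun c c' => bil (Lam n) (uf n m c) (uf n m c'))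
    (F := fun γ c => fvec n N m γ c) (H := H)
    (fun γ c hc x => fvec_apply hm1 (hSB c hc) γ x)
    (fun γ γ' c hc c' hc' => fvec_fvec (hSB c hc) (hSB c' hc') γ γ')
    hN hL hv0 hv2 hδ hδ1 hη' hη0 hη
    (fun c hc => hlow.trans (var_lower hn1 hm hmn (cset_sub hρ ha hc).2 (hSB c hc)))
    (fun c hc => by
      obtain ⟨k, l, hkl⟩ := hform c hc
      have h1 := hSB c hc
      rw [hkl] at h1 ⊢
      have h2 := G_upper hn1 (by omega) h1 h1 herr
      simp only [sub_self, Int.cast_zero] at h2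
      refine h2.trans (le_trans (le_of_eq ?_) hupp)
      congr 3
      norm_num)
    hγ0 hγ1
    (by
      have h1 : ∀ c ∈ S, ∑ c' ∈ S, exp (g * bil (Lam n) (uf n m c) (uf n m c')) ≤ S.card * exp (η * log n) :=
        fun c hc => (row_sum hn1 (by omega) S hform hSB herr hg0 hγ1 hc).trans hsum
      refine (Finset.sum_le_sum h1).trans (le_of_eq ?_)
      rw [Finset.sum_const, nsmul_eq_mul]; ring)
  refine le_trans ?_ hcl
  set P : Site → Conf N → Prop := fun c φ => ∀ i, (v * γ i - δ) * log n < hv N m c φ i ∧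
    hv N m c φ i < (v * γ i + δ) * log n with hP
  set b := (1 / 4) * (S.card : ℝ) * exp ((-(v / 2) - η - η' - N * δ) * log n) with hb
  have hPm : ∀ c, MeasurableSet {φ : Conf N | P c φ} := by
    intro c
    have hmi : ∀ i : Fin N, Measurable fun φ : Conf N => hv N m c φ i := fun i => by
      have := hv_meas N m c
      fun_prop
    have : {φ : Conf N | P c φ} = ⋂ i, ({φ | (v * γ i - δ) * log n < hv N m c φ i} ∩
        {φ | hv N m c φ i < (v * γ i + δ) * log n}) := by
      ext φ; simp [hP]
    rw [this]
    exact MeasurableSet.iInter fun i => (measurableSet_lt measurable_const (hmi i)).inter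
      (measurableSet_lt (hmi i) measurable_const)
  have hEm : MeasurableSet {φ : Conf N | ((S.filter fun c => P c φ).card : ℝ) ≤ b} := by
    have hc : Measurable fun φ : Conf N => ((S.filter fun c => P c φ).card : ℝ) := by
      have e : (fun φ : Conf N => ((S.filter fun c => P c φ).card : ℝ)) =
          fun φ => ∑ c ∈ S, ({φ : Conf N | P c φ}.indicator (fun _ => (1:ℝ)) φ) := by
        funext φ
        rw [Finset.card_filter]
        push_cast
        refine Finset.sum_congr rfl fun c _ => ?_
        simp [Set.indicator_apply]
      rw [e]
      exact Finset.measurable_sum _ fun c _ => measurable_const.indicator (hPm c)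
    exact measurableSet_le hc measurable_const
  have hae : ∀ᵐ φ ∂(gff n N), ∀ c ∈ S, harmExt n N (gridK D n α (0, 0)) c φ = hv N m c φ := by
    rw [Filter.eventually_all_finset]
    intro c hc
    exact harm_eq hm1 (hSB c hc) _ (grid_K1 hm1 ha (hcen c hc)) (grid_K2 hm1 ha (hcen c hc))
  have hle : gff n N {φ : Conf N | (countRange D N n α (ρ * n) s δ φ : ℝ) ≤ (n : ℝ) ^ κ} ≤
      gff n N {φ : Conf N | ((S.filter fun c => P c φ).card : ℝ) ≤ b} := by
    apply measure_mono_ae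
    filter_upwards [hae] with φ hφ h
    have h' : (countRange D N n α (ρ * n) s δ φ : ℝ) ≤ (n : ℝ) ^ κ := h
    change ((S.filter fun c => P c φ).card : ℝ) ≤ b
    refine le_trans (le_of_eq ?_) (h'.trans hcnt)
    congr 1
    rw [countRange, hS, cset, Finset.filter_filter]
    congr 1
    apply Finset.filter_congr
    intro c hc
    refine and_congr_right fun hball => ?_
    have hcS : c ∈ S := Finset.mem_filter.2 ⟨hc, hball⟩
    rw [hφ c hcS]
    simp only [hP, hs]
  refine hle.trans (le_of_eq ?_)
  rw [gff_eq, Measure.map_apply (extZero_meas n N) hEm]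
  rfl

end

section

/-! ### Asymptotics -/

lemma log_num : log 48 ≤ 5 ∧ log 16 ≤ 4 ∧ log 3 ≤ 2 ∧ log 32 ≤ 5 ∧ log 256 ≤ 7 ∧ log 8 ≤ 3 ∧ log 4 ≤ 2 ∧ log 7 ≤ 3 := by
  have h2 : log 2 < 0.7 := by linarith [log_two_lt_d9]
  have h64 : log 64 = 6 * log 2 := by
    rw [show (64:ℝ) = 2 ^ 6 by norm_num, log_pow]; norm_num
  have h48 : log 48 ≤ log 64 := log_le_log (by norm_num) (by norm_num)
  have e16 : log 16 = 4 * log 2 := by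
    rw [show (16:ℝ) = 2 ^ 4 by norm_num, log_pow]; norm_num
  have e32 : log 32 = 5 * log 2 := by
    rw [show (32:ℝ) = 2 ^ 5 by norm_num, log_pow]; norm_num
  have e256 : log 256 = 8 * log 2 := by
    rw [show (256:ℝ) = 2 ^ 8 by norm_num, log_pow]; norm_num
  have e8 : log 8 = 3 * log 2 := by
    rw [show (8:ℝ) = 2 ^ 3 by norm_num, log_pow]; norm_num
  have e4 : log 4 = 2 * log 2 := by
    rw [show (4:ℝ) = 2 ^ 2 by norm_num, log_pow]; norm_num
  have e3 : log 3 ≤ log 4 := log_le_log (by norm_num) (by norm_num)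
  have e7 : log 7 ≤ log 8 := log_le_log (by norm_num) (by norm_num)
  refine ⟨?_, ?_, ?_, ?_, ?_, ?_, ?_, ?_⟩ <;> linarith

lemma num_low {n m : ℕ} {v η L : ℝ} (hn : 1 ≤ n) (hm : 10 ≤ m) (hL : L = log n) (hL0 : 0 ≤ L) (hLm : L ≤ m)
    (h1 : v * L ≤ 2 * L - 2 * log m) (hη : 20 ≤ η * L) :
    (v - η) * L ≤ 2 * log ((n:ℝ) ^ 2 / (48 * (m:ℝ) ^ 2)) -
      (1 + 10 / (m:ℝ) ^ 2) * log ((n:ℝ) ^ 2 / (16 * (m:ℝ) ^ 2)) := by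
  obtain ⟨l48, l16, -⟩ := log_num
  have hn0 : (0:ℝ) < n := by exact_mod_cast hn
  have hm0 : (10:ℝ) ≤ m := by exact_mod_cast hm
  have hm1 : (m:ℝ) ≠ 0 := by linarith
  rw [log_div (by positivity) (by positivity), log_div (by positivity) (by positivity),
    log_mul (by norm_num) (by positivity), log_mul (by norm_num) (by positivity), log_pow, log_pow, ← hL]
  push_cast
  have hlm : 0 ≤ log m := log_nonneg (by linarith)
  have p16 : 0 ≤ log 16 := log_nonneg (by norm_num)
  set a := 10 / (m:ℝ) ^ 2 with ha
  have ha0 : 0 ≤ a := by positivity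
  have haL : a * (2 * L) ≤ 2 := by
    rw [ha, div_mul_eq_mul_div, div_le_iff₀ (by positivity)]
    nlinarith
  have : a * (2 * L - (log 16 + 2 * log m)) ≤ a * (2 * L) := mul_le_mul_of_nonneg_left (by linarith) ha0
  nlinarith

lemma num_upp {n m : ℕ} {v η L : ℝ} (hn : 1 ≤ n) (hm : 10 ≤ m) (hL : L = log n)
    (h2 : 2 * L - 2 * log m ≤ v * L + 4) (hη : 20 ≤ η * L) :
    log (32 * (n:ℝ) ^ 2 / (m:ℝ) ^ 2) + 1 ≤ (v + η) * L := by
  obtain ⟨-, -, -, l32, -⟩ := log_num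
  have hn0 : (0:ℝ) < n := by exact_mod_cast hn
  have hm0 : (10:ℝ) ≤ m := by exact_mod_cast hm
  rw [log_div (by positivity) (by positivity), log_mul (by norm_num) (by positivity), log_pow, log_pow, ← hL]
  push_cast
  linarith

lemma ratio_exp {n m : ℕ} (hn : 1 ≤ n) (hm : 1 ≤ m) :
    (n:ℝ) ^ 2 / (m:ℝ) ^ 2 = exp (2 * log n - 2 * log m) := by
  have hn0 : (0:ℝ) < n := by exact_mod_cast hn
  have hm0 : (0:ℝ) < m := by exact_mod_cast hm
  rw [exp_sub]
  congr 1
  · rw [two_mul, exp_add, exp_log hn0, sq]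
  · rw [two_mul, exp_add, exp_log hm0, sq]

lemma num_card {D : Set (ℝ × ℝ)} {n m : ℕ} {α ρ v η L : ℝ} (hn : 1 ≤ n) (hm : 10 ≤ m) (ha : evenSide n α = 2 * m)
    (hL : L = log n) (hρ0 : 0 < ρ)
    (hρ4 : ρ ≤ 1 / 4) (hD : ∀ x : Site, x ∈ latBall (ρ * n) → x ∈ Dn D n)
    (h1 : v * L ≤ 2 * L - 2 * log m) (hη : 30 ≤ η * L) (hρ : log (1 / ρ) ≤ η / 8 * L)
    (hv : 6 ≤ (v - η / 4) * L) :
    exp ((v - η / 2) * L) ≤ (cset D n α (ρ * n)).card := by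
  obtain ⟨-, -, -, -, l256, l8, -⟩ := log_num
  have hn0 : (0:ℝ) < n := by exact_mod_cast hn
  have hm0 : (10:ℝ) ≤ m := by exact_mod_cast hm
  have hm1 : (0:ℝ) < m := by linarith
  set y := ρ * n / (8 * m) with hy
  have hy0 : 0 < y := by positivity
  have hly : log y = log ρ + L - (log 8 + log m) := by
    rw [hy, log_div (by positivity) (by positivity), log_mul hρ0.ne' hn0.ne', log_mul (by norm_num) hm1.ne', hL]
  have hlr : log (1 / ρ) = - log ρ := by rw [one_div, log_inv]
  rw [hlr] at hρ
  have hy1 : 1 ≤ y := by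
    rw [← log_nonneg_iff hy0, hly]
    nlinarith
  have hfl : 1 ≤ ⌊y⌋₊ := Nat.le_floor (by exact_mod_cast hy1)
  have hf1 : (⌊y⌋₊:ℝ) ≤ y := Nat.floor_le hy0.le
  have hf2 : y < ⌊y⌋₊ + 1 := Nat.lt_floor_add_one y
  have hfl' : (1:ℝ) ≤ ⌊y⌋₊ := by exact_mod_cast hfl
  have hJ : (((⌊y⌋₊ - 1 : ℕ) : ℝ) + 1) = ⌊y⌋₊ := by
    rw [Nat.cast_sub hfl]; push_cast; ring
  have hyn : y * (8 * m) = ρ * n := by rw [hy]; field_simp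
  have hc := cset_card (D := D) (by omega) ha hρ4 hD (⌊y⌋₊ - 1) (by rw [hJ]; nlinarith)
  rw [hJ] at hc
  refine le_trans ?_ hc
  have h3 : y ^ 2 / 4 ≤ (⌊y⌋₊:ℝ) ^ 2 := by nlinarith
  refine le_trans ?_ h3
  rw [← le_log_iff_exp_le (by positivity), log_div (by positivity) (by norm_num), log_pow, hly]
  have e : log 256 = 2 * log 8 + log 4 := by
    rw [show (256:ℝ) = 8 ^ 2 * 4 by norm_num, log_mul (by norm_num) (by norm_num), log_pow]; push_cast; ring
  push_cast
  nlinarith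

lemma num_sum {n m : ℕ} {v η L M : ℝ} (hn : 1 ≤ n) (hm : 10 ≤ m) (hL : L = log n) (hL1 : 1 ≤ L)
    (h2 : 2 * L - 2 * log m ≤ v * L + 4) (hη : 20 ≤ η * L)
    (hM : exp ((v - η / 2) * L) ≤ M) (hbig : 10 ^ 7 * L ^ 2 ≤ exp (η / 2 * L)) :
    M + 100 * ((n:ℝ) ^ 2 / (m:ℝ) ^ 2) * (8 * (1 + log (n + 1)) ^ 2) ≤ M * exp (η * L) := by
  have hn0 : (1:ℝ) ≤ n := by exact_mod_cast hn
  have hlog : log ((n:ℝ) + 1) ≤ L + 1 := by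
    have : log ((n:ℝ) + 1) ≤ log (n * 2) := log_le_log (by linarith) (by linarith)
    rw [log_mul (by linarith) (by norm_num), ← hL] at this
    linarith [log_two_lt_d9]
  have hlog0 : 0 ≤ log ((n:ℝ) + 1) := log_nonneg (by linarith)
  have hsq : (1 + log ((n:ℝ) + 1)) ^ 2 ≤ 9 * L ^ 2 := by nlinarith
  have hM0 : 0 < M := lt_of_lt_of_le (exp_pos _) hM
  have he4 : exp 4 ≤ 81 := by
    have h1 : exp 4 = (exp 1) ^ 4 := by rw [← exp_nat_mul]; norm_num
    rw [h1]
    have : exp 1 ≤ 3 := by linarith [exp_one_lt_d9]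
    calc (exp 1) ^ 4 ≤ 3 ^ 4 := by gcongr
      _ = 81 := by norm_num
  have hr : (n:ℝ) ^ 2 / (m:ℝ) ^ 2 ≤ 81 * exp (v * L) := by
    rw [ratio_exp hn (by omega), ← hL]
    calc exp (2 * L - 2 * log m) ≤ exp (v * L + 4) := exp_le_exp.2 h2
      _ = exp (v * L) * exp 4 := exp_add _ _
      _ ≤ exp (v * L) * 81 := mul_le_mul_of_nonneg_left he4 (exp_pos _).le
      _ = _ := mul_comm _ _
  have hE : exp (v * L) ≤ M * exp (η / 2 * L) := by
    calc exp (v * L) = exp ((v - η / 2) * L) * exp (η / 2 * L) := by rw [← exp_add]; congr 1; ring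
      _ ≤ _ := mul_le_mul_of_nonneg_right hM (exp_pos _).le
  set X := exp (η / 2 * L) with hX
  have hXX : exp (η * L) = X * X := by rw [hX, ← exp_add]; congr 1; ring
  rw [hXX]
  have hX2 : 2 ≤ X := by nlinarith
  have hterm : 100 * ((n:ℝ) ^ 2 / (m:ℝ) ^ 2) * (8 * (1 + log (n + 1)) ^ 2) ≤
      100 * (81 * (M * X)) * (8 * (9 * L ^ 2)) := by
    gcongr
    exact hr.trans (by gcongr)
  have h5 : 100 * (81 * (M * X)) * (8 * (9 * L ^ 2)) ≤ M * X * (X * (1 / 2)) + M * X * (X * (1/10)) := by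
    have : 0 ≤ M * X := by positivity
    nlinarith
  have hMX : M * 4 ≤ M * (X * X) := mul_le_mul_of_nonneg_left (by nlinarith) hM0.le
  nlinarith

lemma num_cnt {n N : ℕ} {v η η' δ κ L M : ℝ} (hn : 1 ≤ n) (hL : L = log n)
    (hM : exp ((v - η / 2) * L) ≤ M)
    (h : 2 ≤ (v / 2 - 3 * η / 2 - η' - N * δ - κ) * L) :
    (n:ℝ) ^ κ ≤ (1 / 4) * M * exp ((-(v / 2) - η - η' - N * δ) * L) := by
  obtain ⟨-, -, -, -, -, -, l4, -⟩ := log_num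
  have hn0 : (0:ℝ) < n := by exact_mod_cast hn
  rw [rpow_def_of_pos hn0, ← hL]
  calc exp (L * κ) ≤ exp (- log 4 + (v - η / 2) * L + (-(v / 2) - η - η' - N * δ) * L) := by
        apply exp_le_exp.2; nlinarith
    _ = (1 / 4) * exp ((v - η / 2) * L) * exp ((-(v / 2) - η - η' - N * δ) * L) := by
        rw [exp_add, exp_add, exp_neg, exp_log (by norm_num), one_div]
    _ ≤ _ := by gcongr

end

lemma m_exists {n : ℕ} {α L : ℝ} (hn : 1 ≤ n) (hL : L = log n) (hbig : 10 ≤ exp (α * L)) :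
    ∃ m : ℕ, evenSide n α = 2 * m ∧ exp (α * L) / 3 ≤ m ∧ (m:ℝ) ≤ exp (α * L) := by
  have hn0 : (0:ℝ) < n := by exact_mod_cast hn
  have e : (n:ℝ) ^ α = exp (α * L) := by rw [rpow_def_of_pos hn0, ← hL, mul_comm]
  set E := exp (α * L) with hE
  have hr := abs_le.1 (abs_sub_round (E / 2))
  have h0 : (0:ℤ) ≤ round (E / 2) := by
    have : (0:ℝ) ≤ round (E / 2) := by linarith
    exact_mod_cast this
  refine ⟨(round (E / 2)).toNat, ?_, ?_, ?_⟩
  · rw [evenSide, e, Int.toNat_of_nonneg h0]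
  · have : (((round (E / 2)).toNat : ℕ) : ℝ) = (round (E / 2) : ℝ) := by
      exact_mod_cast congrArg (Int.cast (R := ℝ)) (Int.toNat_of_nonneg h0)
    rw [this]; linarith
  · have : (((round (E / 2)).toNat : ℕ) : ℝ) = (round (E / 2) : ℝ) := by
      exact_mod_cast congrArg (Int.cast (R := ℝ)) (Int.toNat_of_nonneg h0)
    rw [this]; linarith

lemma err_ok {n m : ℕ} {L E : ℝ} (hn : 1 ≤ n) (hL : L = log n) (hL1 : 20 ≤ L) (hE : 10 ^ 7 * L ^ 2 ≤ E) (hm : E / 3 ≤ m) :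
    64 * π * log (16 * (n:ℝ) ^ 2) ≤ (Nat.sqrt m : ℝ) := by
  obtain ⟨-, l16, -⟩ := log_num
  have hn0 : (0:ℝ) < n := by exact_mod_cast hn
  rw [log_mul (by norm_num) (by positivity), log_pow, ← hL]
  push_cast
  have hp : π ≤ 4 := pi_le_four
  have hp0 := pi_pos
  have p16 : 0 ≤ log 16 := log_nonneg (by norm_num)
  have h1 : 64 * π * (log 16 + 2 * L) ≤ 64 * 4 * (3 * L) := by
    gcongr
    linarith
  have h2 : (m:ℝ) < ((Nat.sqrt m : ℝ) + 1) * ((Nat.sqrt m : ℝ) + 1) := by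
    exact_mod_cast Nat.lt_succ_sqrt m
  have h3 : 768 * L + 1 ≤ (Nat.sqrt m : ℝ) + 1 := by
    by_contra h
    push Not at h
    have h0 : (0:ℝ) ≤ Nat.sqrt m := Nat.cast_nonneg _
    nlinarith
  linarith

lemma par_arith {N v δ η η' L : ℝ} (hN1 : 1 ≤ N) (hv1 : 1 ≤ v) (hv2 : v ≤ 2) (hδ : 0 < δ) (hNδ : N * δ ≤ v / 16)
    (hη' : η' = δ ^ 2 / 16) (hη : η = η' ^ 2 / 100) (hL : 20 ≤ L) :
    0 < η ∧ 6 ≤ (v - η / 4) * L ∧ 2 ≤ (v / 2 - 3 * η / 2 - η' - N * δ - v / 4) * L := by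
  have hδv : δ ≤ v / 16 := le_trans (by nlinarith) hNδ
  have hη'0 : 0 < η' := by rw [hη']; positivity
  have hη'1 : η' ≤ v / 256 := by rw [hη']; nlinarith only [hδv, hδ, hv2, hv1]
  have hη0 : 0 < η := by rw [hη]; positivity
  have hη1 : η ≤ η' := by rw [hη]; nlinarith only [hη'0, hη'1, hv2]
  refine ⟨hη0, ?_, ?_⟩
  · have : 1 / 2 ≤ v - η / 4 := by linarith
    nlinarith only [this, hL]
  · have : 1 / 10 ≤ v / 2 - 3 * η / 2 - η' - N * δ - v / 4 := by linarith
    nlinarith only [this, hL]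

lemma fixed_n2 {N : ℕ} (hN : 0 < N) {D : Set (ℝ × ℝ)} {n : ℕ} {α ρ v δ η η' κ : ℝ} {γ : Fin N → ℝ} {s : Fin N → ℝ}
    (hα0 : 0 < α) (hα : α ≤ 1 / 2) (hv : v = 2 * (1 - α)) (hκ : κ = v / 4) (hρ0 : 0 < ρ) (hρ : ρ ≤ 1 / 4)
    (hD : ∀ x : Site, x ∈ latBall (ρ * n) → x ∈ Dn D n)
    (hs : ∀ i, s i = v * γ i) (hδ : 0 < δ) (hδ1 : δ ≤ 1) (hNδ : N * δ ≤ v / 16)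
    (hη' : η' = δ ^ 2 / 16) (hη : η = η' ^ 2 / 100) (hγ0 : ∀ i, 0 ≤ γ i) (hγ1 : ∑ i, γ i * γ i ≤ 1)
    (hL20 : 20 ≤ log n) (hηL : 30 ≤ η * log n) (hb1 : 10 ^ 7 * (log n) ^ 2 ≤ exp (α * log n))
    (hb2 : 10 ^ 7 * (log n) ^ 2 ≤ exp (η / 2 * log n)) (hρL : log (1 / ρ) ≤ η / 8 * log n) :
    gff n N {φ : Conf N | (countRange D N n α (ρ * n) s δ φ : ℝ) ≤ (n : ℝ) ^ κ} ≤
      ENNReal.ofReal (4 * exp (-(η' ^ 2 / 100) * log n)) +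
        ∑ _i : Fin N, (ENNReal.ofReal (8 * N * exp (-(δ ^ 2 / 16) * log n)) +
          ENNReal.ofReal (8 * N * exp (-(δ ^ 2 / 16) * log n))) := by
  obtain ⟨L, hL⟩ : ∃ L, L = log n := ⟨_, rfl⟩
  have hn2 : 2 ≤ n := by
    by_contra h
    have : n = 0 ∨ n = 1 := by omega
    rcases this with rfl | rfl <;> norm_num at hL20
  have hn : 1 ≤ n := by omega
  rw [← hL] at hL20 hηL hb1 hb2 hρL
  obtain ⟨m, ha, hm1, hm2⟩ := m_exists (α := α) hn hL (by nlinarith only [hb1, hL20])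
  obtain ⟨-, -, l3, -, -, -, -, l7⟩ := log_num
  have hm0 : (0:ℝ) < m := lt_of_lt_of_le (by positivity) hm1
  have hn0 : (0:ℝ) < n := by exact_mod_cast hn
  have hlm1 : α * L - log 3 ≤ log m := by
    have := log_le_log (by positivity) hm1
    rwa [log_div (by positivity) (by norm_num), log_exp] at this
  have hlm2 : log m ≤ α * L := by
    have := log_le_log hm0 hm2
    rwa [log_exp] at this
  have h1 : v * L ≤ 2 * L - 2 * log m := by rw [hv]; linarith only [hlm2]
  have h2 : 2 * L - 2 * log m ≤ v * L + 4 := by rw [hv]; linarith only [hlm1, l3]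
  have hmbig : 10 ^ 6 * L ^ 2 ≤ (m:ℝ) := by linarith
  have hm10 : 10 ≤ m := by
    have : (10:ℝ) ≤ m := by nlinarith only [hmbig, hL20]
    exact_mod_cast this
  have hLm : L ≤ m := by nlinarith only [hmbig, hL20]
  have h7 : 7 * m ≤ n := by
    have : 7 * (m:ℝ) ≤ n := by
      rw [← log_le_log_iff (by positivity) hn0, log_mul (by norm_num) hm0.ne', ← hL]
      nlinarith only [l7, hlm2, hα, hL20]
    exact_mod_cast this
  have hv1 : 1 ≤ v := by rw [hv]; linarith
  have hv2 : v ≤ 2 := by rw [hv]; linarith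
  have hN1 : (1:ℝ) ≤ N := by exact_mod_cast hN
  obtain ⟨hη0, hp1, hp2⟩ := par_arith hN1 hv1 hv2 hδ hNδ hη' hη hL20
  have hcard := num_card (D := D) hn hm10 ha hL hρ0 hρ hD h1 hηL hρL hp1
  have hne : (cset D n α (ρ * n)).Nonempty := by
    rw [← Finset.card_pos]
    have : (0:ℝ) < (cset D n α (ρ * n)).card := lt_of_lt_of_le (exp_pos _) hcard
    exact_mod_cast this
  refine fixed_n (v := v) (η := η) hN hn2 hm10 h7 ha hρ hs (by linarith) hv2 hδ hδ1 hη' hη0 hη.le hγ0 hγ1 hne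
    (err_ok hn hL hL20 hb1 hm1) ?_ ?_ ?_ ?_
  · rw [← hL]; exact num_low hn hm10 hL (by linarith) hLm h1 (by linarith)
  · rw [← hL]; exact num_upp hn hm10 hL h2 (by linarith)
  · rw [← hL]; exact num_sum hn hm10 hL (by linarith) h2 (by linarith) hcard hb2
  · rw [← hL]; exact num_cnt hn hL hcard (by rw [hκ]; exact hp2)

lemma ev_big {a : ℝ} (ha : 0 < a) : ∀ᶠ n : ℕ in atTop, 10 ^ 7 * (log n) ^ 2 ≤ exp (a * log n) := by
  have h := isLittleO_pow_exp_pos_mul_atTop 2 ha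
  have h2 := h.def (c := 1 / 10 ^ 7) (by norm_num)
  have ht : Tendsto (fun n : ℕ => log (n:ℝ)) atTop atTop := tendsto_log_atTop.comp tendsto_natCast_atTop_atTop
  filter_upwards [ht.eventually h2] with n hn
  rw [norm_of_nonneg (by positivity), norm_of_nonneg (by positivity)] at hn
  linarith

lemma exp_lim {a b : ℝ} (ha : 0 < a) :
    Tendsto (fun n : ℕ => ENNReal.ofReal (b * exp (-a * log n))) atTop (nhds 0) := by
  have ht : Tendsto (fun n : ℕ => log (n:ℝ)) atTop atTop := tendsto_log_atTop.comp tendsto_natCast_atTop_atTop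
  have h1 : Tendsto (fun n : ℕ => -a * log (n:ℝ)) atTop atBot := ht.const_mul_atTop_of_neg (by linarith)
  have h2 := (tendsto_exp_atBot.comp h1).const_mul b
  have h3 := ENNReal.tendsto_ofReal h2
  simpa using h3

/-- **Proposition (many boxes with harmonic extension near `s log n`).**
For any `ε > 0` and `s ∈ ℝ^N` with `s¹ ≥ ⋯ ≥ s^N ≥ 0` and `|s| ≤ 2(1-ε)`, there exist
`α ∈ (0,1)`, `κ ∈ (0, 2(1-α))` and `δ ∈ (0, √(2ακ/N))` such that
`P_n[N^α_{s-δ,s+δ} ≤ n^κ] → 0`. -/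
theorem no_hole_harmonic (N : ℕ) (hN : 0 < N)
    (D : Set (ℝ × ℝ)) (hDopen : IsOpen D) (hD0 : (0, 0) ∈ D) (hDsub : D ⊆ unitSq)
    (ι : ℝ) (hι : 0 < ι) (hdist : ∀ p ∈ D, ∀ q ∈ frontier unitSq, ι ≤ dist p q)
    (r : ℕ → ℝ) (hrpos : ∀ n, 0 < r n) (hrquarter : ∀ n, r n ≤ 1 / 4)
    (hrlog : (fun n : ℕ => Real.log (1 / r n)) =o[atTop] fun n : ℕ => Real.log n)
    (hrD : ∀ n : ℕ, ∀ x : Site, x ∈ latBall (r n * n) → x ∈ Dn D n)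
    (ε : ℝ) (hε : 0 < ε) (s : Fin N → ℝ)
    (hmono : ∀ i j : Fin N, i ≤ j → s j ≤ s i) (hpos : ∀ i, 0 ≤ s i)
    (hnorm : Real.sqrt (∑ i, s i ^ 2) ≤ 2 * (1 - ε)) :
    ∃ α : ℝ, α ∈ Set.Ioo (0 : ℝ) 1 ∧
      ∃ κ : ℝ, κ ∈ Set.Ioo 0 (2 * (1 - α)) ∧
        ∃ δ : ℝ, δ ∈ Set.Ioo 0 (Real.sqrt (2 * α * κ / N)) ∧
          Tendsto
            (fun n : ℕ =>
              gff n N {φ : Conf N |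
                (countRange D N n α (r n * n) s δ φ : ℝ) ≤ (n : ℝ) ^ κ})
            atTop (nhds 0) := by
  have hε1 : ε ≤ 1 := by
    have := Real.sqrt_nonneg (∑ i, s i ^ 2)
    linarith
  obtain ⟨α, hα⟩ : ∃ α, α = min ε (1 / 2) := ⟨_, rfl⟩
  have hα0 : 0 < α := by rw [hα]; exact lt_min hε (by norm_num)
  have hα1 : α ≤ 1 / 2 := by rw [hα]; exact min_le_right _ _
  have hαε : α ≤ ε := by rw [hα]; exact min_le_left _ _
  obtain ⟨v, hv⟩ : ∃ v, v = 2 * (1 - α) := ⟨_, rfl⟩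
  have hv1 : 1 ≤ v := by rw [hv]; linarith
  obtain ⟨κ, hκ⟩ : ∃ κ, κ = v / 4 := ⟨_, rfl⟩
  have hκ0 : 0 < κ := by rw [hκ]; linarith
  have hN1 : (1:ℝ) ≤ N := by exact_mod_cast hN
  have hq : 0 < Real.sqrt (2 * α * κ / N) := Real.sqrt_pos.2 (by positivity)
  obtain ⟨δ, hδd⟩ : ∃ δ, δ = min (Real.sqrt (2 * α * κ / N) / 2) (1 / (16 * N)) := ⟨_, rfl⟩
  have hδ0 : 0 < δ := by rw [hδd]; exact lt_min (by positivity) (by positivity)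
  have hδq : δ < Real.sqrt (2 * α * κ / N) := by
    have : δ ≤ Real.sqrt (2 * α * κ / N) / 2 := by rw [hδd]; exact min_le_left _ _
    linarith
  have hNδ : N * δ ≤ 1 / 16 := by
    have : δ ≤ 1 / (16 * N) := by rw [hδd]; exact min_le_right _ _
    rw [le_div_iff₀ (by positivity)] at this
    linarith
  have hδ1 : δ ≤ 1 := by nlinarith
  obtain ⟨η', hη'⟩ : ∃ η', η' = δ ^ 2 / 16 := ⟨_, rfl⟩
  have hη'0 : 0 < η' := by rw [hη']; positivity
  obtain ⟨η, hη⟩ : ∃ η, η = η' ^ 2 / 100 := ⟨_, rfl⟩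
  have hη0 : 0 < η := by rw [hη]; positivity
  have hγ1 : ∑ i, (s i / v) * (s i / v) ≤ 1 := by
    have e : ∑ i, (s i / v) * (s i / v) = (∑ i, s i ^ 2) / v ^ 2 := by
      rw [Finset.sum_div]
      exact Finset.sum_congr rfl fun i _ => by field_simp
    rw [e, div_le_one (by positivity)]
    exact (Real.sqrt_le_left (by linarith)).1 (hnorm.trans (by rw [hv]; linarith))
  have ht : Tendsto (fun n : ℕ => log (n:ℝ)) atTop atTop := tendsto_log_atTop.comp tendsto_natCast_atTop_atTop
  refine ⟨α, ⟨hα0, by linarith⟩, κ, ⟨hκ0, by rw [hκ, hv]; linarith⟩, δ, ⟨hδ0, hδq⟩, ?_⟩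
  have hlim : Tendsto (fun n : ℕ => ENNReal.ofReal (4 * exp (-(η' ^ 2 / 100) * log n)) +
        ∑ _i : Fin N, (ENNReal.ofReal (8 * N * exp (-(δ ^ 2 / 16) * log n)) +
          ENNReal.ofReal (8 * N * exp (-(δ ^ 2 / 16) * log n)))) atTop (nhds 0) := by
    have a1 := exp_lim (a := η' ^ 2 / 100) (b := 4) (by positivity)
    have a2 := exp_lim (a := δ ^ 2 / 16) (b := 8 * N) (by positivity)
    have a3 := a1.add (tendsto_finsetSum (Finset.univ : Finset (Fin N)) fun _ _ => a2.add a2)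
    simpa using a3
  refine tendsto_of_tendsto_of_tendsto_of_le_of_le' tendsto_const_nhds hlim
    (Eventually.of_forall fun n => zero_le) ?_
  have hr := hrlog.def (c := η / 8) (by positivity)
  filter_upwards [hr, ht.eventually_ge_atTop 20, ht.eventually_ge_atTop (30 / η), ev_big hα0,
    ev_big (a := η / 2) (by positivity)] with n h1 h2 h3 h4 h5
  refine fixed_n2 hN hα0 hα1 hv hκ (hrpos n) (hrquarter n) (hrD n) (γ := fun i => s i / v)
    (fun i => by field_simp) hδ0 hδ1 (by linarith) hη' hη (fun i => div_nonneg (hpos i) (by linarith)) hγ1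
    h2 ?_ h4 h5 ?_
  · rw [div_le_iff₀ hη0] at h3; linarith
  · rw [norm_of_nonneg (by linarith : (0:ℝ) ≤ log n)] at h1
    exact (le_abs_self _).trans h1

end
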